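/- There is an absolute constant c > 0 such that every finite set P of N ≥ 2 points in the hyperbolic plane ℍ² determines at least c · N / log N distinct distances, i.e. |{d(p,q) : p,q ∈ P, p ≠ q}| ≥ c · N / log N. -/

import Mathlib

open scoped UpperHalfPlane MatrixGroups

noncomputable section

namespace HD
open MvPolynomial Polynomial

abbrev Pol := MvPolynomial (Fin 3) ℝ
abbrev Pt := Fin 3 → ℝ

@[ext] structure Ln where
  a : ℝ
  b : ℝ
  c : ℝ
  d : ℝ

instance : DecidableEq Ln := Classical.decEq _

def Ln.pt (l : Ln) (t : ℝ) : Pt := ![l.a * t + l.b, l.c * t + l.d, t]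
def Ln.co (l : Ln) : Fin 3 → ℝ[X] :=
  ![Polynomial.C l.a * Polynomial.X + Polynomial.C l.b, Polynomial.C l.c * Polynomial.X + Polynomial.C l.d, Polynomial.X]
def res (l : Ln) : Pol →ₐ[ℝ] ℝ[X] := MvPolynomial.aeval l.co
def on (x : Pt) (l : Ln) : Prop := x 0 = l.a * x 2 + l.b ∧ x 1 = l.c * x 2 + l.d
def inZ (l : Ln) (f : Pol) : Prop := res l f = 0
abbrev ev (x : Pt) (f : Pol) : ℝ := MvPolynomial.eval x f
abbrev td (f : Pol) : ℕ := f.totalDegree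

instance : DecidableRel on := fun _ _ => Classical.propDecidable _

lemma on_iff {x : Pt} {l : Ln} : on x l ↔ x = l.pt (x 2) := by
  constructor
  · rintro ⟨h0, h1⟩
    funext i; fin_cases i <;> simp [Ln.pt, h0, h1]
  · intro h
    exact ⟨by conv_lhs => rw [h]
              simp [Ln.pt], by conv_lhs => rw [h]
                               simp [Ln.pt]⟩

@[simp] lemma pt_two (l : Ln) (t : ℝ) : l.pt t 2 = t := rfl
@[simp] lemma pt_zero (l : Ln) (t : ℝ) : l.pt t 0 = l.a * t + l.b := rfl
@[simp] lemma pt_one (l : Ln) (t : ℝ) : l.pt t 1 = l.c * t + l.d := rfl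
lemma on_pt (l : Ln) (t : ℝ) : on (l.pt t) l := ⟨rfl, rfl⟩

lemma pt_inj {l : Ln} {s t : ℝ} (h : l.pt s = l.pt t) : s = t := by
  simpa using congrFun h 2

lemma eval_res (l : Ln) (f : Pol) (t : ℝ) : (res l f).eval t = ev (l.pt t) f := by
  have : (Polynomial.evalRingHom t).comp (res l).toRingHom = MvPolynomial.eval (l.pt t) := by
    apply MvPolynomial.ringHom_ext
    · intro r; simp [res]
    · intro i; fin_cases i <;> simp [res, Ln.co, Ln.pt]
  exact congrArg (fun φ : Pol →+* ℝ => φ f) this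

lemma natDegree_res (l : Ln) (f : Pol) : (res l f).natDegree ≤ td f := by
  have := MvPolynomial.aeval_natDegree_le f le_rfl l.co (n := 1) (by
    intro i; fin_cases i <;> simp only [Ln.co] <;> simp <;> compute_degree)
  rw [mul_one] at this; exact this

lemma ev_of_inZ {l : Ln} {f : Pol} (h : inZ l f) {x : Pt} (hx : on x l) : ev x f = 0 := by
  rw [on_iff.1 hx, ← eval_res, h]; simp

lemma inZ_of_forall {l : Ln} {f : Pol} (h : ∀ t, ev (l.pt t) f = 0) : inZ l f := by
  apply Polynomial.funext; intro t; rw [eval_res, h]; simp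

/-- many zeros -/
lemma inZ_of_card {l : Ln} {f : Pol} (S : Finset Pt) (hS : ∀ x ∈ S, on x l ∧ ev x f = 0)
    (hc : td f < S.card) : inZ l f := by
  classical
  refine Polynomial.eq_zero_of_natDegree_lt_card_of_eval_eq_zero' (res l f) (S.image (fun x => x 2)) ?_ ?_
  · intro t ht
    obtain ⟨x, hx, rfl⟩ := Finset.mem_image.1 ht
    rw [eval_res, ← on_iff.1 (hS x hx).1]; exact (hS x hx).2
  · rw [Finset.card_image_of_injOn]
    · exact (natDegree_res l f).trans_lt hc
    · intro x hx y hy hxy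
      rw [on_iff.1 (hS x hx).1, on_iff.1 (hS y hy).1]
      simp only at hxy; rw [hxy]

lemma card_le_of_not_inZ {l : Ln} {f : Pol} (h : ¬ inZ l f) (S : Finset Pt)
    (hS : ∀ x ∈ S, on x l ∧ ev x f = 0) : S.card ≤ td f := by
  by_contra hc; exact h (inZ_of_card S hS (not_le.1 hc))

lemma ln_eq_of_two {l m : Ln} {x y : Pt} (hxy : x ≠ y) (h1 : on x l) (h2 : on x m) (h3 : on y l)
    (h4 : on y m) : l = m := by
  have h2' : x 2 ≠ y 2 := by
    intro h; apply hxy; rw [on_iff.1 h1, on_iff.1 h3, h]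
  obtain ⟨a1, a2⟩ := h1; obtain ⟨b1, b2⟩ := h2; obtain ⟨c1, c2⟩ := h3; obtain ⟨d1, d2⟩ := h4
  have ha : l.a = m.a := by
    have : (l.a - m.a) * (x 2 - y 2) = 0 := by linear_combination b1 - a1 + c1 - d1
    rcases mul_eq_zero.1 this with h | h
    · linarith
    · exact absurd (by linarith) h2'
  have hc : l.c = m.c := by
    have : (l.c - m.c) * (x 2 - y 2) = 0 := by linear_combination b2 - a2 + c2 - d2
    rcases mul_eq_zero.1 this with h | h
    · linarith
    · exact absurd (by linarith) h2'
  ext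
  · exact ha
  · rw [ha] at a1; linarith
  · exact hc
  · rw [hc] at a2; linarith

lemma res_deriv (l : Ln) (f : Pol) : (res l f).derivative =
    Polynomial.C l.a * res l (pderiv 0 f) + Polynomial.C l.c * res l (pderiv 1 f) + res l (pderiv 2 f) := by
  induction f using MvPolynomial.induction_on with
  | C r => simp [res]
  | add p q hp hq => simp only [map_add, hp, hq]; ring
  | mul_X p i hp =>
    simp only [map_mul, Polynomial.derivative_mul, hp, pderiv_mul, map_add]
    fin_cases i <;> simp [res, Ln.co, pderiv_X] <;> ring

lemma td_pderiv (i : Fin 3) (f : Pol) : td (pderiv i f) ≤ td f - 1 := by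
  unfold td
  rw [MvPolynomial.totalDegree]
  apply Finset.sup_le
  intro m hm
  rw [MvPolynomial.mem_support_iff, coeff_pderiv] at hm
  have h1 : coeff (m + Finsupp.single i 1) f ≠ 0 := left_ne_zero_of_mul hm
  have := MvPolynomial.le_totalDegree (MvPolynomial.mem_support_iff.2 h1)
  rw [Finsupp.sum_add_index' (by simp) (by simp)] at this
  simp at this
  change (m.sum fun _ e => e) ≤ _
  omega

lemma td_mul {f g : Pol} : td (f * g) ≤ td f + td g := MvPolynomial.totalDegree_mul _ _

lemma inZ_mul {l : Ln} {f g : Pol} : inZ l (f * g) ↔ inZ l f ∨ inZ l g := by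
  simp [inZ, map_mul]

lemma inZ_of_dvd {l : Ln} {f g : Pol} (h : f ∣ g) (hf : inZ l f) : inZ l g := by
  obtain ⟨k, rfl⟩ := h; exact inZ_mul.2 (Or.inl hf)

end HD

namespace HD
open MvPolynomial Polynomial

def bx (M : Fin 3 → ℕ) : Submodule ℝ Pol :=
  MvPolynomial.restrictSupport ℝ (Set.Iic (Finsupp.equivFunOnFinite.symm M))

lemma mem_bx {M : Fin 3 → ℕ} {f : Pol} : f ∈ bx M ↔ ∀ i, degreeOf i f ≤ M i := by
  rw [bx, MvPolynomial.mem_restrictSupport_iff]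
  simp_rw [MvPolynomial.degreeOf_le_iff]
  constructor
  · intro h i m hm
    exact (h hm : m ≤ _) i
  · intro h m hm
    change m ≤ _
    intro i; exact h i m hm

instance (M : Fin 3 → ℕ) : Module.Finite ℝ (bx M) := by
  have : Fintype (Set.Iic (Finsupp.equivFunOnFinite.symm M)) := (Set.finite_Iic _).fintype
  exact Module.Finite.of_basis (MvPolynomial.basisRestrictSupport ℝ (Set.Iic (Finsupp.equivFunOnFinite.symm M)))

lemma finrank_bx (M : Fin 3 → ℕ) : Module.finrank ℝ (bx M) = (M 0 + 1) * (M 1 + 1) * (M 2 + 1) := by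
  have : Fintype (Set.Iic (Finsupp.equivFunOnFinite.symm M)) := (Set.finite_Iic _).fintype
  change Module.finrank ℝ (restrictSupport ℝ (Set.Iic (Finsupp.equivFunOnFinite.symm M))) = _
  rw [Module.finrank_eq_card_basis (MvPolynomial.basisRestrictSupport ℝ (Set.Iic (Finsupp.equivFunOnFinite.symm M)))]
  have : Fintype.card (Set.Iic (Finsupp.equivFunOnFinite.symm M)) = (Finset.Iic (Finsupp.equivFunOnFinite.symm M)).card := by
    rw [← Set.toFinset_card]; congr 1; ext; simp
  rw [this, Finsupp.card_Iic]
  rw [Finset.prod_subset (Finset.subset_univ _)]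
  · simp [Fin.prod_univ_three]
  · intro i _ hi; simp at hi; simp [hi]

lemma td_bx {M : Fin 3 → ℕ} {f : Pol} (hf : f ∈ bx M) : td f ≤ M 0 + M 1 + M 2 := by
  unfold td
  rw [MvPolynomial.totalDegree]
  apply Finset.sup_le
  intro m hm
  have h := mem_bx.1 hf
  simp_rw [MvPolynomial.degreeOf_le_iff] at h
  rw [Finsupp.sum_fintype _ _ (by simp), Fin.sum_univ_three]
  have := h 0 m hm; have := h 1 m hm; have := h 2 m hm
  omega

lemma exists_vanish (V : Submodule ℝ Pol) [Module.Finite ℝ V] (S : Finset Pt)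
    (h : S.card < Module.finrank ℝ V) : ∃ f ∈ V, f ≠ 0 ∧ ∀ x ∈ S, ev x f = 0 := by
  let T : V →ₗ[ℝ] (S → ℝ) :=
    LinearMap.pi (fun x => (MvPolynomial.aeval (R := ℝ) x.1).toLinearMap.comp V.subtype)
  have : LinearMap.ker T ≠ ⊥ := LinearMap.ker_ne_bot_of_finrank_lt (by simpa using h)
  obtain ⟨f, hf, hf0⟩ := Submodule.exists_mem_ne_zero_of_ne_bot this
  refine ⟨f.1, f.2, fun h => hf0 (Subtype.ext h), fun x hx => ?_⟩
  have := congrFun (LinearMap.mem_ker.1 hf) ⟨x, hx⟩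
  simpa [T, MvPolynomial.aeval_eq_eval] using this

lemma exists_vanish_lines (e : ℕ) (s : Finset Ln) (h : s.card * (3 * e + 1) < (e + 1) ^ 3) :
    ∃ f : Pol, f ≠ 0 ∧ td f ≤ 3 * e ∧ ∀ l ∈ s, inZ l f := by
  classical
  let S : Finset Pt := (s ×ˢ Finset.range (3 * e + 1)).image (fun q => q.1.pt (q.2 : ℝ))
  obtain ⟨f, hf, hf0, hS⟩ := exists_vanish (bx (fun _ => e)) S (by
    rw [finrank_bx]
    refine Finset.card_image_le.trans_lt ?_
    rw [Finset.card_product, Finset.card_range]; linarith [h])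
  have htd : td f ≤ 3 * e := by have := td_bx hf; omega
  refine ⟨f, hf0, htd, fun l hl => ?_⟩
  apply inZ_of_card ((Finset.range (3 * e + 1)).image (fun k : ℕ => l.pt (k : ℝ)))
  · intro x hx
    obtain ⟨k, hk, rfl⟩ := Finset.mem_image.1 hx
    exact ⟨on_pt _ _, hS _ (Finset.mem_image.2 ⟨(l, k), by simpa [hl] using hk, rfl⟩)⟩
  · rw [Finset.card_image_of_injective, Finset.card_range]
    · omega
    · intro i j hij; exact_mod_cast pt_inj hij

/-- quadrics -/
def qd (v : Fin 10 → ℝ) : Pol :=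
  MvPolynomial.C (v 0) + MvPolynomial.C (v 1) * X 0 + MvPolynomial.C (v 2) * X 1 + MvPolynomial.C (v 3) * X 2
  + MvPolynomial.C (v 4) * (X 0 * X 0) + MvPolynomial.C (v 5) * (X 1 * X 1) + MvPolynomial.C (v 6) * (X 2 * X 2)
  + MvPolynomial.C (v 7) * (X 0 * X 1) + MvPolynomial.C (v 8) * (X 0 * X 2) + MvPolynomial.C (v 9) * (X 1 * X 2)

lemma ev_qd (v : Fin 10 → ℝ) (x : Pt) : ev x (qd v) = v 0 + v 1 * x 0 + v 2 * x 1 + v 3 * x 2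
  + v 4 * (x 0 * x 0) + v 5 * (x 1 * x 1) + v 6 * (x 2 * x 2) + v 7 * (x 0 * x 1) + v 8 * (x 0 * x 2)
  + v 9 * (x 1 * x 2) := by simp [qd]

lemma td_qd (v : Fin 10 → ℝ) : td (qd v) ≤ 2 := by
  have hC : ∀ (r : ℝ) (p : Pol) , td p ≤ 2 → td (MvPolynomial.C r * p) ≤ 2 := by
    intro r p hp
    refine (totalDegree_mul _ _).trans ?_
    simpa using hp
  have hX : ∀ i : Fin 3, td (X i : Pol) ≤ 2 := fun i => by simp [td, totalDegree_X]
  have hXX : ∀ i j : Fin 3, td (X i * X j : Pol) ≤ 2 := fun i j =>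
    (totalDegree_mul _ _).trans (by simp [totalDegree_X])
  have ha : ∀ {p q : Pol}, td p ≤ 2 → td q ≤ 2 → td (p + q) ≤ 2 := fun {p q} hp hq =>
    (totalDegree_add _ _).trans (max_le hp hq)
  exact ha (ha (ha (ha (ha (ha (ha (ha (ha (by simp) (hC _ _ (hX _))) (hC _ _ (hX _))) (hC _ _ (hX _)))
    (hC _ _ (hXX _ _))) (hC _ _ (hXX _ _))) (hC _ _ (hXX _ _))) (hC _ _ (hXX _ _))) (hC _ _ (hXX _ _)))
    (hC _ _ (hXX _ _))

lemma exists_quadric (l : Fin 3 → Ln) : ∃ f : Pol, f ≠ 0 ∧ td f ≤ 2 ∧ ∀ i, inZ (l i) f := by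
  classical
  let T : (Fin 10 → ℝ) →ₗ[ℝ] (Fin 3 × Fin 3 → ℝ) :=
    { toFun := fun v ij => ev ((l ij.1).pt ((ij.2 : ℕ) : ℝ)) (qd v)
      map_add' := by intro v w; ext ij; simp only [ev_qd, Pi.add_apply]; ring
      map_smul' := by intro v w; ext ij; simp only [ev_qd, Pi.smul_apply, smul_eq_mul, RingHom.id_apply]; ring }
  have : LinearMap.ker T ≠ ⊥ := LinearMap.ker_ne_bot_of_finrank_lt (by simp)
  obtain ⟨v, hv, hv0⟩ := Submodule.exists_mem_ne_zero_of_ne_bot this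
  refine ⟨qd v, ?_, td_qd v, fun i => ?_⟩
  · intro h
    apply hv0
    have e : ∀ x y z : ℝ, ev ![x, y, z] (qd v) = 0 := by intro x y z; rw [h]; simp
    simp only [ev_qd, Matrix.cons_val] at e
    have e0 := e 0 0 0
    have e1 := e 1 0 0; have e2 := e (-1) 0 0; have e3 := e 0 1 0; have e4 := e 0 (-1) 0
    have e5 := e 0 0 1; have e6 := e 0 0 (-1); have e7 := e 1 1 0; have e8 := e 1 0 1; have e9 := e 0 1 1
    norm_num at e0 e1 e2 e3 e4 e5 e6 e7 e8 e9
    ext i; fin_cases i <;> simp <;> linarith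
  · apply inZ_of_card ((Finset.univ : Finset (Fin 3)).image (fun k : Fin 3 => (l i).pt ((k : ℕ) : ℝ)))
    · intro x hx
      obtain ⟨k, hk, rfl⟩ := Finset.mem_image.1 hx
      exact ⟨on_pt _ _, congrFun (LinearMap.mem_ker.1 hv) (i, k)⟩
    · rw [Finset.card_image_of_injective]
      · have := td_qd v; simp; omega
      · intro i j hij
        have := pt_inj hij
        exact Fin.ext (by exact_mod_cast this)

end HD

namespace HD
open MvPolynomial Polynomial

def emb : ℝ[X] →ₐ[ℝ] Pol := Polynomial.aeval (X 2)

lemma res_emb (l : Ln) (c : ℝ[X]) : res l (emb c) = c := by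
  have : (res l).comp emb = AlgHom.id ℝ _ := by
    apply Polynomial.algHom_ext; simp [res, emb, Ln.co]
  exact congrArg (fun φ : ℝ[X] →ₐ[ℝ] ℝ[X] => φ c) this

lemma degreeOf_emb (i : Fin 3) (c : ℝ[X]) : degreeOf i (emb c) ≤ c.natDegree := by
  rw [emb, Polynomial.aeval_eq_sum_range]
  refine (degreeOf_sum_le _ _ _).trans (Finset.sup_le ?_)
  intro k hk
  rw [MvPolynomial.smul_eq_C_mul]
  refine (degreeOf_C_mul_le _ _ _).trans ?_
  refine (degreeOf_pow_le _ _ _).trans ?_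
  have : degreeOf i (X 2 : Pol) ≤ 1 := by rw [degreeOf_X]; split_ifs <;> simp
  have := Finset.mem_range.1 hk
  nlinarith

def pl (m l : Ln) : Pol := if m.a = l.a ∧ m.b = l.b then X 1 - MvPolynomial.C m.c * X 2 - MvPolynomial.C m.d
  else X 0 - MvPolynomial.C m.a * X 2 - MvPolynomial.C m.b

lemma pl_self (m l : Ln) : inZ m (pl m l) := by
  apply inZ_of_forall; intro t; unfold pl; split_ifs <;> simp

lemma pl_ne {m l : Ln} (h : m ≠ l) : ¬ inZ l (pl m l) := by
  intro hz
  have e0 := ev_of_inZ hz (on_pt l 0)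
  have e1 := ev_of_inZ hz (on_pt l 1)
  unfold pl at e0 e1
  split_ifs at e0 e1 with hh
  · simp at e0 e1
    apply h; ext
    · exact hh.1
    · exact hh.2
    · linarith
    · linarith
  · simp at e0 e1
    exact hh ⟨by linarith, by linarith⟩

lemma degreeOf_pl (m l : Ln) (i : Fin 3) : degreeOf i (pl m l) ≤ 1 := by
  have hX : ∀ j : Fin 3, degreeOf i (X j : Pol) ≤ 1 := fun j => by rw [degreeOf_X]; split_ifs <;> simp
  have hC : ∀ (j : Fin 3) (r : ℝ), degreeOf i (MvPolynomial.C r * X j : Pol) ≤ 1 := fun j r =>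
    (degreeOf_C_mul_le _ _ _).trans (hX j)
  have hs : ∀ p q : Pol, degreeOf i p ≤ 1 → degreeOf i q ≤ 1 → degreeOf i (p - q) ≤ 1 := fun p q hp hq =>
    (degreeOf_sub_le _ _ _).trans (max_le hp hq)
  unfold pl
  split_ifs
  · exact hs _ _ (hs _ _ (hX _) (hC _ _)) (by simp [degreeOf_C])
  · exact hs _ _ (hs _ _ (hX _) (hC _ _)) (by simp [degreeOf_C])

def hl (T : Finset Ln) (l : Ln) : Pol := ∏ m ∈ T.erase l, pl m l

lemma finrank_mulmap {g : Pol} (hg : g ≠ 0) (V : Submodule ℝ Pol) :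
    Module.finrank ℝ (V.map (LinearMap.mulLeft ℝ g)) = Module.finrank ℝ V :=
  (LinearEquiv.finrank_eq (Submodule.equivMapOfInjective (LinearMap.mulLeft ℝ g)
    (fun _ _ hab => mul_left_cancel₀ hg hab) V)).symm

lemma bezout_aux {g h : Pol} (hg : Prime g) (hgh : ¬ g ∣ h) (T : Finset Ln)
    (hT : ∀ l ∈ T, inZ l g ∧ inZ l h) (M : ℕ) (hM1 : T.card ≤ M)
    (hM2 : ∀ i, degreeOf i g + degreeOf i h ≤ M) :
    T.card * (M + 2 - T.card) + (∏ i, (M - degreeOf i g + 1) + ∏ i, (M - degreeOf i h + 1)) ≤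
      (M + 1) ^ 3 + ∏ i, (M - (degreeOf i g + degreeOf i h) + 1) := by
  classical
  have hg0 := hg.ne_zero
  have hh0 : h ≠ 0 := by rintro rfl; exact hgh (dvd_zero _)
  set V := bx (fun _ => M) with hV
  set U1 := (bx (fun i => M - degreeOf i g)).map (LinearMap.mulLeft ℝ g) with hU1
  set U2 := (bx (fun i => M - degreeOf i h)).map (LinearMap.mulLeft ℝ h) with hU2
  have h1V : U1 ≤ V := by
    rintro _ ⟨a, ha, rfl⟩
    rw [hV, mem_bx]; intro i
    have := mem_bx.1 ha i
    have := degreeOf_mul_le i g a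
    have := hM2 i
    simp only [LinearMap.mulLeft_apply] at *
    omega
  have h2V : U2 ≤ V := by
    rintro _ ⟨a, ha, rfl⟩
    rw [hV, mem_bx]; intro i
    have := mem_bx.1 ha i
    have := degreeOf_mul_le i h a
    have := hM2 i
    simp only [LinearMap.mulLeft_apply] at *
    omega
  have h12 : U1 ⊓ U2 ≤ (bx (fun i => M - (degreeOf i g + degreeOf i h))).map (LinearMap.mulLeft ℝ (g * h)) := by
    rintro f ⟨hf1, b, hb, rfl⟩
    have hfV := h1V hf1
    obtain ⟨a, ha, hab⟩ := hf1
    simp only [LinearMap.mulLeft_apply] at *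
    have : g ∣ b := (hg.dvd_or_dvd ⟨a, hab.symm⟩).resolve_left hgh
    obtain ⟨b', rfl⟩ := this
    refine ⟨b', ?_, by simp only [LinearMap.mulLeft_apply]; ring⟩
    change b' ∈ bx _
    rw [mem_bx]; intro i
    by_cases hb' : b' = 0
    · simp [hb']
    have := mem_bx.1 hfV i
    rw [degreeOf_mul_eq hh0 (mul_ne_zero hg0 hb'), degreeOf_mul_eq hg0 hb'] at this
    omega
  set J := M + 2 - T.card with hJ
  let Ψ : (T → Polynomial.degreeLT ℝ J) →ₗ[ℝ] Pol :=
    ∑ l : T, (LinearMap.mulLeft ℝ (hl T l)).comp (emb.toLinearMap.comp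
      ((Polynomial.degreeLT ℝ J).subtype.comp (LinearMap.proj l)))
  have hΨ : ∀ c, Ψ c = ∑ l : T, hl T l * emb (c l).1 := by intro c; simp [Ψ, LinearMap.sum_apply]
  have hres : ∀ c (l : T), res l (Ψ c) = res l (hl T l) * (c l).1 := by
    intro c l
    rw [hΨ, map_sum, Finset.sum_eq_single l, map_mul, res_emb]
    · intro m _ hml
      have : inZ l.1 (hl T m) := by
        apply inZ_of_dvd (f := pl l m)
        · exact Finset.dvd_prod_of_mem _ (Finset.mem_erase.2 ⟨fun h => hml (Subtype.ext h.symm), l.2⟩)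
        · exact pl_self _ _
      rw [map_mul, show res l.1 (hl T m) = 0 from this, zero_mul]
    · simp
  have hhl : ∀ l : T, res l (hl T l) ≠ 0 := by
    intro l
    rw [hl, map_prod, Finset.prod_ne_zero_iff]
    intro m hm; exact pl_ne (Finset.mem_erase.1 hm).1
  have hW : ∀ f ∈ U1 ⊔ U2, ∀ l ∈ T, res l f = 0 := by
    intro f hf l hl
    obtain ⟨_, ⟨a, _, rfl⟩, _, ⟨b, _, rfl⟩, rfl⟩ := Submodule.mem_sup.1 hf
    have e1 : res l g = 0 := (hT l hl).1
    have e2 : res l h = 0 := (hT l hl).2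
    simp [e1, e2]
  have hker : ∀ c, Ψ c ∈ U1 ⊔ U2 → c = 0 := by
    intro c hc
    funext l
    have := hW _ hc l l.2
    rw [hres] at this
    exact Subtype.ext ((mul_eq_zero.1 this).resolve_left (hhl l))
  have hinj : Function.Injective Ψ := by
    rw [← LinearMap.ker_eq_bot, LinearMap.ker_eq_bot']
    intro c hc; exact hker c (by rw [hc]; exact zero_mem _)
  have hdisj : LinearMap.range Ψ ⊓ (U1 ⊔ U2) = ⊥ := by
    rw [eq_bot_iff]
    rintro _ ⟨⟨c, rfl⟩, hc⟩
    rw [hker c hc]; simp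
  have hrV : LinearMap.range Ψ ≤ V := by
    rintro _ ⟨c, rfl⟩
    rw [hΨ]
    apply Submodule.sum_mem
    intro l _
    rw [hV, mem_bx]; intro i
    refine (degreeOf_mul_le _ _ _).trans ?_
    have e1 : degreeOf i (hl T l) ≤ T.card - 1 := by
      refine (degreeOf_prod_le _ _ _).trans ?_
      refine (Finset.sum_le_sum (fun m _ => degreeOf_pl m l i)).trans ?_
      simp [Finset.card_erase_of_mem l.2]
    have e2 := degreeOf_emb i (c l).1
    have hT1 : 1 ≤ T.card := Finset.card_pos.2 ⟨l, l.2⟩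
    have e3 : (c l).1.natDegree ≤ J - 1 := by
      have := Polynomial.mem_degreeLT.1 (c l).2
      by_cases h0 : (c l).1 = 0
      · rw [h0]; simp
      · rw [Polynomial.degree_eq_natDegree h0] at this
        have := (Nat.cast_lt (α := WithBot ℕ)).1 this
        omega
    omega
  have f1 : Module.finrank ℝ (LinearMap.range Ψ) = T.card * J := by
    rw [LinearMap.finrank_range_of_inj hinj, Module.finrank_pi_fintype]
    simp [(Polynomial.degreeLTEquiv ℝ J).finrank_eq]
  have f2 : Module.finrank ℝ U1 = _ := (finrank_mulmap hg0 _).trans (finrank_bx _)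
  have f3 : Module.finrank ℝ U2 = _ := (finrank_mulmap hh0 _).trans (finrank_bx _)
  have fin1 : Module.Finite ℝ U1 := Submodule.finiteDimensional_of_le h1V
  have fin2 : Module.Finite ℝ U2 := Submodule.finiteDimensional_of_le h2V
  have i1 := Submodule.finrank_sup_add_finrank_inf_eq U1 U2
  have i2 := Submodule.finrank_sup_add_finrank_inf_eq (LinearMap.range Ψ) (U1 ⊔ U2)
  rw [hdisj, finrank_bot, f1] at i2
  have i3 := Submodule.finrank_mono (sup_le hrV (sup_le h1V h2V))
  have i4 := Submodule.finrank_mono h12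
  rw [f2, f3] at i1
  rw [finrank_mulmap (mul_ne_zero hg0 hh0), finrank_bx] at i4
  rw [hV, finrank_bx] at i3
  rw [Fin.prod_univ_three, Fin.prod_univ_three, Fin.prod_univ_three]
  have : (M + 1) ^ 3 = (M + 1) * (M + 1) * (M + 1) := by ring
  rw [this]
  omega

theorem bezout {g h : Pol} (hg : Prime g) (hgh : ¬ g ∣ h) (T : Finset Ln)
    (hT : ∀ l ∈ T, inZ l g ∧ inZ l h) : T.card ≤ 6 * td g * td h := by
  have hn : ∀ i, degreeOf i g ≤ td g := fun i => degreeOf_le_totalDegree _ _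
  have hm : ∀ i, degreeOf i h ≤ td h := fun i => degreeOf_le_totalDegree _ _
  set K := T.card
  set n := td g
  set m := td h
  by_contra hc
  push Not at hc
  have key := bezout_aux hg hgh T hT (K ^ 2 + n + m) (by nlinarith) (fun i => by
    have := hn i; have := hm i; omega)
  rw [Fin.prod_univ_three, Fin.prod_univ_three, Fin.prod_univ_three] at key
  have a0 := hn 0; have a1 := hn 1; have a2 := hn 2
  have b0 := hm 0; have b1 := hm 1; have b2 := hm 2
  generalize degreeOf 0 g = n0 at *
  generalize degreeOf 1 g = n1 at *
  generalize degreeOf 2 g = n2 at *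
  generalize degreeOf 0 h = m0 at *
  generalize degreeOf 1 h = m1 at *
  generalize degreeOf 2 h = m2 at *
  have hKK : T.card ≤ K ^ 2 + n + m + 2 := by change K ≤ _; nlinarith
  zify at key
  rw [Nat.cast_sub hKK, Nat.cast_sub (by omega), Nat.cast_sub (by omega), Nat.cast_sub (by omega),
    Nat.cast_sub (by omega), Nat.cast_sub (by omega), Nat.cast_sub (by omega), Nat.cast_sub (by omega),
    Nat.cast_sub (by omega), Nat.cast_sub (by omega)] at key
  change (K : ℤ) * _ + _ ≤ _ at key
  push_cast at key
  have hKc : (T.card : ℤ) = K := rfl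
  rw [hKc] at key
  have E : (n0 : ℤ) * m1 + n0 * m2 + n1 * m0 + n1 * m2 + n2 * m0 + n2 * m1 ≤ 6 * n * m := by
    have p : ∀ {x y : ℕ}, x ≤ n → y ≤ m → (x : ℤ) * y ≤ n * m := fun hx hy => by
      exact_mod_cast Nat.mul_le_mul hx hy
    linarith [p a0 b1, p a0 b2, p a1 b0, p a1 b2, p a2 b0, p a2 b1]
  zify at hc
  generalize hX : (K : ℤ) ^ 2 + n + m + 1 = X at key
  have hX2 : (K : ℤ) ^ 2 + n + m = X - 1 := by linarith
  rw [hX2] at key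
  have e3 : (n0 : ℤ) * n1 * n2 + m0 * m1 * m2 ≤ (n0 + m0) * (n1 + m1) * (n2 + m2) := by
    have : (0 : ℤ) ≤ n0 * n1 * m2 + n0 * m1 * n2 + n0 * m1 * m2 + m0 * n1 * n2 + m0 * n1 * m2 + m0 * m1 * n2 := by positivity
    nlinarith
  have key2 : (K : ℤ) * (X + 1 - K) ≤ (n0 * m1 + n0 * m2 + n1 * m0 + n1 * m2 + n2 * m0 + n2 * m1 : ℤ) * X := by
    nlinarith [key, e3]
  have hXp : (K : ℤ) ^ 2 + 1 ≤ X := by linarith [Int.natCast_nonneg n, Int.natCast_nonneg m]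
  have hK0 : (0 : ℤ) ≤ K := Int.natCast_nonneg _
  have : (K : ℤ) * (X + 1 - K) ≤ (K - 1) * X := key2.trans (by nlinarith)
  nlinarith
end HD

namespace HD
open MvPolynomial Polynomial

lemma pd_comm (i j : Fin 3) (f : Pol) : pderiv i (pderiv j f) = pderiv j (pderiv i f) := by
  induction f using MvPolynomial.induction_on with
  | C r => simp
  | add p q hp hq => simp [hp, hq]
  | mul_X p k hp =>
    simp only [pderiv_mul, map_add, hp, pderiv_X]
    have : ∀ (m l: Fin 3), pderiv m ((Pi.single l 1 : Fin 3 → Pol) k) = 0 := by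
      intro m l; by_cases h : k = l
      · subst h; simp
      · simp [h]
    simp only [this]; ring

section jets
variable (g : Pol)
abbrev d0 (f : Pol) : Pol := pderiv 0 f
abbrev d1 (f : Pol) : Pol := pderiv 1 f
abbrev d2 (f : Pol) : Pol := pderiv 2 f

def q2 : Pol := d0 (d0 g) * (d1 g * d1 g) - 2 * (d0 (d1 g) * (d0 g * d1 g)) + d1 (d1 g) * (d0 g * d0 g)
def q1 : Pol := 2 * (d0 (d2 g) * (d1 g * d1 g)) - 2 * (d0 (d1 g) * (d2 g * d1 g))
  + 2 * (d1 (d1 g) * (d0 g * d2 g)) - 2 * (d1 (d2 g) * (d0 g * d1 g))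
def q0 : Pol := d2 (d2 g) * (d1 g * d1 g) - 2 * (d1 (d2 g) * (d2 g * d1 g)) + d1 (d1 g) * (d2 g * d2 g)
def c3 : Pol := d0 (d0 (d0 g)) * (d1 g * (d1 g * d1 g)) - 3 * (d0 (d0 (d1 g)) * (d0 g * (d1 g * d1 g)))
  + 3 * (d0 (d1 (d1 g)) * (d0 g * (d0 g * d1 g))) - d1 (d1 (d1 g)) * (d0 g * (d0 g * d0 g))
def c2 : Pol := 3 * (d0 (d0 (d2 g)) * (d1 g * (d1 g * d1 g))) - 3 * (d0 (d0 (d1 g)) * (d2 g * (d1 g * d1 g)))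
  - 6 * (d0 (d1 (d2 g)) * (d0 g * (d1 g * d1 g))) + 6 * (d0 (d1 (d1 g)) * (d0 g * (d2 g * d1 g)))
  + 3 * (d1 (d1 (d2 g)) * (d0 g * (d0 g * d1 g))) - 3 * (d1 (d1 (d1 g)) * (d0 g * (d0 g * d2 g)))
def c1 : Pol := 3 * (d0 (d2 (d2 g)) * (d1 g * (d1 g * d1 g))) - 6 * (d0 (d1 (d2 g)) * (d2 g * (d1 g * d1 g)))
  - 3 * (d1 (d2 (d2 g)) * (d0 g * (d1 g * d1 g))) + 3 * (d0 (d1 (d1 g)) * (d2 g * (d2 g * d1 g)))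
  + 6 * (d1 (d1 (d2 g)) * (d0 g * (d2 g * d1 g))) - 3 * (d1 (d1 (d1 g)) * (d0 g * (d2 g * d2 g)))
def c0 : Pol := d2 (d2 (d2 g)) * (d1 g * (d1 g * d1 g)) - 3 * (d1 (d2 (d2 g)) * (d2 g * (d1 g * d1 g)))
  + 3 * (d1 (d1 (d2 g)) * (d2 g * (d2 g * d1 g))) - d1 (d1 (d1 g)) * (d2 g * (d2 g * d2 g))
def r1 : Pol := q2 g * q2 g * c1 g - q2 g * c3 g * q0 g - q1 g * (q2 g * c2 g - c3 g * q1 g)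
def r0 : Pol := q2 g * q2 g * c0 g - q0 g * (q2 g * c2 g - c3 g * q1 g)
end jets

lemma tds {p q : Pol} {a : ℕ} (hp : td p ≤ a) (hq : td q ≤ a) : td (p - q) ≤ a :=
  (totalDegree_sub _ _).trans (max_le hp hq)
lemma tda {p q : Pol} {a : ℕ} (hp : td p ≤ a) (hq : td q ≤ a) : td (p + q) ≤ a :=
  (totalDegree_add _ _).trans (max_le hp hq)
lemma tdm {p q : Pol} {a b c : ℕ} (hp : td p ≤ a) (hq : td q ≤ b) (h : a + b ≤ c) : td (p * q) ≤ c := by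
  have := @td_mul p q; omega
lemma tdk {p : Pol} {a k : ℕ} [k.AtLeastTwo] (hp : td p ≤ a) : td (OfNat.ofNat k * p) ≤ a := by
  have : td (OfNat.ofNat k : Pol) = 0 := by
    rw [← map_ofNat (MvPolynomial.C : ℝ →+* Pol)]; simp
  have := @td_mul (OfNat.ofNat k) p; omega

section degs
variable {g : Pol} {n : ℕ} (hg : td g ≤ n)
include hg
lemma tdd (i : Fin 3) : td (pderiv i g) ≤ n := (td_pderiv i g).trans (by omega)
lemma tdd2 (i j : Fin 3) : td (pderiv i (pderiv j g)) ≤ n := tdd (tdd hg _) _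
lemma tdd3 (i j k : Fin 3) : td (pderiv i (pderiv j (pderiv k g))) ≤ n := tdd (tdd2 hg _ _) _
lemma t3 (i j k l : Fin 3) : td (pderiv i (pderiv j g) * (pderiv k g * pderiv l g)) ≤ 3 * n :=
  tdm (tdd2 hg _ _) (tdm (tdd hg _) (tdd hg _) le_rfl) (by omega)
lemma t4 (i j k l m p : Fin 3) : td (pderiv i (pderiv j (pderiv k g)) * (pderiv l g * (pderiv m g * pderiv p g))) ≤ 4 * n :=
  tdm (tdd3 hg _ _ _) (tdm (tdd hg _) (tdm (tdd hg _) (tdd hg _) le_rfl) le_rfl) (by omega)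
lemma td_q2 : td (q2 g) ≤ 3 * n := tda (tds (t3 hg ..) (tdk (t3 hg ..))) (t3 hg ..)
lemma td_q1 : td (q1 g) ≤ 3 * n := tds (tda (tds (tdk (t3 hg ..)) (tdk (t3 hg ..))) (tdk (t3 hg ..))) (tdk (t3 hg ..))
lemma td_q0 : td (q0 g) ≤ 3 * n := tda (tds (t3 hg ..) (tdk (t3 hg ..))) (t3 hg ..)
lemma td_c3 : td (c3 g) ≤ 4 * n := tds (tda (tds (t4 hg ..) (tdk (t4 hg ..))) (tdk (t4 hg ..))) (t4 hg ..)
lemma td_c0 : td (c0 g) ≤ 4 * n := tds (tda (tds (t4 hg ..) (tdk (t4 hg ..))) (tdk (t4 hg ..))) (t4 hg ..)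
lemma td_c2 : td (c2 g) ≤ 4 * n := tds (tda (tda (tds (tds (tdk (t4 hg ..)) (tdk (t4 hg ..))) (tdk (t4 hg ..)))
  (tdk (t4 hg ..))) (tdk (t4 hg ..))) (tdk (t4 hg ..))
lemma td_c1 : td (c1 g) ≤ 4 * n := tds (tda (tda (tds (tds (tdk (t4 hg ..)) (tdk (t4 hg ..))) (tdk (t4 hg ..)))
  (tdk (t4 hg ..))) (tdk (t4 hg ..))) (tdk (t4 hg ..))
lemma td_w : td (q2 g * c2 g - c3 g * q1 g) ≤ 7 * n :=
  tds (tdm (td_q2 hg) (td_c2 hg) (by omega)) (tdm (td_c3 hg) (td_q1 hg) (by omega))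
lemma td_r1 : td (r1 g) ≤ 10 * n :=
  tds (tds (tdm (tdm (td_q2 hg) (td_q2 hg) le_rfl) (td_c1 hg) (by omega))
    (tdm (tdm (td_q2 hg) (td_c3 hg) le_rfl) (td_q0 hg) (by omega))) (tdm (td_q1 hg) (td_w hg) (by omega))
lemma td_r0 : td (r0 g) ≤ 10 * n :=
  tds (tdm (tdm (td_q2 hg) (td_q2 hg) le_rfl) (td_c0 hg) (by omega)) (tdm (td_q0 hg) (td_w hg) (by omega))
end degs

lemma dvd_lift {φ : ℝ[X]} {t : ℝ} {j : ℕ} (h : (Polynomial.X - Polynomial.C t) ^ j ∣ derivative φ) (h0 : φ.eval t = 0) :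
    (Polynomial.X - Polynomial.C t) ^ (j + 1) ∣ φ := by
  by_cases hφ : φ = 0
  · simp [hφ]
  have h1 := Polynomial.derivative_rootMultiplicity_of_root (p := φ) (t := t) h0
  have h2 : 0 < φ.rootMultiplicity t := (Polynomial.rootMultiplicity_pos hφ).2 h0
  have h3 : derivative φ ≠ 0 := by
    intro h
    have := Polynomial.derivative_eq_zero.1 h
    obtain ⟨c, rfl⟩ := Polynomial.natDegree_eq_zero.1 this
    simp at h0; simp [h0] at hφ
  have := (Polynomial.le_rootMultiplicity_iff h3).2 h
  exact (Polynomial.le_rootMultiplicity_iff hφ).1 (by omega)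

lemma all_pow_dvd {φ : ℝ[X]} {t : ℝ} (h : ∀ j : ℕ, (Polynomial.X - Polynomial.C t) ^ j ∣ φ) : φ = 0 := by
  by_contra h0
  have := (Polynomial.le_rootMultiplicity_iff h0).2 (h (φ.rootMultiplicity t + 1))
  omega

lemma dvd_cancel {Q ψ : ℝ[X]} {t : ℝ} (hQ : Q.eval t ≠ 0) {j : ℕ} (h : (Polynomial.X - Polynomial.C t) ^ j ∣ Q * ψ) :
    (Polynomial.X - Polynomial.C t) ^ j ∣ ψ := by
  refine IsCoprime.dvd_of_dvd_mul_left (IsCoprime.pow_left ?_) h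
  exact (Polynomial.irreducible_X_sub_C t).coprime_iff_not_dvd.2 (fun h => hQ (Polynomial.dvd_iff_isRoot.1 h))

lemma ode3 {φ Q A B C : ℝ[X]} {t : ℝ} (h : Q * derivative (derivative (derivative φ)) =
    A * φ + B * derivative φ + C * derivative (derivative φ)) (hQ : Q.eval t ≠ 0)
    (h0 : φ.eval t = 0) (h1 : (derivative φ).eval t = 0) (h2 : (derivative (derivative φ)).eval t = 0) : φ = 0 := by
  have key : ∀ j : ℕ, (Polynomial.X - Polynomial.C t) ^ j ∣ derivative (derivative (derivative φ)) := by
    intro j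
    induction j with
    | zero => simp
    | succ j ih =>
      have e2 := dvd_lift ih h2
      have e1 := dvd_lift e2 h1
      have e0 := dvd_lift e1 h0
      apply dvd_cancel hQ
      rw [h]
      refine dvd_add (dvd_add ?_ ?_) ?_
      · exact Dvd.dvd.mul_left ((pow_dvd_pow _ (by omega)).trans e0) _
      · exact Dvd.dvd.mul_left ((pow_dvd_pow _ (by omega)).trans e1) _
      · exact Dvd.dvd.mul_left ((pow_dvd_pow _ (by omega)).trans e2) _
  apply all_pow_dvd (t := t)
  intro j
  exact (pow_dvd_pow _ (by omega)).trans (dvd_lift (dvd_lift (dvd_lift (key j) h2) h1) h0)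

lemma ode2 {φ Q A B : ℝ[X]} {t : ℝ} (h : Q * derivative (derivative φ) =
    A * φ + B * derivative φ) (hQ : Q.eval t ≠ 0)
    (h0 : φ.eval t = 0) (h1 : (derivative φ).eval t = 0) : φ = 0 := by
  have h2 : (derivative (derivative φ)).eval t = 0 := by
    have := congrArg (Polynomial.eval t) h
    simp only [Polynomial.eval_mul, Polynomial.eval_add, h0, h1, mul_zero, add_zero] at this
    exact (mul_eq_zero.1 this).resolve_left hQ
  refine ode3 (Q := Q) (A := derivative A) (B := A + derivative B) (C := B - derivative Q) (t := t) ?_ hQ h0 h1 h2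
  have := congrArg derivative h
  simp only [Polynomial.derivative_mul, Polynomial.derivative_add] at this
  linear_combination this

/-- second derivative identity along any line -/
lemma id2 (l : Ln) (g : Pol) : ∃ s : ℝ[X], res l (d1 g) ^ 2 * derivative (derivative (res l g)) =
    res l (q2 g) * Polynomial.C l.a ^ 2 + res l (q1 g) * Polynomial.C l.a + res l (q0 g) + derivative (res l g) * s := by
  refine ⟨(2 * Polynomial.C l.a * res l (d0 (d1 g)) + 2 * res l (d1 (d2 g))) * res l (d1 g) + res l (d1 (d1 g)) *
    (derivative (res l g) - 2 * (Polynomial.C l.a * res l (d0 g) + res l (d2 g))), ?_⟩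
  simp only [res_deriv, map_add, map_mul, q2, q1, q0, map_sub, map_ofNat, Polynomial.derivative_mul,
    Polynomial.derivative_C, d0, d1, d2, zero_mul, zero_add, pd_comm 1 0, pd_comm 2 0, pd_comm 2 1]
  generalize Polynomial.C l.a = a
  generalize Polynomial.C l.c = c
  generalize res l (pderiv 0 g) = gx
  generalize res l (pderiv 1 g) = gy
  generalize res l (pderiv 2 g) = gt
  generalize res l (pderiv 0 (pderiv 0 g)) = g00
  generalize res l (pderiv 0 (pderiv 1 g)) = g01
  generalize res l (pderiv 0 (pderiv 2 g)) = g02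
  generalize res l (pderiv 1 (pderiv 1 g)) = g11
  generalize res l (pderiv 1 (pderiv 2 g)) = g12
  generalize res l (pderiv 2 (pderiv 2 g)) = g22
  ring

lemma id3 (l : Ln) (g : Pol) : ∃ s : ℝ[X], res l (d1 g) ^ 3 * derivative (derivative (derivative (res l g))) =
    res l (c3 g) * Polynomial.C l.a ^ 3 + res l (c2 g) * Polynomial.C l.a ^ 2 + res l (c1 g) * Polynomial.C l.a
     + res l (c0 g) + derivative (res l g) * s := by
  refine ⟨(3 * Polynomial.C l.a ^ 2 * res l (d0 (d0 (d1 g))) + 6 * Polynomial.C l.a * res l (d0 (d1 (d2 g)))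
      + 3 * res l (d1 (d2 (d2 g)))) * res l (d1 g) ^ 2
    + (3 * Polynomial.C l.a * res l (d0 (d1 (d1 g))) + 3 * res l (d1 (d1 (d2 g)))) * res l (d1 g)
      * (derivative (res l g) - 2 * (Polynomial.C l.a * res l (d0 g) + res l (d2 g)))
    + res l (d1 (d1 (d1 g))) * (derivative (res l g) ^ 2 - 3 * derivative (res l g) *
      (Polynomial.C l.a * res l (d0 g) + res l (d2 g)) + 3 * (Polynomial.C l.a * res l (d0 g) + res l (d2 g)) ^ 2), ?_⟩
  simp only [res_deriv, map_add, map_mul, c3, c2, c1, c0, map_sub, map_ofNat, Polynomial.derivative_mul,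
    Polynomial.derivative_C, d0, d1, d2, zero_mul, zero_add, map_zero, pd_comm 1 0, pd_comm 2 0, pd_comm 2 1]
  generalize Polynomial.C l.a = a
  generalize Polynomial.C l.c = c
  generalize res l (pderiv 0 g) = gx
  generalize res l (pderiv 1 g) = gy
  generalize res l (pderiv 2 g) = gt
  generalize res l (pderiv 0 (pderiv 0 (pderiv 0 g))) = g000
  generalize res l (pderiv 0 (pderiv 0 (pderiv 1 g))) = g001
  generalize res l (pderiv 0 (pderiv 0 (pderiv 2 g))) = g002
  generalize res l (pderiv 0 (pderiv 1 (pderiv 1 g))) = g011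
  generalize res l (pderiv 0 (pderiv 1 (pderiv 2 g))) = g012
  generalize res l (pderiv 0 (pderiv 2 (pderiv 2 g))) = g022
  generalize res l (pderiv 1 (pderiv 1 (pderiv 1 g))) = g111
  generalize res l (pderiv 1 (pderiv 1 (pderiv 2 g))) = g112
  generalize res l (pderiv 1 (pderiv 2 (pderiv 2 g))) = g122
  generalize res l (pderiv 2 (pderiv 2 (pderiv 2 g))) = g222
  ring

end HD

namespace HD
open MvPolynomial Polynomial

lemma eval_res_on {l : Ln} {P : Pt} (h : on P l) (f : Pol) : (res l f).eval (P 2) = ev P f := by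
  rw [eval_res, ← on_iff.1 h]

lemma F1_of_inZ {g : Pol} {l : Ln} {P : Pt} (hz : inZ l g) (h : on P l) :
    l.a * ev P (d0 g) + l.c * ev P (d1 g) + ev P (d2 g) = 0 := by
  have := res_deriv l g
  rw [hz] at this
  have := congrArg (Polynomial.eval (P 2)) this
  simpa [eval_res_on h] using this.symm

lemma F2_of_inZ {g : Pol} {l : Ln} {P : Pt} (hz : inZ l g) (h : on P l) :
    ev P (q2 g) * l.a ^ 2 + ev P (q1 g) * l.a + ev P (q0 g) = 0 := by
  obtain ⟨s, hs⟩ := id2 l g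
  rw [hz] at hs
  have := congrArg (Polynomial.eval (P 2)) hs
  simpa [eval_res_on h] using this.symm

lemma F3_of_inZ {g : Pol} {l : Ln} {P : Pt} (hz : inZ l g) (h : on P l) :
    ev P (c3 g) * l.a ^ 3 + ev P (c2 g) * l.a ^ 2 + ev P (c1 g) * l.a + ev P (c0 g) = 0 := by
  obtain ⟨s, hs⟩ := id3 l g
  rw [hz] at hs
  have := congrArg (Polynomial.eval (P 2)) hs
  simpa [eval_res_on h] using this.symm

lemma flat_line {g : Pol} (h2 : g ∣ q2 g) (h1 : g ∣ q1 g) (h0 : g ∣ q0 g) {l : Ln} {P : Pt} (hP : on P l)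
    (hgP : ev P g = 0) (hy : ev P (d1 g) ≠ 0)
    (hF : l.a * ev P (d0 g) + l.c * ev P (d1 g) + ev P (d2 g) = 0) : inZ l g := by
  obtain ⟨k2, h2⟩ := h2
  obtain ⟨k1, h1⟩ := h1
  obtain ⟨k0, h0⟩ := h0
  obtain ⟨s, hs⟩ := id2 l g
  rw [h2, h1, h0] at hs
  refine ode2 (Q := res l (d1 g) ^ 2) (A := res l k2 * Polynomial.C l.a ^ 2 + res l k1 * Polynomial.C l.a + res l k0)
    (B := s) (t := P 2) ?_ ?_ ?_ ?_
  · rw [hs]; simp only [map_mul]; ring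
  · simpa [eval_res_on hP] using hy
  · rw [eval_res_on hP]; exact hgP
  · rw [res_deriv]; simpa [eval_res_on hP] using hF

lemma ruled_line {g : Pol} (h1 : g ∣ r1 g) (h0 : g ∣ r0 g) {l : Ln} {P : Pt} (hP : on P l)
    (hgP : ev P g = 0) (hy : ev P (d1 g * q2 g) ≠ 0)
    (hF : l.a * ev P (d0 g) + l.c * ev P (d1 g) + ev P (d2 g) = 0)
    (hq : ev P (q2 g) * l.a ^ 2 + ev P (q1 g) * l.a + ev P (q0 g) = 0) : inZ l g := by
  obtain ⟨k1, h1⟩ := h1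
  obtain ⟨k0, h0⟩ := h0
  obtain ⟨s2, hs2⟩ := id2 l g
  obtain ⟨s3, hs3⟩ := id3 l g
  have e1 := congrArg (res l) h1
  have e0 := congrArg (res l) h0
  simp only [r1, r0, map_sub, map_mul] at e1 e0
  rw [ev, map_mul] at hy
  have hy1 := left_ne_zero_of_mul hy
  have hy2 := right_ne_zero_of_mul hy
  have hd1 : (derivative (res l g)).eval (P 2) = 0 := by
    rw [res_deriv]; simpa [eval_res_on hP] using hF
  refine ode3 (Q := res l (q2 g) ^ 2 * res l (d1 g) ^ 3) (A := res l k1 * Polynomial.C l.a + res l k0)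
    (B := res l (q2 g) ^ 2 * s3 - s2 * (res l (q2 g) * res l (c3 g) * Polynomial.C l.a
      + (res l (q2 g) * res l (c2 g) - res l (c3 g) * res l (q1 g))))
    (C := res l (d1 g) ^ 2 * (res l (q2 g) * res l (c3 g) * Polynomial.C l.a
      + (res l (q2 g) * res l (c2 g) - res l (c3 g) * res l (q1 g)))) (t := P 2) ?_ ?_ ?_ hd1 ?_
  · generalize derivative (res l g) = φ1 at *
    generalize derivative φ1 = φ2 at *
    generalize derivative φ2 = φ3 at *
    linear_combination res l (q2 g) ^ 2 * hs3 + Polynomial.C l.a * e1 + e0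
      - (res l (q2 g) * res l (c3 g) * Polynomial.C l.a
        + (res l (q2 g) * res l (c2 g) - res l (c3 g) * res l (q1 g))) * hs2
  · simpa [eval_res_on hP] using ⟨hy2, hy1⟩
  · rw [eval_res_on hP]; exact hgP
  · have := congrArg (Polynomial.eval (P 2)) hs2
    simp only [Polynomial.eval_add, Polynomial.eval_mul, Polynomial.eval_pow, eval_res_on hP, Polynomial.eval_C,
      hd1, zero_mul, hq, add_zero] at this
    exact (mul_eq_zero.1 this).resolve_left (pow_ne_zero _ hy1)

/-- double point -/
def dbl (g : Pol) (l : Ln) (P : Pt) : Prop := on P l ∧ ∃ m, m ≠ l ∧ on P m ∧ inZ m g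

lemma dbl_slope {g : Pol} {l m : Ln} {P : Pt} (hl : inZ l g) (hPl : on P l) (hml : m ≠ l) (hPm : on P m)
    (hm : inZ m g) (hy : ev P (d1 g) ≠ 0) : m.a ≠ l.a := by
  intro ha
  apply hml
  have e1 := F1_of_inZ hl hPl
  have e2 := F1_of_inZ hm hPm
  have hc : m.c = l.c := by
    rw [ha] at e2
    have : (m.c - l.c) * ev P (d1 g) = 0 := by linear_combination e2 - e1
    linarith [(mul_eq_zero.1 this).resolve_right hy]
  ext
  · exact ha
  · have := hPl.1; have := hPm.1; rw [ha] at *; linarith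
  · exact hc
  · have := hPl.2; have := hPm.2; rw [hc] at *; linarith

lemma two_roots {p r a b : ℝ} (hab : b ≠ a) (h1 : p * a + r = 0) (h2 : p * b + r = 0) : p = 0 ∧ r = 0 := by
  have : p * (b - a) = 0 := by linear_combination h2 - h1
  have hp := (mul_eq_zero.1 this).resolve_right (sub_ne_zero.2 hab)
  exact ⟨hp, by rw [hp] at h1; linarith⟩

lemma dbl_r {g : Pol} {l : Ln} {P : Pt} (hl : inZ l g) (h : dbl g l P) :
    ev P (d1 g * r1 g) = 0 ∧ ev P (d1 g * r0 g) = 0 := by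
  obtain ⟨hPl, m, hml, hPm, hm⟩ := h
  by_cases hy : ev P (d1 g) = 0
  · simp only [ev, map_mul] at *; simp [hy]
  have hs := dbl_slope hl hPl hml hPm hm hy
  have key : ∀ k : Ln, inZ k g → on P k → ev P (r1 g) * k.a + ev P (r0 g) = 0 := by
    intro k hk hPk
    have e2 := F2_of_inZ hk hPk
    have e3 := F3_of_inZ hk hPk
    simp only [ev, r1, r0, map_sub, map_mul] at *
    linear_combination (eval P (q2 g)) ^ 2 * e3 - (eval P (q2 g) * eval P (c3 g) * k.a +
      (eval P (q2 g) * eval P (c2 g) - eval P (c3 g) * eval P (q1 g))) * e2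
  have := two_roots hs (key l hl hPl) (key m hm hPm)
  simp only [ev, map_mul] at *; simp [this.1, this.2]

lemma dbl_q {g : Pol} {l : Ln} {P : Pt} (hl : inZ l g) (h : dbl g l P) (hq : g ∣ q2 g) :
    ev P (d1 g * q1 g) = 0 ∧ ev P (d1 g * q0 g) = 0 := by
  obtain ⟨hPl, m, hml, hPm, hm⟩ := h
  by_cases hy : ev P (d1 g) = 0
  · simp only [ev, map_mul] at *; simp [hy]
  have hs := dbl_slope hl hPl hml hPm hm hy
  have key : ∀ k : Ln, inZ k g → on P k → ev P (q1 g) * k.a + ev P (q0 g) = 0 := by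
    intro k hk hPk
    have e2 := F2_of_inZ hk hPk
    rw [ev_of_inZ (inZ_of_dvd hq hk) hPk] at e2
    linarith
  have := two_roots hs (key l hl hPl) (key m hm hPm)
  simp only [ev, map_mul] at *; simp [this.1, this.2]

lemma td_le_of_dvd {g h : Pol} (hh : h ≠ 0) (hd : g ∣ h) : td g ≤ td h := by
  obtain ⟨k, rfl⟩ := hd
  have hg : g ≠ 0 := left_ne_zero_of_mul hh
  have hk : k ≠ 0 := right_ne_zero_of_mul hh
  rw [td, td, MvPolynomial.totalDegree_mul_of_isDomain hg hk]; omega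

lemma dvd_of_infinite {g h : Pol} (hg : Prime g) (S : Set Ln) (hS : S.Infinite)
    (h1 : ∀ l ∈ S, inZ l g ∧ inZ l h) : g ∣ h := by
  by_contra hgh
  obtain ⟨T, hT, hc⟩ := hS.exists_subset_card_eq (6 * td g * td h + 1)
  have := bezout hg hgh T (fun l hl => h1 l (hT hl))
  omega

lemma hasDerivAt_y (f : Pol) (x t s : ℝ) : HasDerivAt (fun s => ev ![x, s, t] f) (ev ![x, s, t] (d1 f)) s := by
  induction f using MvPolynomial.induction_on with
  | C r => simpa using hasDerivAt_const s r
  | add p q hp hq => have := hp.add hq; simp only [ev, map_add, d1] at this ⊢; exact this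
  | mul_X p i hp =>
    have hX : HasDerivAt (fun s => ev ![x, s, t] (X i)) (ev ![x, s, t] (d1 (X i))) s := by
      fin_cases i
      · simpa [pderiv_X] using hasDerivAt_const s x
      · simpa [pderiv_X] using hasDerivAt_id' s
      · simpa [pderiv_X] using hasDerivAt_const s t
    have := hp.mul hX
    simp only [ev, map_mul, d1, pderiv_mul, map_add] at this ⊢
    exact this

def plane (u v w k : ℝ) : Pol := MvPolynomial.C u * X 0 + MvPolynomial.C v * X 1 + MvPolynomial.C w * X 2 + MvPolynomial.C k
lemma ev_plane (u v w k : ℝ) (x : Pt) : ev x (plane u v w k) = u * x 0 + v * x 1 + w * x 2 + k := by simp [plane]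
lemma td_plane (u v w k : ℝ) : td (plane u v w k) ≤ 1 := by
  have h : ∀ (r : ℝ) (i : Fin 3), td (MvPolynomial.C r * X i : Pol) ≤ 1 := fun r i =>
    tdm (a := 0) (b := 1) (by simp) (by simp [totalDegree_X]) (by omega)
  exact tda (tda (tda (h _ _) (h _ _)) (h _ _)) (by simp)

lemma cyl {g : Pol} (hg : Prime g) (hy : d1 g = 0) {l : Ln} (hl : inZ l g) : td g ≤ 1 := by
  have hd : g ∣ plane 1 0 (-l.a) (-l.b) := by
    apply dvd_of_infinite hg (Set.range (fun k : ℝ => (⟨l.a, l.b, 0, k⟩ : Ln)))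
    · apply Set.infinite_range_of_injective
      intro i j hij; simpa using hij
    · rintro _ ⟨k, rfl⟩
      refine ⟨inZ_of_forall fun t => ?_, inZ_of_forall fun t => ?_⟩
      · have hc := is_const_of_deriv_eq_zero (f := fun s => ev ![l.a * t + l.b, s, t] g)
          (fun s => (hasDerivAt_y g _ t s).differentiableAt)
          (fun s => by rw [(hasDerivAt_y g _ t s).deriv, hy]; simp) k (l.c * t + l.d)
        have e := ev_of_inZ hl (on_pt l t)
        have e2 : (Ln.pt ⟨l.a, l.b, 0, k⟩ t) = ![l.a * t + l.b, k, t] := by simp [Ln.pt]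
        rw [e2]; exact hc.trans e
      · rw [ev_plane]; simp
  refine (td_le_of_dvd ?_ hd).trans (td_plane _ _ _ _)
  intro h
  have e0 := ev_plane 1 0 (-l.a) (-l.b) ![l.b + 1, 0, 0]
  rw [h] at e0; simp at e0

lemma flat_td {g : Pol} (hg : Prime g) (h2 : g ∣ q2 g) (h1 : g ∣ q1 g) (h0 : g ∣ q0 g) {P : Pt}
    (hgP : ev P g = 0) (hy : ev P (d1 g) ≠ 0) : td g ≤ 1 := by
  set X' := ev P (d0 g)
  set Y := ev P (d1 g)
  set T := ev P (d2 g)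
  have hd : g ∣ plane X' Y T (-(X' * P 0 + Y * P 1 + T * P 2)) := by
    let γ : ℝ → ℝ := fun a => -(X' * a + T) / Y
    apply dvd_of_infinite hg (Set.range (fun a : ℝ => (⟨a, P 0 - a * P 2, γ a, P 1 - γ a * P 2⟩ : Ln)))
    · apply Set.infinite_range_of_injective
      intro i j hij; simp at hij; exact hij.1
    · rintro _ ⟨a, rfl⟩
      have hγ : γ a * Y = -(X' * a + T) := div_mul_cancel₀ _ hy
      refine ⟨flat_line h2 h1 h0 (P := P) ⟨by simp, by simp⟩ hgP hy ?_, inZ_of_forall fun t => ?_⟩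
      · change a * X' + γ a * Y + T = 0
        rw [hγ]; ring
      · rw [ev_plane]; simp
        linear_combination (t - P 2) * hγ
  refine (td_le_of_dvd ?_ hd).trans (td_plane _ _ _ _)
  intro h
  have e0 := ev_plane X' Y T (-(X' * P 0 + Y * P 1 + T * P 2)) ![P 0, P 1 + 1, P 2]
  rw [h] at e0; simp at e0
  exact hy (by linarith)

end HD

namespace HD
open MvPolynomial Polynomial Filter Topology

def oth (g : Pol) (l : Ln) (t : ℝ) : Ln :=
  let P := l.pt t
  let a := -ev P (q1 g) / ev P (q2 g) - l.a
  let c := -(ev P (d0 g) * a + ev P (d2 g)) / ev P (d1 g)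
  ⟨a, P 0 - a * t, c, P 1 - c * t⟩

lemma on_oth (g : Pol) (l : Ln) (t : ℝ) : on (l.pt t) (oth g l t) := by
  constructor <;> simp [oth]

lemma pt_oth (g : Pol) (l : Ln) (t : ℝ) : (oth g l t).pt t = l.pt t := (on_iff.1 (on_oth g l t)).symm

section
variable {g : Pol} {l : Ln} {t : ℝ} (hl : inZ l g) (hy : ev (l.pt t) (d1 g * q2 g) ≠ 0)
include hl hy

omit hl in
lemma oth_F1 : (oth g l t).a * ev (l.pt t) (d0 g) + (oth g l t).c * ev (l.pt t) (d1 g) + ev (l.pt t) (d2 g) = 0 := by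
  rw [ev, map_mul] at hy
  have hy1 := left_ne_zero_of_mul hy
  simp only [oth]
  rw [div_mul_cancel₀ _ hy1]; ring

lemma oth_inZ (h1 : g ∣ r1 g) (h0 : g ∣ r0 g) : inZ (oth g l t) g := by
  refine ruled_line h1 h0 (on_oth g l t) (ev_of_inZ hl (on_pt l t)) hy (oth_F1 hy) ?_
  rw [ev, map_mul] at hy
  have hy2 := right_ne_zero_of_mul hy
  have := F2_of_inZ hl (on_pt l t)
  simp only [oth]
  field_simp
  linear_combination eval (l.pt t) (q2 g) * this

lemma oth_oth : oth g (oth g l t) t = l := by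
  have hP : (oth g l t).pt t = l.pt t := pt_oth g l t
  have hF := F1_of_inZ hl (on_pt l t)
  rw [ev, map_mul] at hy
  have hy1 : ev (l.pt t) (d1 g) ≠ 0 := left_ne_zero_of_mul hy
  have ha : (oth g (oth g l t) t).a = l.a := by
    rw [oth]; simp only; rw [hP]; simp only [oth]; ring
  have hc : (oth g (oth g l t) t).c = l.c := by
    have : (oth g (oth g l t) t).c = -(ev ((oth g l t).pt t) (d0 g) * (oth g (oth g l t) t).a + ev ((oth g l t).pt t) (d2 g)) / ev ((oth g l t).pt t) (d1 g) := rfl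
    rw [this, ha, hP, div_eq_iff hy1]; linear_combination -hF
  have ho := on_oth g (oth g l t) t
  rw [hP] at ho
  obtain ⟨o1, o2⟩ := ho
  rw [ha] at o1; rw [hc] at o2
  simp at o1 o2
  ext
  · exact ha
  · exact o1.symm
  · exact hc
  · exact o2.symm

omit hl in
lemma oth_cont : ContinuousAt (fun s => (oth g l s).a) t ∧ ContinuousAt (fun s => (oth g l s).b) t ∧
    ContinuousAt (fun s => (oth g l s).c) t ∧ ContinuousAt (fun s => (oth g l s).d) t := by
  rw [ev, map_mul] at hy
  have hy1 := left_ne_zero_of_mul hy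
  have hy2 := right_ne_zero_of_mul hy
  have hc : ∀ f : Pol, ContinuousAt (fun s => ev (l.pt s) f) t := by
    intro f
    have : (fun s => ev (l.pt s) f) = fun s => (res l f).eval s := by ext s; rw [eval_res]
    rw [this]; exact (res l f).continuous.continuousAt
  have ha : ContinuousAt (fun s => (oth g l s).a) t :=
    ((hc _).neg.div (hc _) hy2).sub continuousAt_const
  have hcc : ContinuousAt (fun s => (oth g l s).c) t :=
    (((hc _).mul ha).add (hc _)).neg.div (hc _) hy1
  refine ⟨ha, ?_, hcc, ?_⟩
  · change ContinuousAt (fun s => (l.a * s + l.b) - (oth g l s).a * s) t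
    exact (by fun_prop : ContinuousAt (fun s => l.a * s + l.b) t).sub (ha.mul continuousAt_id)
  · change ContinuousAt (fun s => (l.c * s + l.d) - (oth g l s).c * s) t
    exact (by fun_prop : ContinuousAt (fun s => l.c * s + l.d) t).sub (hcc.mul continuousAt_id)
end

lemma y_unique {g : Pol} {P : Pt} (hy : ev P (d1 g) ≠ 0) : ∃ ε > 0, ∀ A B : Pt, dist A P < ε → dist B P < ε →
    A 0 = B 0 → A 2 = B 2 → ev A g = 0 → ev B g = 0 → A 1 = B 1 := by
  have hc : Continuous (fun x : Pt => ev x (d1 g)) := MvPolynomial.continuous_eval _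
  have := hc.continuousAt.eventually_ne hy
  obtain ⟨ε, he, hb⟩ := Metric.eventually_nhds_iff.1 this
  refine ⟨ε, he, ?_⟩
  have main : ∀ A B : Pt, dist A P < ε → dist B P < ε →
    A 0 = B 0 → A 2 = B 2 → ev A g = 0 → ev B g = 0 → ¬ A 1 < B 1 := by
    intro A B hA hB h0 h2 hgA hgB hlt
    have eA : A = ![A 0, A 1, A 2] := by ext i; fin_cases i <;> rfl
    have eB : B = ![A 0, B 1, A 2] := by ext i; fin_cases i <;> simp [h0, h2]
    obtain ⟨s, hs, h⟩ := exists_hasDerivAt_eq_zero hlt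
      (f := fun s => ev ![A 0, s, A 2] g) (f' := fun s => ev ![A 0, s, A 2] (d1 g))
      (fun s _ => (hasDerivAt_y g _ _ s).continuousAt.continuousWithinAt)
      (by rw [← eA, ← eB, hgA, hgB]) (fun s _ => hasDerivAt_y g _ _ s)
    refine hb ?_ h
    rw [dist_pi_lt_iff he] at hA hB ⊢
    intro i; fin_cases i
    · exact hA 0
    · have a1 := hA 1
      have b1 := hB 1
      rw [Real.dist_eq, abs_lt] at a1 b1
      simp only [Fin.mk_one, Matrix.cons_val_one, Matrix.cons_val_zero]
      rw [Real.dist_eq, abs_lt]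
      exact ⟨by linarith [hs.1], by linarith [hs.2]⟩
    · exact hA 2
  intro A B hA hB h0 h2 hgA hgB
  exact le_antisymm (not_lt.1 (main B A hB hA h0.symm h2.symm hgB hgA)) (not_lt.1 (main A B hA hB h0 h2 hgA hgB))

lemma pt_tendsto {n : ℝ → Ln} {τ : ℝ → ℝ} {t0 s : ℝ}
    (c1 : ContinuousAt (fun r => (n r).a) t0) (c2 : ContinuousAt (fun r => (n r).b) t0)
    (c3 : ContinuousAt (fun r => (n r).c) t0) (c4 : ContinuousAt (fun r => (n r).d) t0)
    (hτ : Tendsto τ (𝓝 t0) (𝓝 s)) : Tendsto (fun r => (n r).pt (τ r)) (𝓝 t0) (𝓝 ((n t0).pt s)) := by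
  rw [tendsto_pi_nhds]
  intro i; fin_cases i
  · exact (c1.tendsto.mul hτ).add c2
  · exact (c3.tendsto.mul hτ).add c4
  · exact hτ

lemma meet {g : Pol} {n : ℝ → Ln} {m : Ln} {t0 s : ℝ}
    (c1 : ContinuousAt (fun r => (n r).a) t0) (c2 : ContinuousAt (fun r => (n r).b) t0)
    (c3 : ContinuousAt (fun r => (n r).c) t0) (c4 : ContinuousAt (fun r => (n r).d) t0)
    (hm : inZ m g) (hn : ∀ᶠ r in 𝓝 t0, inZ (n r) g) (hs : m.pt s = (n t0).pt s) (hne : m.a ≠ (n t0).a)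
    (hy : ev (m.pt s) (d1 g) ≠ 0) : ∃ τ : ℝ → ℝ, Tendsto τ (𝓝 t0) (𝓝 s) ∧
      ∀ᶠ r in 𝓝 t0, (n r).pt (τ r) = m.pt (τ r) := by
  have hne' : m.a - (n t0).a ≠ 0 := sub_ne_zero.2 hne
  refine ⟨fun r => ((n r).b - m.b) / (m.a - (n r).a), ?_, ?_⟩
  · have e := congrFun hs 0
    simp at e
    have : s = ((n t0).b - m.b) / (m.a - (n t0).a) := by rw [eq_div_iff hne']; linear_combination e
    conv => rhs; rw [this]
    exact (c2.sub continuousAt_const).div (continuousAt_const.sub c1) hne'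
  set τ : ℝ → ℝ := fun r => ((n r).b - m.b) / (m.a - (n r).a) with hτd
  have hτ : Tendsto τ (𝓝 t0) (𝓝 s) := by
    have e := congrFun hs 0
    simp at e
    have : s = ((n t0).b - m.b) / (m.a - (n t0).a) := by rw [eq_div_iff hne']; linear_combination e
    conv => rhs; rw [this]
    exact (c2.sub continuousAt_const).div (continuousAt_const.sub c1) hne'
  obtain ⟨ε, he, hu⟩ := y_unique hy
  have l1 := (pt_tendsto c1 c2 c3 c4 hτ)
  rw [← hs] at l1
  have l2 : Tendsto (fun r => m.pt (τ r)) (𝓝 t0) (𝓝 (m.pt s)) :=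
    pt_tendsto (n := fun _ => m) continuousAt_const continuousAt_const continuousAt_const continuousAt_const hτ
  have ed : ∀ᶠ r in 𝓝 t0, m.a - (n r).a ≠ 0 := (continuousAt_const.sub c1).eventually_ne hne'
  filter_upwards [l1.eventually (Metric.ball_mem_nhds _ he), l2.eventually (Metric.ball_mem_nhds _ he), hn, ed]
    with r h1 h2 h3 h4
  have e0 : (n r).pt (τ r) 0 = m.pt (τ r) 0 := by
    simp [hτd]; field_simp; ring
  have e1 := hu _ _ h1 h2 e0 rfl (ev_of_inZ h3 (on_pt _ _)) (ev_of_inZ hm (on_pt _ _))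
  ext i; fin_cases i
  · exact e0
  · exact e1
  · rfl

lemma ruled_td {g : Pol} (hg : Prime g) (h1 : g ∣ r1 g) (h0 : g ∣ r0 g) {l k : Ln} {t0 : ℝ}
    (hl : inZ l g) (hk : inZ k g) (hkl : k ≠ l) (hkP : on (l.pt t0) k)
    (hy : ev (l.pt t0) (d1 g * q2 g) ≠ 0) : td g ≤ 2 := by
  have hy1 : ev (l.pt t0) (d1 g) ≠ 0 := by rw [ev, map_mul] at hy; exact left_ne_zero_of_mul hy
  have hy2 : ev (l.pt t0) (q2 g) ≠ 0 := by rw [ev, map_mul] at hy; exact right_ne_zero_of_mul hy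
  have hne : (oth g l t0).a ≠ l.a := by
    have hs := dbl_slope hl (on_pt l t0) hkl hkP hk hy1
    have e1 := F2_of_inZ hl (on_pt l t0)
    have e2 := F2_of_inZ hk hkP
    have e3 : ev (l.pt t0) (q2 g) * (k.a + l.a) + ev (l.pt t0) (q1 g) = 0 := by
      have : (k.a - l.a) * (ev (l.pt t0) (q2 g) * (k.a + l.a) + ev (l.pt t0) (q1 g)) = 0 := by
        linear_combination e2 - e1
      exact (mul_eq_zero.1 this).resolve_left (sub_ne_zero.2 hs)
    have : (oth g l t0).a = k.a := by
      simp only [oth]; field_simp; linear_combination -e3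
    rw [this]; exact hs
  have hcont : ∀ f : Pol, ∀ m : Ln, Continuous (fun s => ev (m.pt s) f) := by
    intro f m
    have : (fun s => ev (m.pt s) f) = fun s => (res m f).eval s := by ext s; rw [eval_res]
    rw [this]; exact (res m f).continuous
  have ev1 : ∀ᶠ s in 𝓝 t0, ev (l.pt s) (d1 g * q2 g) ≠ 0 ∧ (oth g l s).a ≠ l.a :=
    ((hcont _ l).continuousAt.eventually_ne hy).and ((oth_cont hy).1.eventually_ne hne)
  obtain ⟨ε, he, hb⟩ := Metric.eventually_nhds_iff.1 ev1
  have good : ∀ s, dist s t0 < ε → inZ (oth g l s) g ∧ (oth g l s).a ≠ l.a ∧ ev (l.pt s) (d1 g) ≠ 0 := by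
    intro s hs
    obtain ⟨a1, a2⟩ := hb hs
    refine ⟨oth_inZ hl a1 h1 h0, a2, ?_⟩
    rw [ev, map_mul] at a1; exact left_ne_zero_of_mul a1
  set s2 := t0 + ε / 2
  set s3 := t0 + ε / 3
  have g1 := good t0 (by simpa using he)
  have g2 := good s2 (by simp [s2, abs_of_pos he]; linarith)
  have g3 := good s3 (by simp [s3, abs_of_pos he]; linarith)
  set m := oth g l t0 with hm
  have hmP : m.pt t0 = l.pt t0 := pt_oth g l t0
  have hym : ev (m.pt t0) (d1 g * q2 g) ≠ 0 := by rw [hmP]; exact hy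
  have hn0 : oth g m t0 = l := oth_oth hl hy
  obtain ⟨c1, c2, c3, c4⟩ := oth_cont hym
  have evm : ∀ᶠ s in 𝓝 t0, ev (m.pt s) (d1 g * q2 g) ≠ 0 := (hcont _ m).continuousAt.eventually_ne hym
  have evn : ∀ᶠ s in 𝓝 t0, inZ (oth g m s) g := evm.mono fun s hs => oth_inZ g1.1 hs h1 h0
  obtain ⟨τ2, t2, w2⟩ := meet c1 c2 c3 c4 g2.1 evn (s := s2) (by rw [hn0, pt_oth]) (by rw [hn0]; exact g2.2.1)
    (by rw [pt_oth]; exact g2.2.2)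
  obtain ⟨τ3, t3, w3⟩ := meet c1 c2 c3 c4 g3.1 evn (s := s3) (by rw [hn0, pt_oth]) (by rw [hn0]; exact g3.2.1)
    (by rw [pt_oth]; exact g3.2.2)
  obtain ⟨f, hf0, hf2, hf⟩ := exists_quadric ![m, oth g l s2, oth g l s3]
  have z1 : inZ m f := hf 0
  have z2 : inZ (oth g l s2) f := hf 1
  have z3 : inZ (oth g l s3) f := hf 2
  have d23 : ∀ᶠ r in 𝓝 t0, τ2 r ≠ τ3 r := by
    have := (t2.sub t3).eventually_ne (show s2 - s3 ≠ 0 by simp [s2, s3]; intro h; linarith)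
    exact this.mono fun r hr h => hr (by rw [h, sub_self])
  have d12 : ∀ᶠ r in 𝓝 t0, τ2 r ≠ r := by
    have := (t2.sub tendsto_id).eventually_ne (show s2 - t0 ≠ 0 by simp [s2]; intro h; linarith)
    exact this.mono fun r hr h => hr (by rw [h]; simp)
  have d13 : ∀ᶠ r in 𝓝 t0, τ3 r ≠ r := by
    have := (t3.sub tendsto_id).eventually_ne (show s3 - t0 ≠ 0 by simp [s3]; intro h; linarith)
    exact this.mono fun r hr h => hr (by rw [h]; simp)
  have dsl : ∀ᶠ r in 𝓝 t0, (oth g m r).a ≠ m.a :=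
    c1.eventually_ne (by rw [hn0]; exact g1.2.1.symm)
  have fin : ∀ᶠ r in 𝓝 t0, inZ (oth g m r) g ∧ inZ (oth g m r) f ∧ (oth g m r).a ≠ m.a := by
    filter_upwards [evn, w2, w3, d23, d12, d13, dsl] with r b1 b2 b3 b4 b5 b6 b7
    refine ⟨b1, ?_, b7⟩
    classical
    apply inZ_of_card (({r, τ2 r, τ3 r} : Finset ℝ).image (oth g m r).pt)
    · intro x hx
      obtain ⟨u, hu, rfl⟩ := Finset.mem_image.1 hx
      refine ⟨on_pt _ _, ?_⟩
      simp only [Finset.mem_insert, Finset.mem_singleton] at hu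
      rcases hu with rfl | rfl | rfl
      · rw [pt_oth]; exact ev_of_inZ z1 (on_pt _ _)
      · rw [b2]; exact ev_of_inZ z2 (on_pt _ _)
      · rw [b3]; exact ev_of_inZ z3 (on_pt _ _)
    · rw [Finset.card_image_of_injective _ (fun _ _ h => pt_inj h),
        Finset.card_eq_three.2 ⟨r, τ2 r, τ3 r, b5.symm, b6.symm, b4, rfl⟩]
      omega
  obtain ⟨δ, hδ, hfin⟩ := Metric.eventually_nhds_iff.1 fin
  have hd : g ∣ f := by
    apply dvd_of_infinite hg ((fun r => oth g m r) '' (Metric.ball t0 δ))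
    · apply Set.Infinite.image
      · intro r hr r' hr' h
        by_contra hrr
        have hr1 := hfin hr
        simp only at h
        have e1 := on_oth g m r
        have e2 := on_oth g m r'
        rw [← h] at e2
        have := ln_eq_of_two (fun h => hrr (pt_inj h)) e1 (on_pt m r) e2 (on_pt m r')
        exact hr1.2.2 (by rw [this])
      · rw [Real.ball_eq_Ioo]; exact Set.Ioo_infinite (by linarith)
    · rintro _ ⟨r, hr, rfl⟩
      exact ⟨(hfin hr).1, (hfin hr).2.1⟩
  exact (td_le_of_dvd hf0 hd).trans hf2

theorem ISL {g : Pol} (hg : Prime g) (hn : 3 ≤ td g) (S : Finset Ln) (hS : ∀ l ∈ S, inZ l g)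
    (hd : ∀ l ∈ S, ∃ D : Finset Pt, 11 * td g < D.card ∧ ∀ P ∈ D, dbl g l P) : S.card ≤ 66 * td g ^ 2 := by
  by_contra hc
  push Not at hc
  have hS0 : S.Nonempty := by rw [← Finset.card_pos]; omega
  have hy : d1 g ≠ 0 := by
    intro h
    obtain ⟨l, hl⟩ := hS0
    have := cyl hg h (hS l hl); omega
  have hgy : ¬ g ∣ d1 g := by
    intro h
    have := td_le_of_dvd hy h
    have h3 : td (d1 g) ≤ td g - 1 := td_pderiv 1 g
    omega
  have hty : td (d1 g) ≤ td g := tdd le_rfl 1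
  -- general tool
  have tool : ∀ h : Pol, td h ≤ 10 * td g → (∀ l ∈ S, inZ l (d1 g * h)) → g ∣ h := by
    intro h hth hz
    by_contra hgh
    have h1 : ¬ g ∣ d1 g * h := fun hh => (hg.dvd_or_dvd hh).elim hgy hgh
    have := bezout hg h1 S (fun l hl => ⟨hS l hl, hz l hl⟩)
    have h2 : td (d1 g * h) ≤ 11 * td g := tdm hty hth (by omega)
    nlinarith
  have tool2 : ∀ h : Pol, td h ≤ 10 * td g → (∀ l ∈ S, ∀ P, dbl g l P → ev P (d1 g * h) = 0) → g ∣ h := by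
    intro h hth hz
    apply tool h hth
    intro l hl
    obtain ⟨D, hD, hD2⟩ := hd l hl
    refine inZ_of_card D (fun P hP => ⟨(hD2 P hP).1, hz l hl P (hD2 P hP)⟩) ?_
    have h2 : td (d1 g * h) ≤ 11 * td g := tdm hty hth (by omega)
    omega
  have hr1 : g ∣ r1 g := tool2 _ (td_r1 le_rfl) (fun l hl P hP => (dbl_r (hS l hl) hP).1)
  have hr0 : g ∣ r0 g := tool2 _ (td_r0 le_rfl) (fun l hl P hP => (dbl_r (hS l hl) hP).2)
  -- a double point off h
  have pick : ∀ h : Pol, td h ≤ 10 * td g → ¬ g ∣ h → ∃ l ∈ S, ∃ P, dbl g l P ∧ ev P (d1 g * h) ≠ 0 := by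
    intro h hth hgh
    by_contra hcon
    push Not at hcon
    exact hgh (tool2 h hth (fun l hl P hP => hcon l hl P hP))
  by_cases hq : g ∣ q2 g
  · have t1 := td_q1 (g := g) le_rfl
    have t0 := td_q0 (g := g) le_rfl
    have hq1 : g ∣ q1 g := tool2 _ (by omega) (fun l hl P hP => (dbl_q (hS l hl) hP hq).1)
    have hq0 : g ∣ q0 g := tool2 _ (by omega) (fun l hl P hP => (dbl_q (hS l hl) hP hq).2)
    obtain ⟨l, hl, P, hP, hne⟩ := pick 1 (by simp [td]) (fun h => hg.not_isUnit (isUnit_of_dvd_one h))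
    rw [mul_one] at hne
    have := flat_td hg hq hq1 hq0 (ev_of_inZ (hS l hl) hP.1) hne
    omega
  · have t2 := td_q2 (g := g) le_rfl
    obtain ⟨l, hl, P, ⟨hPl, k, hkl, hPk, hk⟩, hne⟩ := pick (q2 g) (by omega) hq
    rw [on_iff.1 hPl] at hne hPk
    have := ruled_td hg hr1 hr0 (hS l hl) hk hkl hPk hne
    omega

end HD

namespace HD
open MvPolynomial Polynomial

structure Fac (f : Pol) (Fs : Finset Pol) : Prop where
  prime : ∀ p ∈ Fs, Prime p
  dvd : ∀ p ∈ Fs, p ∣ f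
  ndvd : ∀ p ∈ Fs, ∀ q ∈ Fs, p ≠ q → ¬ p ∣ q
  line : ∀ l, inZ l f → ∃ p ∈ Fs, inZ l p
  deg : ∑ p ∈ Fs, td p ≤ td f

lemma exists_fac (f : Pol) (hf : f ≠ 0) : ∃ Fs, Fac f Fs := by
  classical
  induction f using UniqueFactorizationMonoid.induction_on_prime with
  | h₁ => exact absurd rfl hf
  | h₂ x hx =>
    refine ⟨∅, by simp, by simp, by simp, ?_, by simp⟩
    intro l hl
    have : IsUnit (res l x) := hx.map (res l)
    rw [show res l x = 0 from hl] at this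
    simp at this
  | h₃ a p ha hp ih =>
    obtain ⟨Fs, h⟩ := ih ha
    have hdeg : td (p * a) = td p + td a := MvPolynomial.totalDegree_mul_of_isDomain hp.ne_zero ha
    by_cases hq : ∃ q ∈ Fs, p ∣ q
    · obtain ⟨q, hq, hpq⟩ := hq
      refine ⟨Fs, h.prime, fun r hr => (h.dvd r hr).mul_left p, h.ndvd, ?_, by have := h.deg; omega⟩
      intro l hl
      rcases inZ_mul.1 hl with h1 | h1
      · exact ⟨q, hq, inZ_of_dvd hpq h1⟩
      · exact h.line l h1
    · push Not at hq
      have hpF : p ∉ Fs := fun hh => hq p hh dvd_rfl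
      refine ⟨insert p Fs, ?_, ?_, ?_, ?_, ?_⟩
      · intro r hr
        rcases Finset.mem_insert.1 hr with rfl | hr
        · exact hp
        · exact h.prime r hr
      · intro r hr
        rcases Finset.mem_insert.1 hr with rfl | hr
        · exact dvd_mul_right _ _
        · exact (h.dvd r hr).mul_left p
      · intro r hr s hs hrs
        rcases Finset.mem_insert.1 hr with rfl | hr2
        · rcases Finset.mem_insert.1 hs with rfl | hs
          · exact absurd rfl hrs
          · exact hq s hs
        · rcases Finset.mem_insert.1 hs with hs' | hs'
          · intro hd
            rw [hs'] at hd
            exact hq r hr2 (((h.prime r hr2).dvd_prime_iff_associated hp).1 hd).symm.dvd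
          · exact h.ndvd r hr2 s hs' hrs
      · intro l hl
        rcases inZ_mul.1 hl with h1 | h1
        · exact ⟨p, Finset.mem_insert_self _ _, h1⟩
        · obtain ⟨q, hq, hz⟩ := h.line l h1
          exact ⟨q, Finset.mem_insert_of_mem hq, hz⟩
      · rw [Finset.sum_insert hpF, hdeg]; have := h.deg; omega

lemma td_prod_le (s : Finset Pol) : td (∏ q ∈ s, q) ≤ ∑ q ∈ s, td q := MvPolynomial.totalDegree_finsetProd _ _

lemma inZ_prod {l : Ln} {s : Finset Pol} : inZ l (∏ q ∈ s, q) ↔ ∃ q ∈ s, inZ l q := by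
  simp [inZ, map_prod, Finset.prod_eq_zero_iff]

theorem SL {f : Pol} {Fs : Finset Pol} (hF : Fac f Fs) {d : ℕ} (hd : td f ≤ d) (S : Finset Ln)
    (hS : ∀ l ∈ S, inZ l f) (hS2 : ∀ l ∈ S, ∀ p ∈ Fs, td p ≤ 2 → ¬ inZ l p)
    (hD : ∀ l ∈ S, ∃ D : Finset Pt, 12 * d < D.card ∧ ∀ P ∈ D, dbl f l P) : S.card ≤ 72 * d ^ 2 := by
  classical
  have hdF : ∑ p ∈ Fs, td p ≤ d := hF.deg.trans hd
  set S1 := S.filter (fun l => ∃ p ∈ Fs, ∃ q ∈ Fs, p ≠ q ∧ inZ l p ∧ inZ l q) with hS1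
  let Sp : Pol → Finset Ln := fun p => S.filter (fun l => inZ l p ∧ ∀ q ∈ Fs, q ≠ p → ¬ inZ l q)
  have hcov : S ⊆ S1 ∪ Fs.biUnion Sp := by
    intro l hl
    by_cases h1 : l ∈ S1
    · exact Finset.mem_union_left _ h1
    apply Finset.mem_union_right
    obtain ⟨p, hp, hlp⟩ := hF.line l (hS l hl)
    refine Finset.mem_biUnion.2 ⟨p, hp, Finset.mem_filter.2 ⟨hl, hlp, fun q hq hqp hlq => h1 ?_⟩⟩
    exact Finset.mem_filter.2 ⟨hl, p, hp, q, hq, hqp.symm, hlp, hlq⟩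
  have c1 : S1.card ≤ 6 * d ^ 2 := by
    have : S1 ⊆ (Fs ×ˢ Fs).biUnion (fun pq => if pq.1 = pq.2 then ∅ else S.filter (fun l => inZ l pq.1 ∧ inZ l pq.2)) := by
      intro l hl
      obtain ⟨hl, p, hp, q, hq, hpq, h1, h2⟩ := Finset.mem_filter.1 hl
      refine Finset.mem_biUnion.2 ⟨(p, q), Finset.mem_product.2 ⟨hp, hq⟩, ?_⟩
      simp only [hpq, if_false]
      exact Finset.mem_filter.2 ⟨hl, h1, h2⟩
    refine (Finset.card_le_card this).trans (Finset.card_biUnion_le.trans ?_)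
    calc _ ≤ ∑ pq ∈ Fs ×ˢ Fs, 6 * (td pq.1 * td pq.2) := by
          refine Finset.sum_le_sum ?_
          rintro ⟨p, q⟩ hpq
          obtain ⟨hp, hq⟩ := Finset.mem_product.1 hpq
          simp only at hp hq ⊢
          split_ifs with h
          · simp
          · rw [← mul_assoc]
            exact bezout (hF.prime p hp) (hF.ndvd p hp q hq h) _ (fun l hl => (Finset.mem_filter.1 hl).2)
      _ = 6 * ((∑ p ∈ Fs, td p) * (∑ p ∈ Fs, td p)) := by
          rw [← Finset.mul_sum, Finset.sum_mul_sum, Finset.sum_product]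
      _ ≤ 6 * d ^ 2 := by rw [pow_two]; gcongr
  have c2 : ∀ p ∈ Fs, (Sp p).card ≤ 66 * td p ^ 2 := by
    intro p hp
    rcases (Sp p).eq_empty_or_nonempty with he | ⟨l0, hl0⟩
    · simp [he]
    have h3 : 3 ≤ td p := by
      by_contra hc
      obtain ⟨a1, a2⟩ := Finset.mem_filter.1 hl0
      exact hS2 l0 a1 p hp (by omega) a2.1
    refine ISL (hF.prime p hp) h3 (Sp p) (fun l hl => (Finset.mem_filter.1 hl).2.1) ?_
    intro l hl
    obtain ⟨hlS, hlp, hlq⟩ := Finset.mem_filter.1 hl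
    obtain ⟨D, hDc, hDd⟩ := hD l hlS
    refine ⟨D.filter (fun P => dbl p l P), ?_, fun P hP => (Finset.mem_filter.1 hP).2⟩
    have hsplit := Finset.card_filter_add_card_filter_not (s := D) (fun P => dbl p l P)
    have hq : (D.filter (fun P => ¬ dbl p l P)).card ≤ td (∏ q ∈ Fs.erase p, q) := by
      apply card_le_of_not_inZ (l := l)
      · rw [inZ_prod]; rintro ⟨q, hq, hz⟩
        exact hlq q (Finset.mem_of_mem_erase hq) (Finset.ne_of_mem_erase hq) hz
      · intro P hP
        obtain ⟨hP, hnd⟩ := Finset.mem_filter.1 hP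
        obtain ⟨hPl, m, hml, hPm, hm⟩ := hDd P hP
        refine ⟨hPl, ?_⟩
        obtain ⟨q, hq, hmq⟩ := hF.line m hm
        have : q ≠ p := by
          rintro rfl; exact hnd ⟨hPl, m, hml, hPm, hmq⟩
        exact ev_of_inZ (inZ_prod.2 ⟨q, Finset.mem_erase.2 ⟨this, hq⟩, hmq⟩) hPm
    have h4 := td_prod_le (Fs.erase p)
    have h5 := Finset.add_sum_erase Fs td hp
    omega
  have c3 : (Fs.biUnion Sp).card ≤ 66 * d ^ 2 := by
    refine Finset.card_biUnion_le.trans ((Finset.sum_le_sum c2).trans ?_)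
    rw [← Finset.mul_sum]
    have : ∑ p ∈ Fs, td p ^ 2 ≤ (∑ p ∈ Fs, td p) ^ 2 := Finset.sum_sq_le_sq_sum_of_nonneg (fun _ _ => Nat.zero_le _)
    have h2 : (∑ p ∈ Fs, td p) ^ 2 ≤ d ^ 2 := Nat.pow_le_pow_left hdF 2
    omega
  have := (Finset.card_le_card hcov).trans (Finset.card_union_le _ _)
  omega

end HD

namespace HD
open MvPolynomial Polynomial Filter Topology

def GG {n : ℕ} (v : Pt → Fin (n+1) → ℝ) (X : Fin n → Pt) (u : Fin (n+1) → ℝ) : ℝ :=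
  Matrix.det (Matrix.of (Fin.cons u (fun i => v (X i)) : Fin (n+1) → Fin (n+1) → ℝ))

lemma GG_swap {n : ℕ} (v : Pt → Fin (n+1) → ℝ) (X : Fin n → Pt) (i : Fin n) (x y : Pt) :
    GG v (Function.update X i x) (v y) = - GG v (Function.update X i y) (v x) := by
  unfold GG
  have h := (Matrix.detRowAlternating (R := ℝ) (n := Fin (n+1))).map_swap
    (Fin.cons (v x) (fun j => v (Function.update X i y j)) : Fin (n+1) → Fin (n+1) → ℝ)
    (i := 0) (j := i.succ) (Fin.succ_ne_zero i).symm
  have e : (Fin.cons (v x) (fun j => v (Function.update X i y j)) : Fin (n+1) → Fin (n+1) → ℝ) ∘ (Equiv.swap 0 i.succ)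
      = Fin.cons (v y) (fun j => v (Function.update X i x j)) := by
    funext k
    refine Fin.cases ?_ (fun j => ?_) k
    · simp
    · by_cases hj : j = i
      · subst hj; simp
      · have : (Equiv.swap 0 i.succ) j.succ = j.succ := by
          rw [Equiv.swap_apply_of_ne_of_ne (Fin.succ_ne_zero j) (fun h => hj (Fin.succ_injective _ h))]
        simp [this, hj]
  rw [e] at h
  exact h

lemma triple_sum (s : Finset Pt) (g : Pt → Pt → ℝ) (hg : ∀ x y, g x y = - g y x) :
    s.card ^ 3 ≤ 3 * ∑ x ∈ s, ∑ y ∈ s, ∑ z ∈ s, (if g x y * g x z ≤ 0 then 1 else 0) := by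
  set F : Pt → Pt → Pt → ℕ := fun x y z => if g x y * g x z ≤ 0 then 1 else 0 with hF
  have h1 : ∀ x y z, 1 ≤ F x y z + F y z x + F z x y := by
    intro x y z
    simp only [hF]
    by_contra hc
    have a1 : ¬ (g x y * g x z ≤ 0) := fun h => hc (by rw [if_pos h]; omega)
    have a2 : ¬ (g y z * g y x ≤ 0) := fun h => hc (by rw [if_pos h]; omega)
    have a3 : ¬ (g z x * g z y ≤ 0) := fun h => hc (by rw [if_pos h]; omega)
    push Not at a1 a2 a3
    rw [hg y x] at a2
    rw [hg z x, hg z y] at a3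
    nlinarith [mul_pos (mul_pos a1 a2) a3, sq_nonneg (g x y * g x z * g y z)]
  have e0 : ∀ F : Pt → Pt → Pt → ℕ, ∑ x ∈ s, ∑ y ∈ s, ∑ z ∈ s, F y z x = ∑ x ∈ s, ∑ y ∈ s, ∑ z ∈ s, F x y z := by
    intro F
    rw [Finset.sum_comm]
    refine Finset.sum_congr rfl (fun y _ => ?_)
    rw [Finset.sum_comm]
  have e1 := e0 F
  have e2 : ∑ x ∈ s, ∑ y ∈ s, ∑ z ∈ s, F z x y = ∑ x ∈ s, ∑ y ∈ s, ∑ z ∈ s, F x y z :=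
    (e0 (fun a b c => F b c a)).trans e1
  have e3 : s.card ^ 3 = ∑ x ∈ s, ∑ y ∈ s, ∑ z ∈ s, 1 := by simp; ring
  have : s.card ^ 3 ≤ ∑ x ∈ s, ∑ y ∈ s, ∑ z ∈ s, (F x y z + F y z x + F z x y) := by
    rw [e3]
    gcongr with x _ y _ z _
    exact h1 x y z
  simp only [Finset.sum_add_distrib] at this
  rw [e1, e2] at this
  change _ ≤ 3 * ∑ x ∈ s, ∑ y ∈ s, ∑ z ∈ s, F x y z
  omega

lemma sum_update {n : ℕ} (S : Fin n → Finset Pt) (i : Fin n) (Ψ : (Fin n → Pt) → ℕ) :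
    ∑ X ∈ Fintype.piFinset S, ∑ x ∈ S i, Ψ (Function.update X i x) = (S i).card * ∑ X ∈ Fintype.piFinset S, Ψ X := by
  classical
  have : (S i).card * ∑ X ∈ Fintype.piFinset S, Ψ X = ∑ X ∈ Fintype.piFinset S, ∑ x ∈ S i, Ψ X := by
    simp [Finset.mul_sum]
  rw [this, ← Finset.sum_product', ← Finset.sum_product']
  refine Finset.sum_nbij' (fun p => (Function.update p.1 i p.2, p.1 i)) (fun p => (Function.update p.1 i p.2, p.1 i)) ?_ ?_ ?_ ?_ ?_
  · rintro ⟨X, x⟩ h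
    simp only [Finset.mem_product, Fintype.mem_piFinset] at h ⊢
    refine ⟨fun j => ?_, h.1 i⟩
    by_cases hj : j = i
    · subst hj; simpa using h.2
    · simpa [hj] using h.1 j
  · rintro ⟨X, x⟩ h
    simp only [Finset.mem_product, Fintype.mem_piFinset] at h ⊢
    refine ⟨fun j => ?_, h.1 i⟩
    by_cases hj : j = i
    · subst hj; simpa using h.2
    · simpa [hj] using h.1 j
  · rintro ⟨X, x⟩ h; simp
  · rintro ⟨X, x⟩ h; simp
  · rintro ⟨X, x⟩ h; simp

lemma exists_X {n : ℕ} (S : Fin n → Finset Pt) (hne : ∀ i, (S i).Nonempty) (v : Pt → Fin (n+1) → ℝ) :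
    ∃ X ∈ Fintype.piFinset S, ∑ i, (S i).card ^ 2 ≤
      3 * ∑ i, ∑ y ∈ S i, ∑ z ∈ S i, (if GG v X (v y) * GG v X (v z) ≤ 0 then 1 else 0) := by
  classical
  apply Finset.exists_le_of_sum_le (Fintype.piFinset_nonempty.2 hne)
  rw [Finset.sum_comm, ← Finset.mul_sum, Finset.sum_comm (s := Fintype.piFinset S) (t := Finset.univ), Finset.mul_sum]
  refine Finset.sum_le_sum (fun i _ => ?_)
  have hpos : 0 < (S i).card := (hne i).card_pos
  refine Nat.le_of_mul_le_mul_left ?_ hpos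
  rw [mul_left_comm, ← sum_update S i (fun X => ∑ y ∈ S i, ∑ z ∈ S i, (if GG v X (v y) * GG v X (v z) ≤ 0 then 1 else 0)), Finset.mul_sum, Finset.mul_sum]
  refine Finset.sum_le_sum (fun X _ => ?_)
  have := triple_sum (S i) (fun x y => GG v (Function.update X i x) (v y)) (fun x y => GG_swap v X i x y)
  calc _ = (S i).card ^ 3 := by ring
    _ ≤ _ := this

lemma GG_lin {n : ℕ} (v : Pt → Fin (n+1) → ℝ) (X : Fin n → Pt) :
    ∃ a : Fin (n+1) → ℝ, ∀ u, GG v X u = ∑ j, a j * u j := by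
  refine ⟨fun j => Matrix.adjugate (Matrix.of (Fin.cons 0 (fun i => v (X i)) : Fin (n+1) → Fin (n+1) → ℝ)) j 0, fun u => ?_⟩
  unfold GG
  rw [Matrix.det_eq_sum_mul_adjugate_row _ 0]
  refine Finset.sum_congr rfl (fun j _ => ?_)
  rw [mul_comm]
  simp only [Matrix.of_apply, Fin.cons_zero]
  congr 1
  rw [Matrix.adjugate_apply, Matrix.adjugate_apply]
  congr 1
  ext a b
  refine Fin.cases ?_ (fun k => ?_) a
  · simp
  · simp [Matrix.updateRow_apply]

lemma finite_bad {n : ℕ} (W E : Matrix (Fin n) (Fin n) ℝ) (hW : W.det ≠ 0) :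
    {ε : ℝ | (ε • W + E).det = 0}.Finite := by
  generalize hQ : W⁻¹ * E = Q
  set p : ℝ[X] := Matrix.det ((Polynomial.X : ℝ[X]) • (1 : Matrix (Fin n) (Fin n) ℝ[X]) + Q.map Polynomial.C) with hp
  have hp0 : p ≠ 0 := by
    intro h
    have := Polynomial.leadingCoeff_det_X_one_add_C Q
    rw [← hp, h] at this
    simp at this
  refine (Polynomial.finite_setOfPred_isRoot hp0).subset ?_
  intro ε hε
  have h1 : ε • W + E = W * (ε • (1 : Matrix (Fin n) (Fin n) ℝ) + Q) := by
    rw [← hQ, mul_add, ← mul_assoc, Matrix.mul_nonsing_inv _ (isUnit_iff_ne_zero.2 hW)]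
    simp
  simp only [Set.mem_ofPred_eq] at hε
  rw [h1, Matrix.det_mul] at hε
  have h2 := (mul_eq_zero.1 hε).resolve_left hW
  show p.eval ε = 0
  rw [hp, ← Polynomial.coe_evalRingHom, RingHom.map_det, ← h2]
  congr 1
  ext i j
  simp [Matrix.one_apply, apply_ite]

end HD

namespace HD
open MvPolynomial Polynomial Filter Topology

def cnt {n : ℕ} (S : Fin n → Finset Pt) (g : Pt → ℝ) : ℕ :=
  ∑ i, ∑ y ∈ S i, ∑ z ∈ S i, (if g y * g z ≤ 0 then 1 else 0)

lemma cnt_mono {n : ℕ} (S : Fin n → Finset Pt) (g h : Pt → ℝ)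
    (H : ∀ i, ∀ y ∈ S i, ∀ z ∈ S i, g y * g z ≤ 0 → h y * h z ≤ 0) : cnt S g ≤ cnt S h := by
  unfold cnt
  gcongr with i _ y hy z hz
  split_ifs with h1 h2
  · simp
  · exact absurd (H i y hy z hz h1) h2
  · simp
  · simp

lemma pert {n : ℕ} (S : Fin n → Finset Pt) (hne : ∀ i, (S i).Nonempty)
    (hdis : ∀ i j, i ≠ j → ∀ x ∈ S i, x ∉ S j) (e : Pt → Fin (n+1) → ℝ) :
    ∃ w : Pt → Fin (n+1) → ℝ, ∀ δ > 0, ∃ ε, 0 < ε ∧ ε < δ ∧ ∃ a : Fin (n+1) → ℝ, a ≠ 0 ∧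
      ∑ i, (S i).card ^ 2 ≤ 3 * cnt S (fun y => ∑ j, a j * (e y j + ε * w y j)) := by
  classical
  set T := Finset.univ.biUnion S with hT
  set φ : Pt → ℝ := fun x => (T.toList.idxOf x : ℝ) with hφ
  have hinj : ∀ x ∈ T, ∀ y ∈ T, φ x = φ y → x = y := by
    intro x hx y hy h
    simp only [hφ, Nat.cast_inj] at h
    exact (List.idxOf_inj (Finset.mem_toList.2 hx)).1 h
  let w : Pt → Fin (n+1) → ℝ := fun x j => φ x ^ (j : ℕ)
  refine ⟨w, fun δ hδ => ?_⟩
  let Wm : (Fin n → Pt) → Matrix (Fin (n+1)) (Fin (n+1)) ℝ := fun X => Matrix.vandermonde (Fin.cons (-1) (fun i => φ (X i)))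
  let Em : (Fin n → Pt) → Matrix (Fin (n+1)) (Fin (n+1)) ℝ := fun X => Matrix.of (Fin.cons 0 (fun i => e (X i)))
  have hW : ∀ X ∈ Fintype.piFinset S, (Wm X).det ≠ 0 := by
    intro X hX
    rw [Matrix.det_vandermonde_ne_zero_iff]
    have hX' := Fintype.mem_piFinset.1 hX
    rw [Fin.cons_injective_iff]
    constructor
    · rintro ⟨i, hi⟩
      have : (0:ℝ) ≤ φ (X i) := by simp [hφ]
      simp only at hi
      linarith
    · intro i j hij
      by_contra hne
      have hi : X i ∈ T := Finset.mem_biUnion.2 ⟨i, Finset.mem_univ _, hX' i⟩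
      have hj : X j ∈ T := Finset.mem_biUnion.2 ⟨j, Finset.mem_univ _, hX' j⟩
      have := hinj _ hi _ hj hij
      exact hdis i j hne _ (hX' i) (this ▸ hX' j)
  have hfin : (⋃ X ∈ (Fintype.piFinset S : Finset (Fin n → Pt)), {ε : ℝ | (ε • Wm X + Em X).det = 0}).Finite := by
    refine Set.Finite.biUnion (Finset.finite_toSet _) (fun X hX => finite_bad _ _ (hW X hX))
  obtain ⟨ε, ⟨h0, h1⟩, hε⟩ := (Set.Ioo_infinite hδ).exists_notMem_finite hfin
  refine ⟨ε, h0, h1, ?_⟩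
  set v : Pt → Fin (n+1) → ℝ := fun y j => e y j + ε * w y j with hv
  obtain ⟨X, hX, hle⟩ := exists_X S hne v
  obtain ⟨a, ha⟩ := GG_lin v X
  refine ⟨a, ?_, ?_⟩
  · rintro rfl
    apply hε
    refine Set.mem_biUnion hX ?_
    show (ε • Wm X + Em X).det = 0
    have : ε • Wm X + Em X = Matrix.of (Fin.cons (fun j => ε * (-1) ^ (j : ℕ)) (fun i => v (X i)) : Fin (n+1) → Fin (n+1) → ℝ) := by
      ext i j
      refine Fin.cases ?_ (fun k => ?_) i
      · simp [Wm, Em, Matrix.vandermonde]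
      · simp [Wm, Em, Matrix.vandermonde, hv, w]; ring
    rw [this]
    change GG v X _ = 0
    rw [ha]; simp
  · unfold cnt
    simp only [ha] at hle
    exact hle

lemma weakHS {n : ℕ} (S : Fin n → Finset Pt) (hne : ∀ i, (S i).Nonempty)
    (hdis : ∀ i j, i ≠ j → ∀ x ∈ S i, x ∉ S j) (e : Pt → Fin (n+1) → ℝ) :
    ∃ a : Fin (n+1) → ℝ, a ≠ 0 ∧ ∑ i, (S i).card ^ 2 ≤ 3 * cnt S (fun y => ∑ j, a j * e y j) := by
  obtain ⟨w, hw⟩ := pert S hne hdis e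
  have hw' : ∀ k : ℕ, ∃ ε, 0 < ε ∧ ε < 1 / ((k:ℝ) + 1) ∧ ∃ a : Fin (n+1) → ℝ, ‖a‖ = 1 ∧
      ∑ i, (S i).card ^ 2 ≤ 3 * cnt S (fun y => ∑ j, a j * (e y j + ε * w y j)) := by
    intro k
    obtain ⟨ε, h0, h1, a, ha, hle⟩ := hw (1 / ((k:ℝ) + 1)) (by positivity)
    refine ⟨ε, h0, h1, ‖a‖⁻¹ • a, ?_, hle.trans ?_⟩
    · rw [norm_smul, norm_inv, norm_norm, inv_mul_cancel₀ (norm_ne_zero_iff.2 ha)]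
    · gcongr
      apply cnt_mono
      intro i y _ z _ h
      have hp : 0 < ‖a‖⁻¹ := by positivity
      simp only [Pi.smul_apply, smul_eq_mul, mul_assoc, ← Finset.mul_sum]
      have : ‖a‖⁻¹ * (‖a‖⁻¹ * ((∑ j, a j * (e y j + ε * w y j)) * (∑ j, a j * (e z j + ε * w z j)))) ≤ 0 :=
        mul_nonpos_of_nonneg_of_nonpos hp.le (mul_nonpos_of_nonneg_of_nonpos hp.le h)
      linarith
  choose ε h0 h1 a ha hle using hw'
  obtain ⟨b, hb, φ, hφ, hlim⟩ := (isCompact_sphere (0 : Fin (n+1) → ℝ) 1).tendsto_subseq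
    (x := a) (fun k => by simp [ha k])
  refine ⟨b, ?_, ?_⟩
  · rintro rfl; simp at hb
  have hε : Tendsto ε atTop (𝓝 0) :=
    squeeze_zero (fun k => (h0 k).le) (fun k => (h1 k).le) tendsto_one_div_add_atTop_nhds_zero_nat
  have hε' : Tendsto (fun k => ε (φ k)) atTop (𝓝 0) := hε.comp hφ.tendsto_atTop
  have hg : ∀ y, Tendsto (fun k => ∑ j, a (φ k) j * (e y j + ε (φ k) * w y j)) atTop (𝓝 (∑ j, b j * e y j)) := by
    intro y
    refine tendsto_finsetSum _ (fun j _ => ?_)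
    have hj : Tendsto (fun k => a (φ k) j) atTop (𝓝 (b j)) := ((continuous_apply j).tendsto b).comp hlim
    have := hj.mul ((tendsto_const_nhds (x := e y j)).add (hε'.mul (tendsto_const_nhds (x := w y j))))
    simpa using this
  have hev : ∀ᶠ k in atTop, ∀ i ∈ (Finset.univ : Finset (Fin n)), ∀ y ∈ S i, ∀ z ∈ S i,
      (∑ j, a (φ k) j * (e y j + ε (φ k) * w y j)) * (∑ j, a (φ k) j * (e z j + ε (φ k) * w z j)) ≤ 0 →
      (∑ j, b j * e y j) * (∑ j, b j * e z j) ≤ 0 := by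
    rw [Finset.eventually_all]; intro i _
    rw [Finset.eventually_all]; intro y _
    rw [Finset.eventually_all]; intro z _
    by_cases h : (∑ j, b j * e y j) * (∑ j, b j * e z j) ≤ 0
    · exact Eventually.of_forall (fun _ _ => h)
    · push Not at h
      filter_upwards [((hg y).mul (hg z)).eventually (lt_mem_nhds h)] with k hk hk'
      linarith
  obtain ⟨k, hk⟩ := hev.exists
  refine (hle (φ k)).trans ?_
  gcongr
  exact cnt_mono _ _ _ (fun i y hy z hz => hk i (Finset.mem_univ _) y hy z hz)

lemma weakHSpoly {n : ℕ} (S : Fin n → Finset Pt) (hne : ∀ i, (S i).Nonempty)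
    (hdis : ∀ i j, i ≠ j → ∀ x ∈ S i, x ∉ S j) (r : ℕ) (hr : n < (r+1)^3) :
    ∃ h : Pol, h ≠ 0 ∧ td h ≤ 3 * r ∧ ∑ i, (S i).card ^ 2 ≤ 3 * cnt S (fun y => ev y h) := by
  have hfr : n + 1 ≤ Module.finrank ℝ (bx (fun _ => r)) := by
    rw [finrank_bx]; nlinarith
  set B := Module.finBasis ℝ (bx (fun _ => r))
  set b : Fin (n+1) → Pol := fun j => (B (Fin.castLE hfr j) : Pol) with hb
  have hlin : LinearIndependent ℝ b := by
    have := (B.linearIndependent.comp (Fin.castLE hfr) (Fin.castLE_injective hfr))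
    exact this.map' (bx (fun _ => r)).subtype (Submodule.ker_subtype _)
  obtain ⟨a, ha, hle⟩ := weakHS S hne hdis (fun y j => ev y (b j))
  have hmem : (∑ j, a j • b j) ∈ bx (fun _ => r) :=
    Submodule.sum_mem _ (fun j _ => Submodule.smul_mem _ _ (B (Fin.castLE hfr j)).2)
  refine ⟨∑ j, a j • b j, ?_, ?_, ?_⟩
  · intro h0
    exact ha (funext (Fintype.linearIndependent_iff.1 hlin a h0))
  · have := td_bx hmem; omega
  · simpa [map_sum, MvPolynomial.smul_eval] using hle
end HD

namespace HD
open MvPolynomial Polynomial Filter Topology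

def sim (H : List Pol) (x y : Pt) : Prop := ∀ h ∈ H, 0 < ev x h * ev y h

lemma sim.symm {H : List Pol} {x y : Pt} (h : sim H x y) : sim H y x := fun p hp => by
  rw [mul_comm]; exact h p hp

lemma sim.trans {H : List Pol} {x y z : Pt} (h : sim H x y) (h' : sim H y z) : sim H x z := fun p hp => by
  have a := h p hp
  have b := h' p hp
  by_contra hc
  push Not at hc
  nlinarith [mul_pos a b, sq_nonneg (ev y p), mul_nonneg (sq_nonneg (ev y p)) (neg_nonneg.2 hc)]

open Classical in
def cell (H : List Pol) (T : Finset Pt) (x : Pt) : Finset Pt := T.filter (fun y => sim H x y)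

lemma mem_cell {H : List Pol} {T : Finset Pt} {x y : Pt} : y ∈ cell H T x ↔ y ∈ T ∧ sim H x y := by
  simp [cell]

lemma cell_eq {H : List Pol} {T : Finset Pt} {x y : Pt} (h : sim H x y) : cell H T x = cell H T y := by
  ext z
  simp only [mem_cell]
  exact and_congr_right (fun _ => ⟨fun hz => h.symm.trans hz, fun hz => h.trans hz⟩)

def psi (H : List Pol) (T : Finset Pt) : ℕ := ∑ x ∈ T, (cell H T x).card

lemma sim_self_left {H : List Pol} {x y : Pt} (h : sim H x y) : sim H x x := h.trans h.symm

lemma mem_cell_self {H : List Pol} {T : Finset Pt} {x : Pt} (hx : x ∈ T) (h : (cell H T x).Nonempty) : x ∈ cell H T x := by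
  obtain ⟨y, hy⟩ := h
  exact mem_cell.2 ⟨hx, sim_self_left (mem_cell.1 hy).2⟩

lemma round (H : List Pol) (T : Finset Pt) (m : ℝ) (hm : 0 ≤ m) (r : ℕ)
    (hr : ∀ n : ℕ, n * m ≤ T.card → n < (r+1)^3) :
    ∃ h : Pol, h ≠ 0 ∧ td h ≤ 3 * r ∧ 3 * (psi (h :: H) T : ℝ) ≤ 2 * psi H T + T.card * m := by
  classical
  set B := T.filter (fun x => m < (cell H T x).card) with hB
  set K := B.image (cell H T) with hK
  set S : Fin K.card → Finset Pt := fun i => (K.equivFin.symm i : Finset Pt) with hS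
  have hSK : ∀ i, S i ∈ K := fun i => (K.equivFin.symm i).2
  have hKx : ∀ c ∈ K, ∃ x, x ∈ T ∧ m < (cell H T x).card ∧ c = cell H T x ∧ x ∈ c := by
    intro c hc
    obtain ⟨x, hx, rfl⟩ := Finset.mem_image.1 hc
    obtain ⟨hx1, hx2⟩ := Finset.mem_filter.1 hx
    refine ⟨x, hx1, hx2, rfl, mem_cell_self hx1 ?_⟩
    rw [← Finset.card_pos]
    exact_mod_cast lt_of_le_of_lt hm hx2
  have hdisK : ∀ c ∈ K, ∀ c' ∈ K, c ≠ c' → ∀ x ∈ c, x ∉ c' := by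
    intro c hc c' hc' hne x hx hx'
    obtain ⟨y, hy, -, rfl, -⟩ := hKx c hc
    obtain ⟨y', hy', -, rfl, -⟩ := hKx c' hc'
    exact hne (cell_eq ((mem_cell.1 hx).2.trans (mem_cell.1 hx').2.symm))
  have hsumK : ∀ F : Finset Pt → ℕ, ∑ i, F (S i) = ∑ c ∈ K, F c := by
    intro F
    rw [← Finset.sum_coe_sort K]
    exact Fintype.sum_equiv K.equivFin.symm _ _ (fun i => rfl)
  have hBU : K.biUnion id = B := by
    ext x
    simp only [Finset.mem_biUnion, id]
    constructor
    · rintro ⟨c, hc, hx⟩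
      obtain ⟨y, hy, hy2, rfl, -⟩ := hKx c hc
      refine Finset.mem_filter.2 ⟨(mem_cell.1 hx).1, ?_⟩
      rwa [← cell_eq (mem_cell.1 hx).2]
    · intro hx
      refine ⟨cell H T x, Finset.mem_image_of_mem _ hx, ?_⟩
      have hx' := Finset.mem_filter.1 hx
      refine mem_cell_self hx'.1 ?_
      rw [← Finset.card_pos]
      exact_mod_cast lt_of_le_of_lt hm hx'.2
  have hpd : (K : Set (Finset Pt)).PairwiseDisjoint id := by
    intro c hc c' hc' hne
    rw [Function.onFun, Finset.disjoint_left]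
    exact hdisK c hc c' hc' hne
  have hsumB : ∀ F : Pt → ℕ, ∑ x ∈ B, F x = ∑ c ∈ K, ∑ x ∈ c, F x := by
    intro F
    rw [← hBU, Finset.sum_biUnion hpd]; rfl
  have hcellc : ∀ c ∈ K, ∀ x ∈ c, cell H T x = c := by
    intro c hc x hx
    obtain ⟨y, hy, hy2, rfl, -⟩ := hKx c hc
    exact (cell_eq (mem_cell.1 hx).2).symm
  have hn : K.card < (r+1)^3 := by
    apply hr
    have h1 : (B.card : ℝ) = ∑ c ∈ K, (c.card : ℝ) := by
      rw [← hBU, Finset.card_biUnion (fun c hc c' hc' hne => hpd hc hc' hne)]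
      push_cast; rfl
    have h2 : (B.card : ℝ) ≤ T.card := by exact_mod_cast Finset.card_le_card (Finset.filter_subset _ _)
    have h3 : ∑ c ∈ K, m ≤ ∑ c ∈ K, (c.card : ℝ) := by
      refine Finset.sum_le_sum (fun c hc => ?_)
      obtain ⟨y, hy, hy2, rfl, -⟩ := hKx c hc
      exact hy2.le
    simp at h3
    linarith
  obtain ⟨h, h0, h1, h2⟩ := weakHSpoly S (fun i => by
      obtain ⟨x, -, -, -, hx⟩ := hKx _ (hSK i); exact ⟨x, hx⟩)
    (fun i j hij => hdisK _ (hSK i) _ (hSK j) (fun hh => hij (K.equivFin.symm.injective (Subtype.ext hh)))) r hn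
  refine ⟨h, h0, h1, ?_⟩
  unfold cnt at h2
  rw [hsumK (fun c => c.card ^ 2), hsumK (fun c => ∑ y ∈ c, ∑ z ∈ c, (if ev y h * ev z h ≤ 0 then 1 else 0))] at h2
  -- rewrite over B
  have e1 : ∑ c ∈ K, c.card ^ 2 = ∑ x ∈ B, (cell H T x).card := by
    rw [hsumB]
    refine Finset.sum_congr rfl (fun c hc => ?_)
    rw [Finset.sum_congr rfl (fun x hx => by rw [hcellc c hc x hx])]
    simp [sq]
  have e2 : ∑ c ∈ K, ∑ y ∈ c, ∑ z ∈ c, (if ev y h * ev z h ≤ 0 then 1 else 0)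
      = ∑ x ∈ B, ∑ z ∈ cell H T x, (if ev x h * ev z h ≤ 0 then 1 else 0) := by
    rw [hsumB]
    refine Finset.sum_congr rfl (fun c hc => Finset.sum_congr rfl (fun x hx => by rw [hcellc c hc x hx]))
  rw [e1, e2] at h2
  have e3 : ∀ x, (cell (h :: H) T x).card + ∑ z ∈ cell H T x, (if ev x h * ev z h ≤ 0 then 1 else 0) = (cell H T x).card := by
    intro x
    rw [← Finset.card_filter, ← Finset.card_filter_add_card_filter_not (s := cell H T x) (fun z => ev x h * ev z h ≤ 0), add_comm]
    congr 2
    ext z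
    simp only [mem_cell, Finset.mem_filter, sim, List.mem_cons, forall_eq_or_imp, not_le]
    tauto
  have e4 : psi (h :: H) T + ∑ x ∈ T, ∑ z ∈ cell H T x, (if ev x h * ev z h ≤ 0 then 1 else 0) = psi H T := by
    unfold psi
    rw [← Finset.sum_add_distrib]
    exact Finset.sum_congr rfl (fun x _ => e3 x)
  have e5 : ∑ x ∈ B, ∑ z ∈ cell H T x, (if ev x h * ev z h ≤ 0 then 1 else 0) ≤
      ∑ x ∈ T, ∑ z ∈ cell H T x, (if ev x h * ev z h ≤ 0 then 1 else 0) :=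
    Finset.sum_le_sum_of_subset (Finset.filter_subset _ _)
  have e6 : (psi H T : ℝ) ≤ ((∑ x ∈ B, (cell H T x).card : ℕ) : ℝ) + T.card * m := by
    unfold psi
    rw [← Finset.sum_filter_add_sum_filter_not T (fun x => m < (cell H T x).card)]
    push_cast
    gcongr
    calc _ ≤ ∑ x ∈ T.filter (fun x => ¬ m < (cell H T x).card), m := by
          refine Finset.sum_le_sum (fun x hx => ?_)
          exact not_lt.1 (Finset.mem_filter.1 hx).2
      _ ≤ _ := by
          simp only [Finset.sum_const, nsmul_eq_mul]
          gcongr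
          exact Finset.filter_subset _ _
  have h2' : ((∑ x ∈ B, (cell H T x).card : ℕ) : ℝ) ≤ 3 * ((∑ x ∈ T, ∑ z ∈ cell H T x, (if ev x h * ev z h ≤ 0 then 1 else 0) : ℕ) : ℝ) := by
    exact_mod_cast h2.trans (Nat.mul_le_mul_left 3 e5)
  have e4' : (psi (h :: H) T : ℝ) + ((∑ x ∈ T, ∑ z ∈ cell H T x, (if ev x h * ev z h ≤ 0 then 1 else 0) : ℕ) : ℝ) = psi H T := by
    exact_mod_cast e4
  linarith

def tdl (H : List Pol) : ℕ := (H.map td).sum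

lemma part_iter (T : Finset Pt) (r : ℕ) : ∃ H : List Pol, (∀ h ∈ H, h ≠ 0) ∧
    (tdl H : ℝ) ≤ 70 * (53/50) ^ r ∧ (psi H T : ℝ) * ((53/50)^r)^3 ≤ (T.card : ℝ)^2 := by
  induction r with
  | zero =>
    refine ⟨[], by simp, by simp [tdl], ?_⟩
    simp [psi, cell, sim, sq]
  | succ r ih =>
    obtain ⟨H, h0, h1, h2⟩ := ih
    set ρ : ℝ := (53/50)^r with hρ
    have hρ1 : 1 ≤ ρ := one_le_pow₀ (by norm_num)
    have hs : ((53:ℝ)/50)^(r+1) = ρ * (53/50) := pow_succ _ _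
    rw [hs]
    by_cases hc : (psi H T : ℝ) * (ρ * (53/50))^3 ≤ (T.card : ℝ)^2
    · exact ⟨H, h0, by nlinarith, hc⟩
    push Not at hc
    have hψ : (0:ℝ) < psi H T := by
      by_contra hh
      have : (psi H T : ℝ) = 0 := le_antisymm (not_lt.1 hh) (by positivity)
      rw [this] at hc
      nlinarith [sq_nonneg (T.card : ℝ)]
    have hM : (0:ℝ) < T.card := by
      have : T.Nonempty := by
        by_contra hh
        rw [Finset.not_nonempty_iff_eq_empty] at hh
        rw [hh] at hψ; simp [psi] at hψ
      exact_mod_cast this.card_pos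
    obtain ⟨e, he1, he2⟩ : ∃ e : ℕ, (e:ℝ) ≤ 67/50 * ρ ∧ 67/50 * ρ < e + 1 :=
      ⟨⌊67/50 * ρ⌋₊, Nat.floor_le (by positivity), Nat.lt_floor_add_one _⟩
    obtain ⟨h, hh0, hh1, hh2⟩ := round H T (psi H T / (2 * T.card)) (by positivity) e (by
      intro n hn
      have a1 : (n:ℝ) * psi H T ≤ 2 * (T.card : ℝ)^2 := by
        rw [mul_div_assoc', div_le_iff₀ (by positivity)] at hn
        nlinarith
      have a2 : (n:ℝ) * psi H T < 2 * (ρ * (53/50))^3 * psi H T := by nlinarith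
      have a3 : (n:ℝ) < 2 * (ρ * (53/50))^3 := lt_of_mul_lt_mul_right a2 hψ.le
      have a4 : 2 * (ρ * (53/50))^3 ≤ ((e:ℝ)+1)^3 := by
        calc 2 * (ρ * (53/50))^3 ≤ (67/50*ρ)^3 := by
              have : (0:ℝ) < ρ^3 := by positivity
              rw [mul_pow, mul_pow]; nlinarith
          _ ≤ _ := by gcongr
      exact_mod_cast a3.trans_le a4)
    refine ⟨h :: H, ?_, ?_, ?_⟩
    · intro p hp
      rcases List.mem_cons.1 hp with rfl | hp
      · exact hh0
      · exact h0 p hp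
    · have b1 : tdl (h :: H) = td h + tdl H := by simp [tdl]
      have b2 : (td h : ℝ) ≤ 3 * e := by exact_mod_cast hh1
      rw [b1]; push_cast; nlinarith
    · have c1 : 3 * (psi (h :: H) T : ℝ) ≤ 5/2 * psi H T := by
        have : (T.card : ℝ) * (psi H T / (2 * T.card)) = psi H T / 2 := by field_simp
        rw [this] at hh2; linarith
      have : (0:ℝ) < ρ^3 := by positivity
      calc (psi (h :: H) T : ℝ) * (ρ * (53/50))^3 ≤ (5/6 * psi H T) * (ρ * (53/50))^3 := by gcongr; linarith
        _ ≤ psi H T * ρ^3 := by rw [mul_pow]; nlinarith [mul_pos hψ this]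
        _ ≤ _ := h2

theorem partition (T : Finset Pt) (D : ℝ) (hD : 1 ≤ D) : ∃ H : List Pol, (∀ h ∈ H, h ≠ 0) ∧
    (tdl H : ℝ) ≤ 75 * D ∧ (psi H T : ℝ) * D ^ 3 ≤ (T.card : ℝ)^2 := by
  obtain ⟨r, hr1, hr2⟩ := exists_nat_pow_near hD (y := 53/50) (by norm_num)
  obtain ⟨H, h0, h1, h2⟩ := part_iter T (r+1)
  refine ⟨H, h0, ?_, ?_⟩
  · rw [pow_succ] at h1; linarith
  · refine le_trans ?_ h2
    gcongr
end HD

namespace HD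
open MvPolynomial Polynomial Filter Topology

lemma card_image_factor {α β γ : Type*} [DecidableEq β] [DecidableEq γ] (T : Finset α) (F : α → β) (g : α → γ)
    (h : ∀ x ∈ T, ∀ y ∈ T, g x = g y → F x = F y) : (T.image F).card ≤ (T.image g).card := by
  classical
  refine Finset.card_le_card_of_forall_subsingleton (fun b c => ∃ x ∈ T, F x = b ∧ g x = c) ?_ ?_
  · intro b hb
    obtain ⟨x, hx, rfl⟩ := Finset.mem_image.1 hb
    exact ⟨g x, Finset.mem_image_of_mem _ hx, x, hx, rfl, rfl⟩
  · rintro c hc b ⟨hb, x, hx, rfl, hxc⟩ b' ⟨hb', y, hy, rfl, hyc⟩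
    exact h x hx y hy (hxc.trans hyc.symm)

lemma td_list_prod (H : List Pol) : td H.prod ≤ tdl H := by
  induction H with
  | nil => simp [tdl]
  | cons h H ih => 
    have e : tdl (h :: H) = td h + tdl H := by simp [tdl]
    rw [List.prod_cons, e]
    exact td_mul.trans (by omega)

lemma sim_self_iff {H : List Pol} {x : Pt} : sim H x x ↔ ev x H.prod ≠ 0 := by
  induction H with
  | nil => simp [sim]
  | cons h H ih =>
    have : sim (h :: H) x x ↔ ev x h ≠ 0 ∧ sim H x x := by
      simp [sim, List.mem_cons, mul_self_pos]
    rw [this, ih, List.prod_cons]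
    simp

lemma sep_root {H : List Pol} {l : Ln} {x y : Pt} (hxl : on x l) (hyl : on y l) (hx : sim H x x) (hy : sim H y y)
    (hlt : x 2 < y 2) (hn : ¬ sim H x y) : ∃ s, x 2 ≤ s ∧ s < y 2 ∧ (res l H.prod).eval s = 0 := by
  unfold sim at hn
  push Not at hn
  obtain ⟨h, hh, hle⟩ := hn
  have ex : ev x h = (res l h).eval (x 2) := by rw [eval_res, ← on_iff.1 hxl]
  have ey : ev y h = (res l h).eval (y 2) := by rw [eval_res, ← on_iff.1 hyl]
  have hy0 : ev y h ≠ 0 := fun h0 => by have := hy h hh; rw [h0] at this; simp at this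
  have hx0 : ev x h ≠ 0 := fun h0 => by have := hx h hh; rw [h0] at this; simp at this
  have hcont : ContinuousOn (fun t => (res l h).eval t) (Set.uIcc (x 2) (y 2)) := (Polynomial.continuous _).continuousOn
  have h0 : (0:ℝ) ∈ Set.uIcc ((res l h).eval (x 2)) ((res l h).eval (y 2)) := by
    rw [← ex, ← ey, Set.mem_uIcc]
    rcases lt_or_gt_of_ne hx0 with a | a
    · left; exact ⟨a.le, by by_contra hc; push Not at hc; nlinarith [mul_pos_of_neg_of_neg a hc]⟩
    · right; exact ⟨by by_contra hc; push Not at hc; nlinarith [mul_pos a hc], a.le⟩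
  obtain ⟨s, hs, hs0⟩ := intermediate_value_uIcc hcont h0
  rw [Set.uIcc_of_le hlt.le] at hs
  refine ⟨s, hs.1, lt_of_le_of_ne hs.2 ?_, ?_⟩
  · rintro rfl
    exact hy0 (ey.trans hs0)
  · have hd : h ∣ H.prod := List.dvd_prod hh
    obtain ⟨q, hq⟩ := hd
    have : res l h ∣ res l H.prod := ⟨res l q, by rw [hq, map_mul]⟩
    exact Polynomial.eval_eq_zero_of_dvd_of_eval_eq_zero this hs0

open Classical in
lemma cross {H : List Pol} {l : Ln} {S : Finset Pt} (T : Finset Pt) (hS : ∀ x ∈ S, on x l ∧ sim H x x)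
    : (S.image (cell H T)).card ≤ tdl H + 1 := by
  rcases S.eq_empty_or_nonempty with rfl | ⟨x0, hx0⟩
  · simp
  set f := res l H.prod with hf
  have hf0 : f ≠ 0 := by
    intro h
    exact sim_self_iff.1 (hS x0 hx0).2 (ev_of_inZ h (hS x0 hx0).1)
  set R := f.roots.toFinset with hR
  have hRc : R.card ≤ tdl H := by
    calc R.card ≤ Multiset.card f.roots := Multiset.toFinset_card_le _
      _ ≤ f.natDegree := Polynomial.card_roots' _
      _ ≤ td H.prod := natDegree_res _ _
      _ ≤ _ := td_list_prod H
  have key : ∀ x ∈ S, ∀ y ∈ S, x 2 < y 2 → (R.filter (· < x 2)).card = (R.filter (· < y 2)).card → sim H x y := by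
    intro x hx y hy hlt he
    by_contra hn
    obtain ⟨s, h1, h2, h3⟩ := sep_root (hS x hx).1 (hS y hy).1 (hS x hx).2 (hS y hy).2 hlt hn
    have hsR : s ∈ R := by rw [hR, Multiset.mem_toFinset, Polynomial.mem_roots hf0]; exact h3
    have : R.filter (· < x 2) ⊂ R.filter (· < y 2) := by
      rw [Finset.ssubset_iff_of_subset]
      · exact ⟨s, Finset.mem_filter.2 ⟨hsR, h2⟩, fun hh => absurd (Finset.mem_filter.1 hh).2 (not_lt.2 h1)⟩
      · intro z hz
        have := Finset.mem_filter.1 hz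
        exact Finset.mem_filter.2 ⟨this.1, this.2.trans hlt⟩
    have := Finset.card_lt_card this
    omega
  refine (card_image_factor S (cell H T) (fun x => (R.filter (· < x 2)).card) ?_).trans ?_
  · intro x hx y hy he
    apply cell_eq
    rcases lt_trichotomy (x 2) (y 2) with h | h | h
    · exact key x hx y hy h he
    · have : x = y := by rw [on_iff.1 (hS x hx).1, on_iff.1 (hS y hy).1, h]
      rw [← this]; exact (hS x hx).2
    · exact (key y hy x hx h he.symm).symm
  · calc _ ≤ (Finset.range (tdl H + 1)).card := by
          refine Finset.card_le_card (fun m hm => ?_)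
          obtain ⟨x, hx, rfl⟩ := Finset.mem_image.1 hm
          have : (R.filter (· < x 2)).card ≤ R.card := Finset.card_filter_le _ _
          rw [Finset.mem_range]; omega
      _ = _ := Finset.card_range _

open Classical in
/-- lines of `L` through `x` -/
def thr (L : Finset Ln) (x : Pt) : Finset Ln := L.filter (fun l => on x l)

lemma mem_thr {L : Finset Ln} {x : Pt} {l : Ln} : l ∈ thr L x ↔ l ∈ L ∧ on x l := by simp [thr]

lemma thr_inter {L : Finset Ln} {x y : Pt} (h : x ≠ y) : ((thr L x) ∩ (thr L y)).card ≤ 1 := by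
  rw [Finset.card_le_one]
  intro a ha b hb
  simp only [Finset.mem_inter, mem_thr] at ha hb
  exact ln_eq_of_two h ha.1.2 hb.1.2 ha.2.2 hb.2.2

lemma cell_lines (L : Finset Ln) (k : ℕ) (c : Finset Pt) (hk : ∀ x ∈ c, k ≤ (thr L x).card) (hc : 2 * c.card ≤ k) :
    c.card * k ≤ 2 * (c.biUnion (thr L)).card := by
  classical
  induction c using Finset.induction_on with
  | empty => simp
  | insert x c hx ih =>
    rw [Finset.card_insert_of_notMem hx] at hc ⊢
    have ih' := ih (fun y hy => hk y (Finset.mem_insert_of_mem hy)) (by omega)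
    rw [Finset.biUnion_insert]
    have h1 := Finset.card_union_add_card_inter (thr L x) (c.biUnion (thr L))
    have h2 : (thr L x ∩ c.biUnion (thr L)).card ≤ c.card := by
      rw [Finset.inter_biUnion]
      refine Finset.card_biUnion_le.trans ?_
      calc _ ≤ ∑ y ∈ c, 1 := Finset.sum_le_sum (fun y hy => thr_inter (x := x) (y := y) (by rintro rfl; exact hx hy))
        _ = _ := by simp
    have h3 := hk x (Finset.mem_insert_self _ _)
    have : (c.card + 1) * k = c.card * k + k := by ring
    omega

lemma small_cells (L : Finset Ln) (T : Finset Pt) (H : List Pol) (k : ℕ) (hk : ∀ x ∈ T, k ≤ (thr L x).card)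
    (T' : Finset Pt) (hT' : ∀ x ∈ T', x ∈ T ∧ sim H x x ∧ 2 * (cell H T x).card ≤ k) :
    T'.card * k ≤ 2 * (L.card * (tdl H + 1)) := by
  classical
  set K := T'.image (cell H T) with hK
  have hcov : T' ⊆ K.biUnion id := by
    intro x hx
    refine Finset.mem_biUnion.2 ⟨cell H T x, Finset.mem_image_of_mem _ hx, mem_cell.2 ⟨(hT' x hx).1, (hT' x hx).2.1⟩⟩
  have h1 : T'.card ≤ ∑ c ∈ K, c.card := (Finset.card_le_card hcov).trans Finset.card_biUnion_le
  have h2 : ∀ c ∈ K, c.card * k ≤ 2 * (c.biUnion (thr L)).card := by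
    intro c hc
    obtain ⟨x, hx, rfl⟩ := Finset.mem_image.1 hc
    exact cell_lines L k _ (fun y hy => hk y (mem_cell.1 hy).1) (hT' x hx).2.2
  have h3 : ∑ c ∈ K, (c.biUnion (thr L)).card ≤ L.card * (tdl H + 1) := by
    calc ∑ c ∈ K, (c.biUnion (thr L)).card ≤ ∑ c ∈ K, (L.filter (fun l => ∃ y ∈ c, on y l)).card := by
          refine Finset.sum_le_sum (fun c hc => Finset.card_le_card ?_)
          intro l hl
          obtain ⟨y, hy, hly⟩ := Finset.mem_biUnion.1 hl
          exact Finset.mem_filter.2 ⟨(mem_thr.1 hly).1, y, hy, (mem_thr.1 hly).2⟩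
      _ = ∑ l ∈ L, (K.filter (fun c => ∃ y ∈ c, on y l)).card := by
          exact Finset.sum_card_bipartiteAbove_eq_sum_card_bipartiteBelow (fun c l => ∃ y ∈ c, on y l)
      _ ≤ ∑ l ∈ L, (tdl H + 1) := by
          refine Finset.sum_le_sum (fun l hl => ?_)
          refine le_trans (Finset.card_le_card ?_) (cross (l := l) (S := T.filter (fun y => on y l ∧ sim H y y)) T
            (fun x hx => (Finset.mem_filter.1 hx).2))
          intro c hc
          obtain ⟨hcK, y, hy, hyl⟩ := Finset.mem_filter.1 hc
          obtain ⟨x, hx, rfl⟩ := Finset.mem_image.1 hcK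
          have hs := (mem_cell.1 hy).2
          refine Finset.mem_image.2 ⟨y, Finset.mem_filter.2 ⟨(mem_cell.1 hy).1, hyl, sim_self_left hs.symm⟩, (cell_eq hs).symm⟩
      _ = _ := by simp
  calc T'.card * k ≤ (∑ c ∈ K, c.card) * k := Nat.mul_le_mul_right _ h1
    _ = ∑ c ∈ K, c.card * k := by rw [Finset.sum_mul]
    _ ≤ ∑ c ∈ K, 2 * (c.biUnion (thr L)).card := Finset.sum_le_sum h2
    _ = 2 * ∑ c ∈ K, (c.biUnion (thr L)).card := by rw [Finset.mul_sum]
    _ ≤ _ := Nat.mul_le_mul_left 2 h3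

lemma large_cells (T : Finset Pt) (H : List Pol) (k : ℕ)
    (T' : Finset Pt) (hT' : ∀ x ∈ T', x ∈ T ∧ k < 2 * (cell H T x).card) :
    T'.card * k ≤ 2 * psi H T := by
  calc T'.card * k = ∑ x ∈ T', k := by simp
    _ ≤ ∑ x ∈ T', 2 * (cell H T x).card := Finset.sum_le_sum (fun x hx => (hT' x hx).2.le)
    _ ≤ ∑ x ∈ T, 2 * (cell H T x).card := Finset.sum_le_sum_of_subset (fun x hx => (hT' x hx).1)
    _ = _ := by rw [psi, Finset.mul_sum]
end HD

namespace HD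
open MvPolynomial Polynomial Filter Topology

open Classical in
lemma inc_count (S : Finset Pt) (L : Finset Ln) (R : Pt → Ln → Prop) (a b : ℕ)
    (h1 : ∀ x ∈ S, a ≤ (L.filter (fun l => R x l)).card) (h2 : ∀ l ∈ L, (S.filter (fun x => R x l)).card ≤ b) :
    S.card * a ≤ L.card * b := Finset.card_mul_le_card_mul R h1 h2

def QH (L : Finset Ln) (N : ℕ) : Prop :=
  ∀ g : Pol, Prime g → td g ≤ 2 → ∀ S ⊆ L, (∀ l ∈ S, inZ l g) → S.card ≤ 3 * N

lemma QH.mono {L L' : Finset Ln} {N : ℕ} (h : QH L N) (hs : L' ⊆ L) : QH L' N :=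
  fun g h1 h2 S hS h3 => h g h1 h2 S (hS.trans hs) h3

/-- `l` lies in a planar factor -/
def plf (Fs : Finset Pol) (l : Ln) : Prop := ∃ p ∈ Fs, td p ≤ 2 ∧ inZ l p

def bad (Fs : Finset Pol) (x : Pt) (l : Ln) : Prop := on x l ∧ ∃ p ∈ Fs, td p ≤ 2 ∧ ev x p = 0 ∧ ¬ inZ l p

open Classical in
lemma PL1 {f : Pol} {Fs : Finset Pol} (hF : Fac f Fs) {d : ℕ} (hd : td f ≤ d) (L : Finset Ln) (S : Finset Pt) (j : ℕ)
    (hS : ∀ x ∈ S, j ≤ (L.filter (fun l => bad Fs x l)).card) : S.card * j ≤ L.card * d := by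
  refine inc_count S L (bad Fs) j d hS (fun l hl => ?_)
  have : S.filter (fun x => bad Fs x l) ⊆ Fs.biUnion (fun p => if inZ l p then ∅ else S.filter (fun x => on x l ∧ ev x p = 0)) := by
    intro x hx
    obtain ⟨hx, h1, p, hp, -, h2, h3⟩ := Finset.mem_filter.1 hx
    refine Finset.mem_biUnion.2 ⟨p, hp, ?_⟩
    rw [if_neg h3]
    exact Finset.mem_filter.2 ⟨hx, h1, h2⟩
  refine (Finset.card_le_card this).trans (Finset.card_biUnion_le.trans (le_trans ?_ (hF.deg.trans hd)))
  refine Finset.sum_le_sum (fun p hp => ?_)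
  split_ifs with h
  · simp
  · exact card_le_of_not_inZ h _ (fun x hx => (Finset.mem_filter.1 hx).2)

open Classical in
lemma PL2 {f : Pol} {Fs : Finset Pol} (hF : Fac f Fs) {N : ℕ} (L : Finset Ln) (hQ : QH L N) (S : Finset Pt) (j : ℕ)
    (hS : ∀ x ∈ S, j ≤ ((thr L x).filter (fun l => ¬ bad Fs x l)).card)
    (hG : ∀ x ∈ S, ∃ l ∈ thr L x, ¬ bad Fs x l ∧ plf Fs l) : S.card * (j * (j - 1)) ≤ L.card * (3 * N) := by
  set gd : Pt → Finset Ln := fun x => (thr L x).filter (fun l => ¬ bad Fs x l) with hgd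
  have key : ∀ x ∈ S, ∀ l ∈ gd x, ∀ p ∈ Fs, td p ≤ 2 → ev x p = 0 → inZ l p := by
    intro x hx l hl p hp hp2 h0
    obtain ⟨h1, h2⟩ := Finset.mem_filter.1 hl
    by_contra hc
    exact h2 ⟨(mem_thr.1 h1).2, p, hp, hp2, h0, hc⟩
  have hpl : ∀ x ∈ S, ∀ l ∈ gd x, plf Fs l := by
    intro x hx l hl
    obtain ⟨l0, h1, h2, p, hp, hp2, hz⟩ := hG x hx
    exact ⟨p, hp, hp2, key x hx l hl p hp hp2 (ev_of_inZ hz (mem_thr.1 h1).2)⟩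
  have hall : ∀ l, ∃ p : Pol, plf Fs l → p ∈ Fs ∧ td p ≤ 2 ∧ inZ l p := by
    intro l
    by_cases h : plf Fs l
    · obtain ⟨p, h1⟩ := h; exact ⟨p, fun _ => h1⟩
    · exact ⟨0, fun h' => absurd h' h⟩
  choose a ha using hall
  have hdisj : (S : Set Pt).PairwiseDisjoint (fun x => (gd x).offDiag) := by
    intro x hx y hy hxy
    rw [Function.onFun, Finset.disjoint_left]
    rintro ⟨l, m⟩ h1 h2
    simp only [Finset.mem_offDiag, hgd, Finset.mem_filter, mem_thr] at h1 h2
    exact h1.2.2 (ln_eq_of_two hxy h1.1.1.2 h1.2.1.1.2 h2.1.1.2 h2.2.1.1.2)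
  have hsub : S.biUnion (fun x => (gd x).offDiag) ⊆
      (L.filter (plf Fs)).biUnion (fun l => (L.filter (fun m => inZ m (a l))).image (fun m => (l, m))) := by
    rintro ⟨l, m⟩ h
    obtain ⟨x, hx, h⟩ := Finset.mem_biUnion.1 h
    obtain ⟨h1, h2, h3⟩ := Finset.mem_offDiag.1 h
    have hl := mem_thr.1 (Finset.mem_filter.1 h1).1
    have hm := mem_thr.1 (Finset.mem_filter.1 h2).1
    have hp := hpl x hx l h1
    obtain ⟨a1, a2, a3⟩ := ha l hp
    refine Finset.mem_biUnion.2 ⟨l, Finset.mem_filter.2 ⟨hl.1, hp⟩, Finset.mem_image.2 ⟨m, Finset.mem_filter.2 ⟨hm.1, ?_⟩, rfl⟩⟩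
    exact key x hx m h2 (a l) a1 a2 (ev_of_inZ a3 hl.2)
  calc S.card * (j * (j - 1)) = ∑ x ∈ S, j * (j-1) := by simp
    _ ≤ ∑ x ∈ S, (gd x).offDiag.card := by
        refine Finset.sum_le_sum (fun x hx => ?_)
        rw [Finset.offDiag_card, ← Nat.mul_sub_one]
        have := hS x hx
        exact Nat.mul_le_mul this (Nat.sub_le_sub_right this 1)
    _ = (S.biUnion (fun x => (gd x).offDiag)).card := (Finset.card_biUnion (fun x hx y hy hxy => hdisj hx hy hxy)).symm
    _ ≤ _ := Finset.card_le_card hsub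
    _ ≤ ∑ l ∈ L.filter (plf Fs), 3 * N := by
        refine Finset.card_biUnion_le.trans (Finset.sum_le_sum (fun l hl => ?_))
        obtain ⟨hl, hp⟩ := Finset.mem_filter.1 hl
        obtain ⟨a1, a2, a3⟩ := ha l hp
        refine Finset.card_image_le.trans (hQ (a l) (hF.prime _ a1) a2 _ (Finset.filter_subset _ _) (fun m hm => (Finset.mem_filter.1 hm).2))
    _ ≤ _ := by
        simp only [Finset.sum_const, smul_eq_mul]
        exact Nat.mul_le_mul_right _ (Finset.card_filter_le _ _)

open Classical in
/-- points on lines outside `Z(f)` -/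
lemma notZ_count {f : Pol} {d : ℕ} (hd : td f ≤ d) (L : Finset Ln) (S : Finset Pt) (j : ℕ) (hL : ∀ l ∈ L, ¬ inZ l f)
    (hS : ∀ x ∈ S, ev x f = 0 ∧ j ≤ (thr L x).card) : S.card * j ≤ L.card * d := by
  refine inc_count S L on j d (fun x hx => (hS x hx).2) (fun l hl => ?_)
  refine (card_le_of_not_inZ (hL l hl) _ (fun x hx => ?_)).trans hd
  obtain ⟨h1, h2⟩ := Finset.mem_filter.1 hx
  exact ⟨h2, (hS x h1).1⟩

open Classical in
/-- greedy sampling -/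
lemma sampling (L : Finset Ln) (S : Finset Pt) (hS : ∀ x ∈ S, 2 ≤ (thr L x).card) (N d : ℕ) (hN : 1 ≤ N) (hd : d ≤ N)
    (hrich : ∀ l ∈ L, 16000 * N < (S.filter (fun x => on x l)).card) :
    ∃ S0 ⊆ L, 1000 * N * S0.card ≤ L.card * (d+1) ∧
      8 * (L.filter (fun l => (S.filter (fun x => on x l ∧ ∃ m ∈ S0, on x m)).card ≤ d)).card ≤ L.card := by
  let hits : Finset Ln → Ln → ℕ := fun S0 l => (S.filter (fun x => on x l ∧ ∃ m ∈ S0, on x m)).card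
  let Φ : Finset Ln → ℕ := fun S0 => ∑ l ∈ L, min (hits S0 l) (d+1)
  obtain ⟨S0, hS0, hmax⟩ := Finset.exists_max_image L.powerset (fun S0 => (Φ S0 : ℤ) - 1000 * N * S0.card) ⟨∅, by simp⟩
  have hS0L := Finset.mem_powerset.1 hS0
  have hΦle : Φ S0 ≤ L.card * (d+1) := by
    calc Φ S0 ≤ ∑ l ∈ L, (d+1) := Finset.sum_le_sum (fun l _ => min_le_right _ _)
      _ = _ := by simp
  refine ⟨S0, hS0L, ?_, ?_⟩
  · have := hmax ∅ (by simp)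
    simp only [Finset.card_empty] at this
    have h2 : (1000 * N * S0.card : ℤ) ≤ Φ S0 := by push_cast at this; nlinarith [Int.natCast_nonneg (Φ ∅)]
    have : 1000 * N * S0.card ≤ Φ S0 := by exact_mod_cast h2
    omega
  set low := L.filter (fun l => (S.filter (fun x => on x l ∧ ∃ m ∈ S0, on x m)).card ≤ d) with hlow
  by_contra hc
  push Not at hc
  let R : Ln → Ln → Prop := fun l m => m ≠ l ∧ ∃ x ∈ S, on x l ∧ on x m ∧ ¬ ∃ m' ∈ S0, on x m'
  -- each low line has many R-partners
  have h1 : ∀ l ∈ low, 8000 * N ≤ (L.filter (fun m => R l m)).card := by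
    intro l hl
    obtain ⟨hlL, hld⟩ := Finset.mem_filter.1 hl
    set U := S.filter (fun x => on x l ∧ ¬ ∃ m ∈ S0, on x m) with hU
    have hUc : 8000 * N ≤ U.card := by
      have e1 := hrich l hlL
      have e2 : (S.filter (fun x => on x l)).card ≤ (S.filter (fun x => on x l ∧ ∃ m ∈ S0, on x m)).card + U.card := by
        refine le_trans (Finset.card_le_card ?_) (Finset.card_union_le _ _)
        intro x hx
        obtain ⟨a, b⟩ := Finset.mem_filter.1 hx
        by_cases h : ∃ m ∈ S0, on x m
        · exact Finset.mem_union_left _ (Finset.mem_filter.2 ⟨a, b, h⟩)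
        · exact Finset.mem_union_right _ (Finset.mem_filter.2 ⟨a, b, h⟩)
      omega
    have hoth : ∀ x : Pt, ∃ m : Ln, x ∈ U → m ∈ L ∧ on x m ∧ m ≠ l := by
      intro x
      by_cases hx : x ∈ U
      · obtain ⟨hxS, hxl, -⟩ := Finset.mem_filter.1 hx
        obtain ⟨m, hm, hml⟩ := Finset.exists_mem_ne (lt_of_lt_of_le one_lt_two (hS x hxS)) l
        exact ⟨m, fun _ => ⟨(mem_thr.1 hm).1, (mem_thr.1 hm).2, hml⟩⟩
      · exact ⟨l, fun h => absurd h hx⟩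
    choose o ho using hoth
    refine hUc.trans (Finset.card_le_card_of_injOn o ?_ ?_)
    · intro x hx
      have hx : x ∈ U := hx
      obtain ⟨a1, a2, a3⟩ := ho x hx
      obtain ⟨hxS, hxl, hxu⟩ := Finset.mem_filter.1 hx
      exact Finset.mem_coe.2 (Finset.mem_filter.2 ⟨a1, a3, x, hxS, hxl, a2, hxu⟩)
    · intro x hx y hy hxy
      have hx : x ∈ U := hx
      have hy : y ∈ U := hy
      obtain ⟨a1, a2, a3⟩ := ho x hx
      obtain ⟨b1, b2, b3⟩ := ho y hy
      by_contra hne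
      exact a3 (ln_eq_of_two hne a2 (Finset.mem_filter.1 hx).2.1 (hxy ▸ b2) (Finset.mem_filter.1 hy).2.1)
  have h2 : ∀ m ∈ L, (low.filter (fun l => R l m)).card ≤ 1000 * N := by
    intro m hm
    have := hmax (insert m S0) (Finset.mem_powerset.2 (Finset.insert_subset hm hS0L))
    have hcard : (insert m S0).card ≤ S0.card + 1 := Finset.card_insert_le _ _
    have hΦ : Φ S0 + (low.filter (fun l => R l m)).card ≤ Φ (insert m S0) := by
      have e : (low.filter (fun l => R l m)).card = ∑ l ∈ L, if (l ∈ low ∧ R l m) then 1 else 0 := by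
        rw [← Finset.card_filter]
        congr 1
        ext l
        simp only [Finset.mem_filter, hlow]
        tauto
      rw [e, ← Finset.sum_add_distrib]
      refine Finset.sum_le_sum (fun l hl => ?_)
      have hmono : hits S0 l ≤ hits (insert m S0) l := by
        refine Finset.card_le_card ?_
        intro x hx
        obtain ⟨a, b, m', c1, c2⟩ := Finset.mem_filter.1 hx
        exact Finset.mem_filter.2 ⟨a, b, m', Finset.mem_insert_of_mem c1, c2⟩
      split_ifs with hif
      · obtain ⟨hlo, -, x, hxS, hxl, hxm, hxu⟩ := hif
        have a1 : hits S0 l ≤ d := (Finset.mem_filter.1 hlo).2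
        have a2 : hits S0 l < hits (insert m S0) l := by
          refine Finset.card_lt_card ?_
          rw [Finset.ssubset_iff_of_subset]
          · refine ⟨x, Finset.mem_filter.2 ⟨hxS, hxl, m, Finset.mem_insert_self _ _, hxm⟩, fun hx => ?_⟩
            exact hxu (Finset.mem_filter.1 hx).2.2
          · intro x hx
            obtain ⟨a, b, m', c1, c2⟩ := Finset.mem_filter.1 hx
            exact Finset.mem_filter.2 ⟨a, b, m', Finset.mem_insert_of_mem c1, c2⟩
        omega
      · omega
    have : (Φ (insert m S0) : ℤ) ≤ Φ S0 + 1000 * N := by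
      have : (1000 * N * (insert m S0).card : ℤ) ≤ 1000 * N * (S0.card + 1) := by
        gcongr; exact_mod_cast hcard
      linarith
    have : Φ (insert m S0) ≤ Φ S0 + 1000 * N := by exact_mod_cast this
    omega
  have h3 := Finset.card_mul_le_card_mul R h1 h2
  have : 0 < 1000 * N := by omega
  nlinarith
end HD

namespace HD
open MvPolynomial Polynomial Filter Topology

open Classical in
theorem T2 (N : ℕ) (hN : 1 ≤ N) : ∀ (n : ℕ) (L : Finset Ln), L.card = n → L.card ≤ N ^ 2 → QH L N →
    ∀ S : Finset Pt, (∀ x ∈ S, 2 ≤ (thr L x).card) → S.card ≤ 16000 * N * L.card := by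
  intro n
  induction n using Nat.strong_induction_on with
  | _ n ih =>
  intro L hLn hLN hQ S hS
  by_cases hex : ∃ l ∈ L, (S.filter (fun x => on x l)).card ≤ 16000 * N
  · obtain ⟨l, hl, hle⟩ := hex
    have hc := Finset.card_erase_of_mem hl
    have hpos : 0 < L.card := Finset.card_pos.2 ⟨l, hl⟩
    have := ih (L.erase l).card (by omega) (L.erase l) rfl (by omega) (hQ.mono (Finset.erase_subset _ _))
      (S.filter (fun x => ¬ on x l)) (by
        intro x hx
        obtain ⟨h1, h2⟩ := Finset.mem_filter.1 hx
        refine (hS x h1).trans (Finset.card_le_card (fun m hm => ?_))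
        rw [mem_thr] at hm ⊢
        exact ⟨Finset.mem_erase.2 ⟨fun h => h2 (h ▸ hm.2), hm.1⟩, hm.2⟩)
    have h2 := Finset.card_filter_add_card_filter_not (s := S) (fun x => on x l)
    obtain ⟨c, hcc⟩ : ∃ c, L.card = c + 1 := ⟨L.card - 1, by omega⟩
    rw [hc, hcc] at this
    rw [hcc]
    have e : 16000 * N * (c + 1) = 16000 * N * c + 16000 * N := by ring
    simp only [Nat.add_sub_cancel] at this
    omega
  push Not at hex
  rcases L.eq_empty_or_nonempty with rfl | hLne
  · have : S = ∅ := by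
      rw [Finset.eq_empty_iff_forall_notMem]
      intro x hx
      have := hS x hx
      simp [thr] at this
    simp [this]
  have hLpos : 0 < L.card := hLne.card_pos
  -- degree
  set e := 9 * L.card / (1000 * N) with he
  have he1 : e * (1000 * N) ≤ 9 * L.card := Nat.div_mul_le_self _ _
  have he2 : 9 * L.card < (e + 1) * (1000 * N) := by
    have := Nat.lt_div_mul_add (a := 9 * L.card) (b := 1000 * N) (by omega)
    rw [← he] at this
    nlinarith
  set d := 3 * e with hd
  have hdN : 100 * d ≤ 3 * N := by
    have : e * (1000 * N) ≤ 9 * N ^ 2 := by omega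
    have : e * 1000 ≤ 9 * N := by
      refine Nat.le_of_mul_le_mul_right (c := N) ?_ (by omega)
      nlinarith
    omega
  have hd2 : 576 * d ^ 2 ≤ L.card := by
    have a : (e * (1000 * N)) * (e * (1000 * N)) ≤ (9 * L.card) * (9 * L.card) := Nat.mul_le_mul he1 he1
    have b : e ^ 2 * 1000000 * N ^ 2 ≤ 81 * L.card * N ^ 2 := by nlinarith
    have c : e ^ 2 * 1000000 ≤ 81 * L.card := Nat.le_of_mul_le_mul_right b (by positivity)
    rw [hd]; nlinarith
  obtain ⟨S0, hS0, hc0, hlow⟩ := sampling L S hS N d hN (by omega) hex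
  obtain ⟨f, hf0, hfd, hfS0⟩ := exists_vanish_lines e S0 (by
    have h1 : 1000 * N * (S0.card * (3 * e + 1)) ≤ L.card * (3 * e + 1) * (3 * e + 1) := by
      rw [← mul_assoc]; exact Nat.mul_le_mul_right _ hc0
    have h2 : L.card * (3 * e + 1) * (3 * e + 1) ≤ 9 * L.card * ((e + 1) * (e+1)) := by nlinarith
    have h3 : 9 * L.card * ((e + 1) * (e+1)) < (e + 1) * (1000 * N) * ((e+1) * (e+1)) :=
      Nat.mul_lt_mul_of_pos_right he2 (by positivity)
    refine Nat.lt_of_mul_lt_mul_left (a := 1000 * N) ?_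
    calc _ < (e + 1) * (1000 * N) * ((e+1) * (e+1)) := by omega
      _ = _ := by ring)
  have hfd : td f ≤ d := hfd
  obtain ⟨Fs, hF⟩ := exists_fac f hf0
  set Bl := L.filter (fun l => ¬ inZ l f) with hBl
  have hB : 8 * Bl.card ≤ L.card := by
    refine le_trans (Nat.mul_le_mul_left 8 (Finset.card_le_card ?_)) hlow
    intro l hl
    obtain ⟨h1, h2⟩ := Finset.mem_filter.1 hl
    refine Finset.mem_filter.2 ⟨h1, ?_⟩
    by_contra hc
    push Not at hc
    apply h2
    refine inZ_of_card _ (fun x hx => ?_) (lt_of_le_of_lt hfd hc)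
    obtain ⟨-, h3, m, h4, h5⟩ := Finset.mem_filter.1 hx
    exact ⟨h3, ev_of_inZ (hfS0 m h4) h5⟩
  set E := L.filter (fun l => ¬ plf Fs l) with hE
  set U := L.filter (fun l => inZ l f ∧ ¬ plf Fs l) with hU
  set U1 := U.filter (fun l => 12 * d < (S.filter (fun x => dbl f l x)).card) with hU1
  set U2 := U.filter (fun l => ¬ 12 * d < (S.filter (fun x => dbl f l x)).card) with hU2
  have hU1c : 8 * U1.card ≤ L.card := by
    have := SL hF hfd U1 (fun l hl => (Finset.mem_filter.1 (Finset.mem_filter.1 hl).1).2.1)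
      (fun l hl p hp hp2 hz => (Finset.mem_filter.1 (Finset.mem_filter.1 hl).1).2.2 ⟨p, hp, hp2, hz⟩)
      (fun l hl => ⟨_, (Finset.mem_filter.1 hl).2, fun P hP => (Finset.mem_filter.1 hP).2⟩)
    omega
  have hU2c : 8 * U2.card ≤ L.card := by
    let V := S.filter (fun x => ev x f = 0 ∧ ∃ m ∈ Bl, on x m)
    have hV : V.card * 1 ≤ Bl.card * d := by
      refine notZ_count hfd Bl V 1 (fun l hl => (Finset.mem_filter.1 hl).2) (fun x hx => ?_)
      obtain ⟨h1, h2, m, h3, h4⟩ := Finset.mem_filter.1 hx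
      exact ⟨h2, Finset.card_pos.2 ⟨m, mem_thr.2 ⟨h3, h4⟩⟩⟩
    have := Finset.card_mul_le_card_mul (s := U2) (t := V) (m := 8000 * N) (n := 1)
      (fun l x => on x l ∧ ¬ dbl f l x) ?_ ?_
    · have h3 : V.card ≤ Bl.card * N := by nlinarith
      have h4 : U2.card * 8000 * N ≤ Bl.card * N := by nlinarith
      have h5 : U2.card * 8000 ≤ Bl.card := Nat.le_of_mul_le_mul_right h4 (by omega)
      omega
    · intro l hl
      obtain ⟨h1, h2⟩ := Finset.mem_filter.1 hl
      obtain ⟨h3, h4, h5⟩ := Finset.mem_filter.1 h1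
      have h6 := hex l h3
      have h7 : (S.filter (fun x => on x l)).card ≤ (S.filter (fun x => dbl f l x)).card +
          (V.filter (fun x => on x l ∧ ¬ dbl f l x)).card := by
        refine le_trans (Finset.card_le_card ?_) (Finset.card_union_le _ _)
        intro x hx
        obtain ⟨a, b⟩ := Finset.mem_filter.1 hx
        by_cases h : dbl f l x
        · exact Finset.mem_union_left _ (Finset.mem_filter.2 ⟨a, h⟩)
        · refine Finset.mem_union_right _ (Finset.mem_filter.2 ⟨Finset.mem_filter.2 ⟨a, ev_of_inZ h4 b, ?_⟩, b, h⟩)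
          obtain ⟨m, hm, hml⟩ := Finset.exists_mem_ne (lt_of_lt_of_le one_lt_two (hS x a)) l
          obtain ⟨hm1, hm2⟩ := mem_thr.1 hm
          exact ⟨m, Finset.mem_filter.2 ⟨hm1, fun hz => h ⟨b, m, hml, hm2, hz⟩⟩, hm2⟩
      change 8000 * N ≤ (V.filter (fun x => on x l ∧ ¬ dbl f l x)).card
      omega
    · intro x hx
      change (U2.filter (fun l => on x l ∧ ¬ dbl f l x)).card ≤ 1
      rw [Finset.card_le_one]
      intro a ha b hb
      obtain ⟨ha1, ha2, ha3⟩ := Finset.mem_filter.1 ha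
      obtain ⟨hb1, hb2, hb3⟩ := Finset.mem_filter.1 hb
      by_contra hne
      exact ha3 ⟨ha2, b, fun h => hne h.symm, hb2, (Finset.mem_filter.1 (Finset.mem_filter.1 hb1).1).2.1⟩
  have hEc : 8 * E.card ≤ 3 * L.card := by
    have h1 : E ⊆ Bl ∪ (U1 ∪ U2) := by
      intro l hl
      obtain ⟨h1, h2⟩ := Finset.mem_filter.1 hl
      by_cases h : inZ l f
      · refine Finset.mem_union_right _ ?_
        rw [hU1, hU2, Finset.filter_union_filter_not_eq]
        exact Finset.mem_filter.2 ⟨h1, h, h2⟩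
      · exact Finset.mem_union_left _ (Finset.mem_filter.2 ⟨h1, h⟩)
    have h2 := Finset.card_le_card h1
    have h3 := Finset.card_union_le Bl (U1 ∪ U2)
    have h4 := Finset.card_union_le U1 U2
    omega
  -- split S
  set S1 := S.filter (fun x => 2 ≤ (thr E x).card) with hS1
  set S2 := S.filter (fun x => 1 ≤ (L.filter (fun l => bad Fs x l)).card) with hS2
  set S3 := S.filter (fun x => ¬ 2 ≤ (thr E x).card ∧ ¬ 1 ≤ (L.filter (fun l => bad Fs x l)).card) with hS3
  have c1 : S1.card ≤ 16000 * N * E.card :=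
    ih E.card (by omega) E rfl (by omega) (hQ.mono (Finset.filter_subset _ _)) S1 (fun x hx => (Finset.mem_filter.1 hx).2)
  have c2 := PL1 hF hfd L S2 1 (fun x hx => (Finset.mem_filter.1 hx).2)
  have c3 := PL2 hF L hQ S3 2 (by
      intro x hx
      obtain ⟨h1, h2, h3⟩ := Finset.mem_filter.1 hx
      refine (hS x h1).trans (Finset.card_le_card (fun l hl => Finset.mem_filter.2 ⟨hl, fun hb => h3 ?_⟩))
      exact Finset.card_pos.2 ⟨l, Finset.mem_filter.2 ⟨(mem_thr.1 hl).1, hb⟩⟩) (by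
      intro x hx
      obtain ⟨h1, h2, h3⟩ := Finset.mem_filter.1 hx
      by_contra hc
      push Not at hc
      apply h2
      refine (hS x h1).trans (Finset.card_le_card (fun l hl => ?_))
      obtain ⟨a, b⟩ := mem_thr.1 hl
      refine mem_thr.2 ⟨Finset.mem_filter.2 ⟨a, hc l hl (fun hb => h3 ?_)⟩, b⟩
      exact Finset.card_pos.2 ⟨l, Finset.mem_filter.2 ⟨a, hb⟩⟩)
  have c4 : S.card ≤ S1.card + (S2.card + S3.card) := by
    have h1 : S ⊆ S1 ∪ (S2 ∪ S3) := by
      intro x hx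
      simp only [hS1, hS2, hS3, Finset.mem_union, Finset.mem_filter]
      tauto
    have h2 := Finset.card_le_card h1
    have h3 := Finset.card_union_le S1 (S2 ∪ S3)
    have h4 := Finset.card_union_le S2 S3
    omega
  have d1 : 16000 * N * E.card ≤ 2000 * N * (3 * L.card) := by nlinarith
  have d2 : L.card * d ≤ L.card * N := Nat.mul_le_mul_left _ (by omega)
  have d3 : 0 ≤ N * L.card := by positivity
  norm_num at c3
  nlinarith
end HD

namespace HD
open MvPolynomial Polynomial Filter Topology

lemma many_lines (L : Finset Ln) (k : ℕ) (hk2 : 2 ≤ k) (c : Finset Pt) (hk : ∀ x ∈ c, k ≤ (thr L x).card) (hc : k < 2 * c.card) :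
    k ^ 2 ≤ 6 * (c.biUnion (thr L)).card := by
  classical
  obtain ⟨c', hc', hcc⟩ := Finset.exists_subset_card_eq (s := c) (n := k / 2) (by omega)
  have h1 := cell_lines L k c' (fun x hx => hk x (hc' hx)) (by omega)
  have h2 : (c'.biUnion (thr L)).card ≤ (c.biUnion (thr L)).card :=
    Finset.card_le_card (Finset.biUnion_subset_biUnion_of_subset_left _ hc')
  rw [hcc] at h1
  have : k ≤ 3 * (k / 2) := by omega
  nlinarith

lemma big_cells (L : Finset Ln) (T : Finset Pt) (H : List Pol) (k : ℕ) (hk2 : 2 ≤ k) (hk : ∀ x ∈ T, k ≤ (thr L x).card)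
    (T' : Finset Pt) (hT' : ∀ x ∈ T', x ∈ T ∧ sim H x x ∧ k < 2 * (cell H T x).card) :
    T'.card ^ 2 * k ^ 2 ≤ 6 * (L.card * (tdl H + 1)) * psi H T := by
  classical
  set K := T'.image (cell H T) with hK
  have hcov : T' ⊆ K.biUnion id := by
    intro x hx
    refine Finset.mem_biUnion.2 ⟨cell H T x, Finset.mem_image_of_mem _ hx, mem_cell.2 ⟨(hT' x hx).1, (hT' x hx).2.1⟩⟩
  have h1 : T'.card ≤ ∑ c ∈ K, c.card := (Finset.card_le_card hcov).trans Finset.card_biUnion_le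
  have h2 : ∀ c ∈ K, k ^ 2 ≤ 6 * (c.biUnion (thr L)).card := by
    intro c hc
    obtain ⟨x, hx, rfl⟩ := Finset.mem_image.1 hc
    exact many_lines L k hk2 _ (fun y hy => hk y (mem_cell.1 hy).1) (hT' x hx).2.2
  have h3 : ∑ c ∈ K, (c.biUnion (thr L)).card ≤ L.card * (tdl H + 1) := by
    calc ∑ c ∈ K, (c.biUnion (thr L)).card ≤ ∑ c ∈ K, (L.filter (fun l => ∃ y ∈ c, on y l)).card := by
          refine Finset.sum_le_sum (fun c hc => Finset.card_le_card ?_)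
          intro l hl
          obtain ⟨y, hy, hly⟩ := Finset.mem_biUnion.1 hl
          exact Finset.mem_filter.2 ⟨(mem_thr.1 hly).1, y, hy, (mem_thr.1 hly).2⟩
      _ = ∑ l ∈ L, (K.filter (fun c => ∃ y ∈ c, on y l)).card := by
          exact Finset.sum_card_bipartiteAbove_eq_sum_card_bipartiteBelow (fun c l => ∃ y ∈ c, on y l)
      _ ≤ ∑ l ∈ L, (tdl H + 1) := by
          refine Finset.sum_le_sum (fun l hl => ?_)
          refine le_trans (Finset.card_le_card ?_) (cross (l := l) (S := T.filter (fun y => on y l ∧ sim H y y)) T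
            (fun x hx => (Finset.mem_filter.1 hx).2))
          intro c hc
          obtain ⟨hcK, y, hy, hyl⟩ := Finset.mem_filter.1 hc
          obtain ⟨x, hx, rfl⟩ := Finset.mem_image.1 hcK
          have hs := (mem_cell.1 hy).2
          refine Finset.mem_image.2 ⟨y, Finset.mem_filter.2 ⟨(mem_cell.1 hy).1, hyl, sim_self_left hs.symm⟩, (cell_eq hs).symm⟩
      _ = _ := by simp
  have h4 : K.card * k ^ 2 ≤ 6 * (L.card * (tdl H + 1)) := by
    calc K.card * k ^ 2 = ∑ c ∈ K, k ^ 2 := by simp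
      _ ≤ ∑ c ∈ K, 6 * (c.biUnion (thr L)).card := Finset.sum_le_sum h2
      _ = 6 * ∑ c ∈ K, (c.biUnion (thr L)).card := by rw [Finset.mul_sum]
      _ ≤ _ := Nat.mul_le_mul_left 6 h3
  have h5 : ∑ c ∈ K, c.card ^ 2 ≤ psi H T := by
    have hpd : (K : Set (Finset Pt)).PairwiseDisjoint id := by
      intro c hc c' hc' hne
      obtain ⟨x, hx, rfl⟩ := Finset.mem_image.1 hc
      obtain ⟨y, hy, rfl⟩ := Finset.mem_image.1 hc'
      rw [Function.onFun, Finset.disjoint_left]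
      intro z hz hz'
      exact hne (cell_eq ((mem_cell.1 hz).2.trans (mem_cell.1 hz').2.symm))
    calc ∑ c ∈ K, c.card ^ 2 = ∑ c ∈ K, ∑ x ∈ id c, (cell H T x).card := by
          refine Finset.sum_congr rfl (fun c hc => ?_)
          obtain ⟨x, hx, rfl⟩ := Finset.mem_image.1 hc
          rw [Finset.sum_congr rfl (fun y hy => by rw [← cell_eq (mem_cell.1 hy).2])]
          simp [sq]
      _ = ∑ x ∈ K.biUnion id, (cell H T x).card := (Finset.sum_biUnion hpd).symm
      _ ≤ _ := by
          refine Finset.sum_le_sum_of_subset ?_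
          intro z hz
          obtain ⟨c, hc, hz⟩ := Finset.mem_biUnion.1 hz
          obtain ⟨x, hx, rfl⟩ := Finset.mem_image.1 hc
          exact (mem_cell.1 hz).1
  have h6 : (∑ c ∈ K, c.card) ^ 2 ≤ K.card * ∑ c ∈ K, c.card ^ 2 := sq_sum_le_card_mul_sum_sq
  calc T'.card ^ 2 * k ^ 2 ≤ (∑ c ∈ K, c.card) ^ 2 * k ^ 2 := by gcongr
    _ ≤ (K.card * psi H T) * k ^ 2 := by gcongr; exact h6.trans (by gcongr)
    _ = K.card * k ^ 2 * psi H T := by ring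
    _ ≤ _ := by gcongr

lemma aux_k {s j B k : ℕ} (h : s * j ≤ B) (hk : k ≤ 8 * j) : s * k ^ 2 ≤ 8 * (B * k) := by
  calc s * k ^ 2 = s * k * k := by ring
    _ ≤ s * (8 * j) * k := by gcongr
    _ = 8 * (s * j * k) := by ring
    _ ≤ _ := by gcongr

lemma aux_i {i k : ℕ} (hi : 1 ≤ i) (hkk : k ^ 2 ≤ 64 * (i + 1) ^ 2) : k ^ 2 ≤ 128 * ((i + 1) * i) := by nlinarith

/-- the part on the zero set -/
lemma onZ {f : Pol} (hf0 : f ≠ 0) {d N k A : ℕ} (hd : td f ≤ d) (L : Finset Ln) (hQ : QH L N) (hk : 16 ≤ k)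
    (S : Finset Pt) (hS : ∀ x ∈ S, ev x f = 0 ∧ k ≤ (thr L x).card)
    (hL : 0 < L.card) (hdL : 147456 * d ^ 2 ≤ L.card)
    (ih : ∀ L' ⊆ L, L'.card < L.card → ∀ k', 2 ≤ k' → k' ≤ k → ∀ S' : Finset Pt, (∀ x ∈ S', k' ≤ (thr L' x).card) →
      S'.card * k' ^ 2 ≤ A * N * L'.card) :
    32 * (S.card * k ^ 2) ≤ 4000 * (L.card * d * k) + 12288 * (N * L.card) + A * N * L.card := by
  classical
  obtain ⟨Fs, hF⟩ := exists_fac f hf0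
  set L0 := L.filter (fun l => ¬ inZ l f) with hL0
  set G := L.filter (fun l => plf Fs l) with hG
  set U := L.filter (fun l => inZ l f ∧ ¬ plf Fs l) with hU
  set U1 := U.filter (fun l => 12 * d < (S.filter (fun x => dbl f l x)).card) with hU1
  set U2 := U.filter (fun l => ¬ 12 * d < (S.filter (fun x => dbl f l x)).card) with hU2
  have hsplit : ∀ x, (thr L x).card ≤ (thr L0 x).card + ((thr G x).card + ((thr U1 x).card + (thr U2 x).card)) := by
    intro x
    have h1 : thr L x ⊆ thr L0 x ∪ (thr G x ∪ (thr U1 x ∪ thr U2 x)) := by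
      intro l hl
      simp only [Finset.mem_union, mem_thr, hL0, hG, hU1, hU2, hU, Finset.mem_filter] at hl ⊢
      tauto
    have h2 := Finset.card_le_card h1
    have h3 := Finset.card_union_le (thr L0 x) (thr G x ∪ (thr U1 x ∪ thr U2 x))
    have h4 := Finset.card_union_le (thr G x) (thr U1 x ∪ thr U2 x)
    have h5 := Finset.card_union_le (thr U1 x) (thr U2 x)
    omega
  set j := (k + 7) / 8 with hj
  have hjk : k ≤ 8 * j := by omega
  have hj2 : 2 ≤ j := by omega
  set S0 := S.filter (fun x => j ≤ (thr L0 x).card)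
  set S1 := S.filter (fun x => j ≤ (L.filter (fun l => bad Fs x l)).card)
  set S2 := S.filter (fun x => j ≤ ((thr L x).filter (fun l => ¬ bad Fs x l)).card ∧ ∃ l ∈ thr L x, ¬ bad Fs x l ∧ plf Fs l)
  set S3 := S.filter (fun x => j ≤ (thr U1 x).card)
  set S4 := S.filter (fun x => j ≤ (thr U2 x).card)
  have hcov : S.card ≤ S0.card + (S1.card + (S2.card + (S3.card + S4.card))) := by
    have h1 : S ⊆ S0 ∪ (S1 ∪ (S2 ∪ (S3 ∪ S4))) := by
      intro x hx
      by_contra hc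
      simp only [Finset.mem_union, S0, S1, S2, S3, S4, Finset.mem_filter, hx, true_and, not_or] at hc
      obtain ⟨a0, a1, a2, a3, a4⟩ := hc
      have b1 := hsplit x
      have b2 := (hS x hx).2
      set GG := (thr G x).filter (fun l => ¬ bad Fs x l) with hGG
      have b3 : (thr G x).card ≤ (L.filter (fun l => bad Fs x l)).card + GG.card := by
        refine le_trans (Finset.card_le_card ?_) (Finset.card_union_le _ _)
        intro l hl
        have hl' := mem_thr.1 hl
        by_cases h : bad Fs x l
        · exact Finset.mem_union_left _ (Finset.mem_filter.2 ⟨(Finset.mem_filter.1 hl'.1).1, h⟩)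
        · exact Finset.mem_union_right _ (Finset.mem_filter.2 ⟨hl, h⟩)
      have b4 : j ≤ GG.card := by omega
      apply a2
      refine ⟨b4.trans (Finset.card_le_card ?_), ?_⟩
      · intro l hl
        obtain ⟨c1, c2⟩ := Finset.mem_filter.1 hl
        have c3 := mem_thr.1 c1
        exact Finset.mem_filter.2 ⟨mem_thr.2 ⟨(Finset.mem_filter.1 c3.1).1, c3.2⟩, c2⟩
      · obtain ⟨l, hl⟩ := Finset.card_pos.1 (show 0 < GG.card by omega)
        obtain ⟨c1, c2⟩ := Finset.mem_filter.1 hl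
        have c3 := mem_thr.1 c1
        exact ⟨l, mem_thr.2 ⟨(Finset.mem_filter.1 c3.1).1, c3.2⟩, c2, (Finset.mem_filter.1 c3.1).2⟩
    have h2 := Finset.card_le_card h1
    have h3 := Finset.card_union_le S0 (S1 ∪ (S2 ∪ (S3 ∪ S4)))
    have h4 := Finset.card_union_le S1 (S2 ∪ (S3 ∪ S4))
    have h5 := Finset.card_union_le S2 (S3 ∪ S4)
    have h6 := Finset.card_union_le S3 S4
    omega
  have e0 : S0.card * j ≤ L.card * d := by
    refine (notZ_count hd L0 S0 j (fun l hl => (Finset.mem_filter.1 hl).2) (fun x hx => ?_)).trans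
      (Nat.mul_le_mul_right _ (Finset.card_filter_le _ _))
    obtain ⟨h1, h2⟩ := Finset.mem_filter.1 hx
    exact ⟨(hS x h1).1, h2⟩
  have e1 : S1.card * j ≤ L.card * d := PL1 hF hd L S1 j (fun x hx => (Finset.mem_filter.1 hx).2)
  have e2 : S2.card * (j * (j - 1)) ≤ L.card * (3 * N) :=
    PL2 hF L hQ S2 j (fun x hx => (Finset.mem_filter.1 hx).2.1) (fun x hx => (Finset.mem_filter.1 hx).2.2)
  have hU1c : 2048 * U1.card ≤ L.card := by
    have := SL hF hd U1 (fun l hl => (Finset.mem_filter.1 (Finset.mem_filter.1 hl).1).2.1)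
      (fun l hl p hp hp2 hz => (Finset.mem_filter.1 (Finset.mem_filter.1 hl).1).2.2 ⟨p, hp, hp2, hz⟩)
      (fun l hl => ⟨_, (Finset.mem_filter.1 hl).2, fun P hP => (Finset.mem_filter.1 hP).2⟩)
    omega
  have e3 : S3.card * j ^ 2 ≤ A * N * U1.card :=
    ih U1 ((Finset.filter_subset _ _).trans (Finset.filter_subset _ _)) (by omega) j hj2 (by omega) S3
      (fun x hx => (Finset.mem_filter.1 hx).2)
  have e4 : S4.card * j ≤ L.card * (12 * d) := by
    refine (inc_count S4 U2 on j (12 * d) (fun x hx => (Finset.mem_filter.1 hx).2) (fun l hl => ?_)).trans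
      (Nat.mul_le_mul_right _ ((Finset.card_filter_le _ _).trans (Finset.card_filter_le _ _)))
    refine le_trans (Finset.card_le_card ?_) (not_lt.1 (Finset.mem_filter.1 hl).2)
    intro x hx
    obtain ⟨h1, h2⟩ := Finset.mem_filter.1 hx
    obtain ⟨h3, h4⟩ := Finset.mem_filter.1 h1
    refine Finset.mem_filter.2 ⟨h3, h2, ?_⟩
    obtain ⟨m, hm, hml⟩ := Finset.exists_mem_ne (lt_of_lt_of_le one_lt_two (hj2.trans h4)) l
    obtain ⟨hm1, hm2⟩ := mem_thr.1 hm
    exact ⟨m, hml, hm2, (Finset.mem_filter.1 (Finset.mem_filter.1 hm1).1).2.1⟩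
  -- combine
  have g0 : S0.card * k ^ 2 ≤ 8 * (L.card * d * k) := aux_k e0 hjk
  have g1 : S1.card * k ^ 2 ≤ 8 * (L.card * d * k) := aux_k e1 hjk
  have g4 : S4.card * k ^ 2 ≤ 96 * (L.card * d * k) := (aux_k e4 hjk).trans (le_of_eq (by ring))
  have hkk : k ^ 2 ≤ 64 * j ^ 2 := (Nat.pow_le_pow_left hjk 2).trans (le_of_eq (by ring))
  have g2 : S2.card * k ^ 2 ≤ 384 * (N * L.card) := by
    obtain ⟨i, hi⟩ : ∃ i, j = i + 1 := ⟨j - 1, by omega⟩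
    rw [hi] at e2 hkk
    simp only [Nat.add_sub_cancel] at e2
    have : k ^ 2 ≤ 128 * ((i + 1) * i) := aux_i (by omega) hkk
    calc S2.card * k ^ 2 ≤ S2.card * (128 * ((i + 1) * i)) := Nat.mul_le_mul_left _ this
      _ = 128 * (S2.card * ((i + 1) * i)) := by ring
      _ ≤ 128 * (L.card * (3 * N)) := Nat.mul_le_mul_left _ e2
      _ = _ := by ring
  have g3 : 32 * (S3.card * k ^ 2) ≤ A * N * L.card := by
    calc 32 * (S3.card * k ^ 2) ≤ 32 * (S3.card * (64 * j ^ 2)) := by gcongr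
      _ = 2048 * (S3.card * j ^ 2) := by ring
      _ ≤ 2048 * (A * N * U1.card) := by gcongr
      _ = A * N * (2048 * U1.card) := by ring
      _ ≤ _ := by gcongr
  have hfin := Nat.mul_le_mul_right (k ^ 2) hcov
  simp only [add_mul] at hfin
  have : 0 ≤ L.card * d * k := Nat.zero_le _
  clear_value S0 S1 S2 S3 S4
  generalize S0.card * k ^ 2 = z0 at *
  generalize S1.card * k ^ 2 = z1 at *
  generalize S2.card * k ^ 2 = z2 at *
  generalize S3.card * k ^ 2 = z3 at *
  generalize S4.card * k ^ 2 = z4 at *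
  generalize S.card * k ^ 2 = z5 at *
  generalize L.card * d * k = y1 at *
  generalize N * L.card = y2 at *
  generalize A * N * L.card = y3 at *
  omega
end HD

namespace HD
open MvPolynomial Polynomial Filter Topology

theorem star (N : ℕ) (hN : 1 ≤ N) : ∀ (n : ℕ) (L : Finset Ln), L.card = n → L.card ≤ N ^ 2 → QH L N →
    ∀ k, 2 ≤ k → k ≤ N → ∀ S : Finset Pt, (∀ x ∈ S, k ≤ (thr L x).card) → S.card * k ^ 2 ≤ 10 ^ 18 * N * L.card := by
  classical
  intro n
  induction n using Nat.strong_induction_on with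
  | _ n ih =>
  intro L hLn hLN hQ k hk2 hkN S hS
  by_cases hk0 : k < 2592000
  · have h1 := T2 N hN _ L rfl hLN hQ S (fun x hx => hk2.trans (hS x hx))
    have h2 : k ^ 2 ≤ 2592000 ^ 2 := Nat.pow_le_pow_left hk0.le 2
    have h3 : 16000 * N * L.card * 2592000 ^ 2 ≤ 10 ^ 18 * N * L.card := by
      have : 0 ≤ N * L.card := Nat.zero_le _
      nlinarith
    exact (Nat.mul_le_mul h1 h2).trans h3
  push Not at hk0
  rcases S.eq_empty_or_nonempty with rfl | ⟨x0, hx0⟩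
  · simp
  have hLpos : 0 < L.card := by
    have h1 := hS x0 hx0
    have h2 : (thr L x0).card ≤ L.card := Finset.card_filter_le _ _
    omega
  have hbU : (S.biUnion (thr L)).card ≤ L.card :=
    Finset.card_le_card (fun l hl => by
      obtain ⟨x, _, h⟩ := Finset.mem_biUnion.1 hl
      exact (mem_thr.1 h).1)
  by_cases hsm : 8100 * L.card < k ^ 2
  · have hM : 2 * S.card ≤ k := by
      by_contra hc
      have := many_lines L k hk2 S hS (by omega)
      omega
    have h1 := cell_lines L k S hS hM
    have h2 : S.card * k ≤ 2 * L.card := by omega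
    calc S.card * k ^ 2 = S.card * k * k := by ring
      _ ≤ 2 * L.card * N := Nat.mul_le_mul h2 hkN
      _ ≤ _ := by nlinarith [Nat.zero_le (N * L.card)]
  push Not at hsm
  set l : ℝ := Real.sqrt L.card with hl
  have hl2 : l ^ 2 = L.card := Real.sq_sqrt (by positivity)
  have hlpos : 0 < l := Real.sqrt_pos.2 (by exact_mod_cast hLpos)
  have hlN : l ≤ N := by
    rw [hl, Real.sqrt_le_left (by positivity)]
    exact_mod_cast hLN
  have hkR : (2592000 : ℝ) ≤ k := by exact_mod_cast hk0
  have hkpos : (0:ℝ) < k := by linarith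
  have hkl : (k:ℝ) ≤ 90 * l := by
    have : (k:ℝ)^2 ≤ 8100 * L.card := by exact_mod_cast hsm
    rw [← hl2] at this
    exact le_of_sq_le_sq (by linarith) (by positivity)
  set D : ℝ := 90 * l / k with hD
  have hD1 : 1 ≤ D := by rw [hD, le_div_iff₀ hkpos]; linarith
  have hDk : D * k = 90 * l := by rw [hD]; field_simp
  obtain ⟨H, hH0, hHd, hHψ⟩ := partition S D hD1
  set d := tdl H with hd
  set f := H.prod with hf
  have hf0 : f ≠ 0 := by
    rw [hf]; exact List.prod_ne_zero (fun h => hH0 0 h rfl)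
  have hfd : td f ≤ d := td_list_prod H
  have hdk : (d:ℝ) * k ≤ 6750 * l := by nlinarith
  have hdkN : d * k ≤ 6750 * N := by
    have : (d:ℝ) * k ≤ 6750 * N := by linarith
    exact_mod_cast this
  have hd2 : 147456 * d ^ 2 ≤ L.card := by
    have h1 : (d:ℝ) * 2592000 ≤ 6750 * l := le_trans (by gcongr) hdk
    have h2 : (d:ℝ) * 384 ≤ l := by linarith
    have h3 : ((d:ℝ) * 384)^2 ≤ l^2 := by gcongr
    rw [hl2] at h3
    have : (147456 : ℝ) * d ^ 2 ≤ L.card := by linarith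
    exact_mod_cast this
  set Pa := S.filter (fun x => sim H x x ∧ 2 * (cell H S x).card ≤ k) with hPa
  set Pb := S.filter (fun x => sim H x x ∧ k < 2 * (cell H S x).card) with hPb
  set Pc := S.filter (fun x => ev x f = 0) with hPc
  have hcov : S.card ≤ Pa.card + (Pb.card + Pc.card) := by
    have h1 : S ⊆ Pa ∪ (Pb ∪ Pc) := by
      intro x hx
      simp only [Finset.mem_union, hPa, hPb, hPc, Finset.mem_filter, hx, true_and]
      by_cases h : ev x f = 0
      · tauto
      · have := sim_self_iff.2 h
        rcases le_or_gt (2 * (cell H S x).card) k with h' | h' <;> tauto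
    have h2 := Finset.card_le_card h1
    have h3 := Finset.card_union_le Pa (Pb ∪ Pc)
    have h4 := Finset.card_union_le Pb Pc
    omega
  have ea : Pa.card * k ^ 2 ≤ 13502 * (N * L.card) := by
    have h1 := small_cells L S H k hS Pa (fun x hx => Finset.mem_filter.1 hx)
    rw [← hd] at h1
    calc Pa.card * k ^ 2 = Pa.card * k * k := by ring
      _ ≤ 2 * (L.card * (d + 1)) * k := Nat.mul_le_mul_right _ h1
      _ = 2 * L.card * (d * k + k) := by ring
      _ ≤ 2 * L.card * (6750 * N + N) := Nat.mul_le_mul_left _ (by omega)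
      _ = _ := by ring
  have eb : 4 * Pb.card ≤ S.card := by
    have h1 := big_cells L S H k hk2 hS Pb (fun x hx => Finset.mem_filter.1 hx)
    rw [← hd] at h1
    have h1' : (Pb.card : ℝ)^2 * k^2 ≤ 6 * (l^2 * (d + 1)) * psi H S := by
      rw [hl2]; exact_mod_cast h1
    have hDpos : 0 < D := by linarith
    have h2 : (Pb.card : ℝ)^2 * k^2 * D^3 ≤ 456 * l^2 * D * (S.card : ℝ)^2 := by
      calc (Pb.card : ℝ)^2 * k^2 * D^3 ≤ 6 * (l^2 * (d + 1)) * psi H S * D^3 := by gcongr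
        _ = 6 * (l^2 * (d + 1)) * (psi H S * D^3) := by ring
        _ ≤ 6 * (l^2 * (75 * D + D)) * ((S.card : ℝ)^2) := by gcongr
        _ = _ := by ring
    have h3 : (Pb.card : ℝ)^2 * (8100 * l^2) * D ≤ 456 * (S.card : ℝ)^2 * l^2 * D := by
      have : (Pb.card : ℝ)^2 * k^2 * D^3 = (Pb.card : ℝ)^2 * (D * k)^2 * D := by ring
      rw [this, hDk] at h2
      linarith
    have h4 : (Pb.card : ℝ)^2 * 8100 ≤ 456 * (S.card : ℝ)^2 := by
      have : (Pb.card : ℝ)^2 * 8100 * (l^2 * D) ≤ 456 * (S.card : ℝ)^2 * (l^2 * D) := by linarith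
      exact le_of_mul_le_mul_right this (by positivity)
    have h5 : (4 * (Pb.card : ℝ))^2 ≤ (S.card : ℝ)^2 := by nlinarith [sq_nonneg (S.card : ℝ)]
    have h6 := le_of_sq_le_sq h5 (by positivity)
    exact_mod_cast h6
  have ec := onZ (k := k) (N := N) (d := d) hf0 (A := 10 ^ 18) hfd L hQ (by omega) Pc (fun x hx => by
      obtain ⟨h1, h2⟩ := Finset.mem_filter.1 hx
      exact ⟨h2, hS x h1⟩) hLpos hd2
    (fun L' hL' hlt k' h2 hk' S' hS' => ih L'.card (by omega) L' rfl (by omega) (hQ.mono hL') k' h2 (by omega) S' hS')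
  have hLdk : L.card * d * k ≤ 6750 * (N * L.card) := by
    calc L.card * d * k = L.card * (d * k) := by ring
      _ ≤ L.card * (6750 * N) := Nat.mul_le_mul_left _ hdkN
      _ = _ := by ring
  have hfin := Nat.mul_le_mul_right (k ^ 2) hcov
  have eb' := Nat.mul_le_mul_right (k ^ 2) eb
  clear ih
  have ec' : 32 * (Pc.card * k ^ 2) ≤ 4000 * (L.card * d * k) + 12288 * (N * L.card) + 10 ^ 18 * (N * L.card) := by
    rw [← mul_assoc (10 ^ 18) N]; exact ec
  have hfin' : S.card * k ^ 2 ≤ Pa.card * k ^ 2 + (Pb.card * k ^ 2 + Pc.card * k ^ 2) := by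
    refine hfin.trans (le_of_eq (by ring))
  have eb'' : 4 * (Pb.card * k ^ 2) ≤ S.card * k ^ 2 := by rw [← mul_assoc]; exact eb'
  rw [mul_assoc (10 ^ 18) N]
  generalize Pa.card * k ^ 2 = z1 at ea hfin'
  generalize Pb.card * k ^ 2 = z2 at hfin' eb''
  generalize Pc.card * k ^ 2 = z3 at hfin' ec'
  generalize S.card * k ^ 2 = z4 at hfin' eb'' ⊢
  generalize L.card * d * k = y1 at hLdk ec'
  generalize N * L.card = y2 at *
  norm_num at ec' ⊢
  omega
end HD

namespace HD
open MvPolynomial Polynomial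

def lam (p q : ℍ) : ℝ := q.im / p.im
def kap (p q : ℍ) : ℝ := q.re - lam p q * p.re
def rr (p : ℍ) : ℝ := p.re ^ 2 + p.im ^ 2
def hln (s : ℝ) (p q : ℍ) : Ln where
  a := kap p q + lam p q * (2 * p.re - s)
  b := lam p q
  c := -lam p q * rr p - s * kap p q
  d := kap p q

lemma lam_pos (p q : ℍ) : 0 < lam p q := div_pos q.im_pos p.im_pos
lemma lam_mul (p q : ℍ) : q.im = lam p q * p.im := by
  unfold lam; field_simp [p.im_pos.ne']
lemma kap_add (p q : ℍ) : q.re = lam p q * p.re + kap p q := by unfold kap; ring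

lemma uhp_ext {p q : ℍ} (h1 : p.re = q.re) (h2 : p.im = q.im) : p = q :=
  UpperHalfPlane.ext (Complex.ext h1 h2)

lemma eq_of_rr {p q : ℍ} (h1 : p.re = q.re) (h2 : rr p = rr q) : p = q := by
  refine uhp_ext h1 ?_
  unfold rr at h2
  rw [h1] at h2
  have := p.im_pos; have := q.im_pos
  nlinarith

lemma hln_inj {s : ℝ} {p q p' q' : ℍ} (h : hln s p q = hln s p' q') : p = p' ∧ q = q' := by
  have ha := congrArg Ln.a h
  have hb := congrArg Ln.b h
  have hc := congrArg Ln.c h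
  have hd := congrArg Ln.d h
  simp only [hln] at ha hb hc hd
  have hp := lam_pos p q
  have e : p = p' := by
    rw [← hb, ← hd] at ha hc
    apply eq_of_rr
    · have : lam p q * (p.re - p'.re) = 0 := by linarith
      rcases mul_eq_zero.1 this with h | h <;> linarith
    · have : lam p q * (rr p - rr p') = 0 := by linarith
      rcases mul_eq_zero.1 this with h | h <;> linarith
  subst e
  refine ⟨rfl, uhp_ext ?_ ?_⟩
  · rw [kap_add p q, kap_add p q', hb, hd]
  · rw [lam_mul p q, lam_mul p q', hb]

def sd (p q : ℍ) : ℝ := (p.re - q.re) ^ 2 + (p.im - q.im) ^ 2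

lemma sd_eq (p q : ℍ) (h : sd p q = 0) : p = q := by
  unfold sd at h
  apply uhp_ext <;> nlinarith [sq_nonneg (p.re - q.re), sq_nonneg (p.im - q.im)]

lemma det_id (s : ℝ) (p q p' q' : ℍ) :
    ((hln s p q).a - (hln s p' q').a) * ((hln s p q).d - (hln s p' q').d) -
    ((hln s p q).b - (hln s p' q').b) * ((hln s p q).c - (hln s p' q').c) =
    sd q q' - lam p q * lam p' q' * sd p p' := by
  simp only [hln, sd, rr, lam_mul p q, lam_mul p' q', kap_add p q, kap_add p' q']
  ring

lemma dist_iff (p q p' q' : ℍ) (h : dist p p' = dist q q') :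
    sd q q' = lam p q * lam p' q' * sd p p' := by
  have h1 := UpperHalfPlane.cosh_dist p p'
  have h2 := UpperHalfPlane.cosh_dist q q'
  have e : ∀ p q : ℍ, dist (p : ℂ) q ^ 2 = sd p q := by
    intro p q
    rw [Complex.dist_eq, ← Complex.normSq_eq_norm_sq, Complex.normSq_apply]
    simp [sd]; ring
  rw [h, h2, e, e] at h1
  have := p.im_pos; have := p'.im_pos; have := q.im_pos; have := q'.im_pos
  have h3 : sd q q' / (2 * q.im * q'.im) = sd p p' / (2 * p.im * p'.im) := by linarith
  rw [div_eq_div_iff (by positivity) (by positivity)] at h3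
  unfold lam
  field_simp
  linarith

/-- same p: disjoint lines -/
lemma hln_disj {s : ℝ} {p q q' : ℍ} {x : Pt} (h : on x (hln s p q)) (h' : on x (hln s p q')) : q = q' := by
  apply sd_eq
  have h1 := det_id s p q p q'
  have e1 : ((hln s p q).a - (hln s p q').a) * x 2 = -((hln s p q).b - (hln s p q').b) := by
    have := h.1; have := h'.1; linarith
  have e2 : ((hln s p q).c - (hln s p q').c) * x 2 = -((hln s p q).d - (hln s p q').d) := by
    have := h.2; have := h'.2; linarith
  have e3 : sd p p = 0 := by simp [sd]
  rw [e3] at h1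
  have : ((hln s p q).d - (hln s p q').d) = -(((hln s p q).c - (hln s p q').c) * x 2) := by linarith
  rw [this] at h1
  have : ((hln s p q).b - (hln s p q').b) = -(((hln s p q).a - (hln s p q').a) * x 2) := by linarith
  rw [this] at h1
  linarith

def good (s : ℝ) (P : Finset ℍ) : Prop := ∀ p ∈ P, ∀ q ∈ P, ∀ p' ∈ P, ∀ q' ∈ P, p ≠ p' →
  (hln s p q).a ≠ (hln s p' q').a ∨ (hln s p q).c ≠ (hln s p' q').c

lemma hln_meet {s : ℝ} {P : Finset ℍ} (hs : good s P) {p q p' q' : ℍ} (hp : p ∈ P) (hq : q ∈ P)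
    (hp' : p' ∈ P) (hq' : q' ∈ P) (hne : p ≠ p') (hd : dist p p' = dist q q') :
    ∃ x, on x (hln s p q) ∧ on x (hln s p' q') := by
  have h1 := det_id s p q p' q'
  rw [dist_iff p q p' q' hd, sub_self] at h1
  set l := hln s p q
  set m := hln s p' q'
  rcases hs p hp q hq p' hp' q' hq' hne with h | h
  · have h0 : l.a - m.a ≠ 0 := sub_ne_zero.2 h
    refine ⟨l.pt (-(l.b - m.b) / (l.a - m.a)), on_pt _ _, ?_, ?_⟩
    · simp; field_simp; ring
    · simp; field_simp; linarith
  · have h0 : l.c - m.c ≠ 0 := sub_ne_zero.2 h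
    refine ⟨l.pt (-(l.d - m.d) / (l.c - m.c)), on_pt _ _, ?_, ?_⟩
    · simp; field_simp; linarith
    · simp; field_simp; ring

lemma exists_good (P : Finset ℍ) : ∃ s, good s P := by
  classical
  let U := (P ×ˢ P) ×ˢ (P ×ˢ P)
  let E : (ℍ × ℍ) × (ℍ × ℍ) → ℝ := fun u => ((hln 0 u.1.1 u.1.2).a - (hln 0 u.2.1 u.2.2).a) / (lam u.1.1 u.1.2 - lam u.2.1 u.2.2)
  let F : (ℍ × ℍ) × (ℍ × ℍ) → ℝ := fun u => ((hln 0 u.1.1 u.1.2).c - (hln 0 u.2.1 u.2.2).c) / (kap u.1.1 u.1.2 - kap u.2.1 u.2.2)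
  obtain ⟨s, hs⟩ := Infinite.exists_notMem_finset (U.image E ∪ U.image F)
  refine ⟨s, fun p hp q hq p' hp' q' hq' hne => ?_⟩
  by_contra! hc
  obtain ⟨ha, hc⟩ := hc
  have hmem : ((p, q), (p', q')) ∈ U := by simp [U, *]
  have hl1 : lam p q = lam p' q' := by
    by_contra hn
    apply hs
    refine Finset.mem_union_left _ (Finset.mem_image.2 ⟨_, hmem, ?_⟩)
    have : lam p q - lam p' q' ≠ 0 := sub_ne_zero.2 hn
    simp only [E, hln] at ha ⊢
    field_simp
    linarith
  have hk1 : kap p q = kap p' q' := by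
    by_contra hn
    apply hs
    refine Finset.mem_union_right _ (Finset.mem_image.2 ⟨_, hmem, ?_⟩)
    have : kap p q - kap p' q' ≠ 0 := sub_ne_zero.2 hn
    simp only [F, hln] at hc ⊢
    field_simp
    linarith
  exact hne (hln_inj (s := s) (Ln.ext ha hl1 hc hk1)).1

end HD

namespace HD
open MvPolynomial Polynomial

lemma quad3 {a b c q1 q2 q3 : ℂ} (h12 : q1 ≠ q2) (h13 : q1 ≠ q3) (h23 : q2 ≠ q3)
    (h1 : a + b * q1 + c * q1 ^ 2 = 0) (h2 : a + b * q2 + c * q2 ^ 2 = 0)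
    (h3 : a + b * q3 + c * q3 ^ 2 = 0) : a = 0 ∧ b = 0 ∧ c = 0 := by
  have e1 : b + c * (q1 + q2) = 0 := by
    apply mul_left_cancel₀ (sub_ne_zero.2 h12); linear_combination h1 - h2
  have e2 : b + c * (q1 + q3) = 0 := by
    apply mul_left_cancel₀ (sub_ne_zero.2 h13); linear_combination h1 - h3
  have e3 : c = 0 := by
    apply mul_left_cancel₀ (sub_ne_zero.2 h23); linear_combination e1 - e2
  subst e3
  have e4 : b = 0 := by linear_combination e1
  subst e4
  exact ⟨by linear_combination h1, rfl, rfl⟩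

lemma rquad {a b c : ℝ} {z w : ℂ} (hz : 0 < z.im) (hw : 0 < w.im) (hne : z ≠ w)
    (h1 : (a : ℂ) + b * z + c * z ^ 2 = 0) (h2 : (a : ℂ) + b * w + c * w ^ 2 = 0) :
    a = 0 ∧ b = 0 ∧ c = 0 := by
  have h3 : (a : ℂ) + b * (starRingEnd ℂ z) + c * (starRingEnd ℂ z) ^ 2 = 0 := by
    have := congrArg (starRingEnd ℂ) h1
    simpa using this
  have n1 : z ≠ starRingEnd ℂ z := by
    intro h; have := congrArg Complex.im h; simp at this; linarith
  have n2 : w ≠ starRingEnd ℂ z := by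
    intro h; have := congrArg Complex.im h; simp at this; linarith
  obtain ⟨e1, e2, e3⟩ := quad3 hne n1 n2 h1 h2 h3
  exact ⟨by exact_mod_cast e1, by exact_mod_cast e2, by exact_mod_cast e3⟩

lemma deg2_form (g : Pol) (hg : td g ≤ 2) : ∃ v : Fin 10 → ℝ, g = qd v := by
  have key : ∀ f : Pol, (∃ v : Fin 10 → ℝ, ∀ x, ev x f = ev x (qd v)) → ∃ v, f = qd v := by
    rintro f ⟨v, hv⟩
    exact ⟨v, MvPolynomial.funext hv⟩
  apply key
  rw [g.as_sum]
  have hs : ∀ m ∈ g.support, m 0 + m 1 + m 2 ≤ 2 := by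
    intro m hm
    have := MvPolynomial.le_totalDegree hm
    rw [Finsupp.sum_fintype _ _ (by simp), Fin.sum_univ_three] at this
    exact this.trans hg
  generalize g.support = T at hs ⊢
  induction T using Finset.induction_on with
  | empty => exact ⟨0, fun x => by simp [ev_qd]⟩
  | insert m T hm ih =>
    obtain ⟨v, hv⟩ := ih (fun m hm => hs m (Finset.mem_insert_of_mem hm))
    have h2 := hs m (Finset.mem_insert_self _ _)
    have : ∃ w : Fin 10 → ℝ, ∀ x, ev x (MvPolynomial.monomial m (g.coeff m)) = ev x (qd w) := by
      generalize g.coeff m = c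
      have hev : ∀ x : Pt, ev x (MvPolynomial.monomial m c) = c * (x 0 ^ m 0 * x 1 ^ m 1 * x 2 ^ m 2) := by
        intro x
        rw [ev, MvPolynomial.eval_monomial, Finsupp.prod_fintype _ _ (by simp), Fin.prod_univ_three]
      simp only [hev, ev_qd]
      generalize m 0 = i at h2 ⊢
      generalize m 1 = j at h2 ⊢
      generalize m 2 = k at h2 ⊢
      have hi : i ≤ 2 := by omega
      have hj : j ≤ 2 := by omega
      have hk : k ≤ 2 := by omega
      let δ : ℕ → ℕ → ℕ → ℝ := fun a b e => if i = a ∧ j = b ∧ k = e then c else 0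
      refine ⟨![δ 0 0 0, δ 1 0 0, δ 0 1 0, δ 0 0 1, δ 2 0 0, δ 0 2 0, δ 0 0 2, δ 1 1 0, δ 1 0 1, δ 0 1 1], fun x => ?_⟩
      simp only [δ]
      interval_cases i <;> interval_cases j <;> interval_cases k <;> first | omega | simp [pow_two]
    obtain ⟨w, hw⟩ := this
    refine ⟨w + v, fun x => ?_⟩
    rw [Finset.sum_insert hm, ev, map_add]
    refine (congrArg₂ (· + ·) (hw x) (hv x)).trans ?_
    simp only [ev_qd, Pi.add_apply]; ring

/-- Key complex identity. -/
lemma cplx {s : ℝ} {p q : ℍ} {v : Fin 10 → ℝ} (h : inZ (hln s p q) (qd v)) :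
    (v 0 * (s - p) ^ 2 + v 3 * (s - p) + v 6 : ℂ) +
    ((v 1 - v 2 * p) * (s - p) + v 8 - v 9 * p) * (starRingEnd ℂ q) +
    (v 4 - v 7 * p + v 5 * p ^ 2) * (starRingEnd ℂ (q : ℂ)) ^ 2 = 0 := by
  have h0 := ev_of_inZ h (on_pt (hln s p q) 0)
  have h1 := ev_of_inZ h (on_pt (hln s p q) 1)
  have h2 := ev_of_inZ h (on_pt (hln s p q) (-1))
  simp only [ev_qd, pt_two, pt_zero, pt_one, hln] at h0 h1 h2
  have hx : (p.re : ℂ) = ((p : ℂ) + starRingEnd ℂ (p : ℂ)) / 2 := by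
    rw [Complex.add_conj]; simp
  have hr : (rr p : ℂ) = (p : ℂ) * starRingEnd ℂ (p : ℂ) := by
    rw [Complex.mul_conj, Complex.normSq_apply]; simp [rr]; ring
  have hq : starRingEnd ℂ (q : ℂ) = lam p q * starRingEnd ℂ (p : ℂ) + kap p q := by
    apply Complex.ext
    · simpa using kap_add p q
    · have := lam_mul p q
      simp only [Complex.conj_im, Complex.add_im, Complex.mul_im, Complex.ofReal_re, Complex.ofReal_im]
      simp [this]
  rw [hq]
  have h0 := congrArg (Complex.ofReal) h0
  have h1 := congrArg (Complex.ofReal) h1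
  have h2 := congrArg (Complex.ofReal) h2
  push_cast at h0 h1 h2
  rw [hx, hr] at h0 h1 h2
  generalize (lam p q : ℂ) = L at *
  generalize (kap p q : ℂ) = K at *
  generalize (p : ℂ) = z at *
  generalize starRingEnd ℂ z = zb at *
  linear_combination h0 * ((s - z) ^ 2 - 1) + (h1 - h2) / 2 * (s - z) + (h1 + h2) / 2

lemma three_forms {s : ℝ} {p q1 q2 q3 : ℍ} {v : Fin 10 → ℝ} (h1 : inZ (hln s p q1) (qd v))
    (h2 : inZ (hln s p q2) (qd v)) (h3 : inZ (hln s p q3) (qd v))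
    (n12 : q1 ≠ q2) (n13 : q1 ≠ q3) (n23 : q2 ≠ q3) :
    (v 0 * (s - p) ^ 2 + v 3 * (s - p) + v 6 : ℂ) = 0 ∧
    ((v 1 - v 2 * p) * (s - p) + v 8 - v 9 * p : ℂ) = 0 ∧
    (v 4 - v 7 * p + v 5 * p ^ 2 : ℂ) = 0 := by
  have inj : ∀ a b : ℍ, a ≠ b → starRingEnd ℂ (a : ℂ) ≠ starRingEnd ℂ (b : ℂ) := by
    intro a b hab h
    exact hab (UpperHalfPlane.ext ((starRingEnd ℂ).injective h))
  exact quad3 (inj _ _ n12) (inj _ _ n13) (inj _ _ n23) (cplx h1) (cplx h2) (cplx h3)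

lemma no_quad {s : ℝ} {g : Pol} (hg : td g ≤ 2) (hg0 : g ≠ 0) {p p' q1 q2 q3 r1 r2 r3 : ℍ} (hne : p ≠ p')
    (h1 : inZ (hln s p q1) g) (h2 : inZ (hln s p q2) g) (h3 : inZ (hln s p q3) g)
    (k1 : inZ (hln s p' r1) g) (k2 : inZ (hln s p' r2) g) (k3 : inZ (hln s p' r3) g)
    (n12 : q1 ≠ q2) (n13 : q1 ≠ q3) (n23 : q2 ≠ q3)
    (m12 : r1 ≠ r2) (m13 : r1 ≠ r3) (m23 : r2 ≠ r3) : False := by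
  obtain ⟨v, rfl⟩ := deg2_form g hg
  obtain ⟨a1, a2, a3⟩ := three_forms h1 h2 h3 n12 n13 n23
  obtain ⟨b1, b2, b3⟩ := three_forms k1 k2 k3 m12 m13 m23
  have hp : 0 < (p : ℂ).im := p.im_pos
  have hp' : 0 < (p' : ℂ).im := p'.im_pos
  have hn : (p : ℂ) ≠ p' := fun h => hne (UpperHalfPlane.ext h)
  obtain ⟨c4, c7, c5⟩ := rquad (a := v 4) (b := -v 7) (c := v 5) hp hp' hn
    (by push_cast; linear_combination a3) (by push_cast; linear_combination b3)
  obtain ⟨c6, c3, c0⟩ := rquad (a := v 6 + v 3 * s + v 0 * s ^ 2) (b := - v 3 - 2 * s * v 0) (c := v 0) hp hp' hn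
    (by push_cast; linear_combination a1) (by push_cast; linear_combination b1)
  obtain ⟨c8, c9, c2⟩ := rquad (a := v 1 * s + v 8) (b := - v 1 - v 2 * s - v 9) (c := v 2) hp hp' hn
    (by push_cast; linear_combination a2) (by push_cast; linear_combination b2)
  have e := ev_of_inZ h1 (on_pt (hln s p q1) 0)
  rw [c0] at c6 c3
  have c3' : v 3 = 0 := by linarith
  rw [c3'] at c6
  have c6' : v 6 = 0 := by linarith
  have c7' : v 7 = 0 := by linarith
  rw [c2] at c9
  have c9' : v 9 = - v 1 := by linarith
  simp [ev_qd, hln, c0, c2, c4, c5, c7', (lam_pos p q1).ne'] at e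
  have c8' : v 8 = 0 := by rw [e] at c8; linarith
  apply hg0
  apply MvPolynomial.funext
  intro x
  change ev x (qd v) = _
  simp [ev_qd, c0, c2, c4, c5, c7', c3', c6', c8', c9', e]

def LL (s : ℝ) (P : Finset ℍ) : Finset Ln := (P ×ˢ P).image (fun u => hln s u.1 u.2)

lemma mem_LL {s : ℝ} {P : Finset ℍ} {l : Ln} : l ∈ LL s P ↔ ∃ p ∈ P, ∃ q ∈ P, hln s p q = l := by
  simp [LL, and_assoc]

lemma LL_card_le (s : ℝ) (P : Finset ℍ) : (LL s P).card ≤ P.card ^ 2 := by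
  refine Finset.card_image_le.trans ?_
  rw [Finset.card_product, sq]

lemma QH_LL (s : ℝ) (P : Finset ℍ) : QH (LL s P) P.card := by
  classical
  intro g hg hd S hS hSg
  let T := (P ×ˢ P).filter (fun u => hln s u.1 u.2 ∈ S)
  have hST : S.card ≤ T.card := by
    have : S ⊆ T.image (fun u => hln s u.1 u.2) := by
      intro l hl
      obtain ⟨p, hp, q, hq, rfl⟩ := mem_LL.1 (hS hl)
      exact Finset.mem_image.2 ⟨(p, q), by simp [T, hp, hq, hl], rfl⟩
    exact (Finset.card_le_card this).trans Finset.card_image_le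
  refine hST.trans ?_
  let φ : ℍ → Finset ℍ := fun p => P.filter (fun q => hln s p q ∈ S)
  have hT : T.card = ∑ p ∈ P, (φ p).card := by
    simp only [T, φ, Finset.card_filter, Finset.sum_product]
  rw [hT]
  have hφ : ∀ p, (φ p).card ≤ P.card := fun p => Finset.card_filter_le _ _
  have hφm : ∀ p q, q ∈ φ p → inZ (hln s p q) g := fun p q hq => hSg _ (Finset.mem_filter.1 hq).2
  by_cases hex : ∃ p ∈ P, 2 < (φ p).card
  · obtain ⟨p, hp, hp2⟩ := hex
    rw [← Finset.add_sum_erase _ _ hp]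
    have : ∑ x ∈ P.erase p, (φ x).card ≤ (P.erase p).card * 2 := by
      refine Finset.sum_le_card_nsmul _ _ _ (fun p' hp' => ?_)
      by_contra hc
      push Not at hc
      obtain ⟨q1, q2, q3, x1, x2, x3, n12, n13, n23⟩ := Finset.two_lt_card_iff.1 hp2
      obtain ⟨r1, r2, r3, y1, y2, y3, m12, m13, m23⟩ := Finset.two_lt_card_iff.1 hc
      exact no_quad hd hg.ne_zero (Finset.ne_of_mem_erase hp').symm (hφm _ _ x1) (hφm _ _ x2) (hφm _ _ x3)
        (hφm _ _ y1) (hφm _ _ y2) (hφm _ _ y3) n12 n13 n23 m12 m13 m23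
    have h2 := Finset.card_erase_le (s := P) (a := p)
    have h3 := hφ p
    omega
  · push Not at hex
    have := Finset.sum_le_card_nsmul P (fun p => (φ p).card) 2 hex
    simp only [smul_eq_mul] at this
    omega

lemma thr_le (s : ℝ) (P : Finset ℍ) (x : Pt) : (thr (LL s P) x).card ≤ P.card := by
  classical
  have : thr (LL s P) x ⊆ P.biUnion (fun p => (P.filter (fun q => on x (hln s p q))).image (fun q => hln s p q)) := by
    intro l hl
    obtain ⟨hl, hx⟩ := mem_thr.1 hl
    obtain ⟨p, hp, q, hq, rfl⟩ := mem_LL.1 hl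
    exact Finset.mem_biUnion.2 ⟨p, hp, Finset.mem_image.2 ⟨q, Finset.mem_filter.2 ⟨hq, hx⟩, rfl⟩⟩
  refine (Finset.card_le_card this).trans (Finset.card_biUnion_le.trans ?_)
  have := Finset.sum_le_card_nsmul P (fun p => ((P.filter (fun q => on x (hln s p q))).image (fun q => hln s p q)).card) 1
    (fun p hp => Finset.card_image_le.trans (Finset.card_le_one.2 (fun a ha b hb =>
      hln_disj (Finset.mem_filter.1 ha).2 (Finset.mem_filter.1 hb).2)))
  simpa using this

end HD

namespace HD
open MvPolynomial Polynomial

/-- pairs of distinct meeting lines -/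
def mp (L : Finset Ln) : Finset (Ln × Ln) :=
  by classical exact L.offDiag.filter (fun u => ∃ x, on x u.1 ∧ on x u.2)

lemma mem_mp {L : Finset Ln} {u : Ln × Ln} : u ∈ mp L ↔ (u.1 ∈ L ∧ u.2 ∈ L ∧ u.1 ≠ u.2) ∧ ∃ x, on x u.1 ∧ on x u.2 := by
  simp [mp, Finset.mem_offDiag]

lemma sq_le_sum (n N : ℕ) (h : n ≤ N) : n ^ 2 ≤ ∑ k ∈ Finset.range N, if k + 1 ≤ n then 2 * (k + 1) else 0 := by
  induction N generalizing n with
  | zero => simp at h; simp [h]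
  | succ N ih =>
    rw [Finset.sum_range_succ]
    rcases Nat.lt_or_ge N n with h' | h'
    · have : n = N + 1 := by omega
      subst this
      have h1 := ih N le_rfl
      have h2 : ∑ k ∈ Finset.range N, (if k + 1 ≤ N then 2 * (k + 1) else 0)
        ≤ ∑ k ∈ Finset.range N, (if k + 1 ≤ N + 1 then 2 * (k + 1) else 0) := by
        refine Finset.sum_le_sum (fun k hk => ?_)
        split_ifs <;> omega
      simp only [le_refl, if_true]
      nlinarith
    · exact (ih n h').trans (Nat.le_add_right _ _)

lemma mp_card (s : ℝ) (P : Finset ℍ) (hP : 2 ≤ P.card) :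
    ((mp (LL s P)).card : ℝ) ≤ 2 * 10 ^ 18 * (P.card : ℝ) ^ 3 * (1 + Real.log P.card) := by
  classical
  set L := LL s P with hL
  set N := P.card with hN
  have hpt : ∀ u : Ln × Ln, ∃ x, u ∈ mp L → on x u.1 ∧ on x u.2 := by
    intro u
    by_cases h : u ∈ mp L
    · obtain ⟨x, hx⟩ := (mem_mp.1 h).2
      exact ⟨x, fun _ => hx⟩
    · exact ⟨0, fun h' => absurd h' h⟩
  choose f hf using hpt
  set V := (mp L).image f with hV
  have hV2 : ∀ x ∈ V, 2 ≤ (thr L x).card := by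
    intro x hx
    obtain ⟨u, hu, rfl⟩ := Finset.mem_image.1 hx
    obtain ⟨⟨h1, h2, h3⟩, -⟩ := mem_mp.1 hu
    exact Finset.one_lt_card.2 ⟨u.1, mem_thr.2 ⟨h1, (hf u hu).1⟩, u.2, mem_thr.2 ⟨h2, (hf u hu).2⟩, h3⟩
  have h1 : (mp L).card ≤ ∑ x ∈ V, (thr L x).card ^ 2 := by
    have : mp L ⊆ V.biUnion (fun x => thr L x ×ˢ thr L x) := by
      intro u hu
      obtain ⟨⟨h1, h2, h3⟩, -⟩ := mem_mp.1 hu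
      exact Finset.mem_biUnion.2 ⟨f u, Finset.mem_image_of_mem _ hu, Finset.mem_product.2
        ⟨mem_thr.2 ⟨h1, (hf u hu).1⟩, mem_thr.2 ⟨h2, (hf u hu).2⟩⟩⟩
    refine (Finset.card_le_card this).trans (Finset.card_biUnion_le.trans (le_of_eq ?_))
    refine Finset.sum_congr rfl (fun x _ => ?_)
    rw [Finset.card_product, sq]
  have h2 : ∑ x ∈ V, (thr L x).card ^ 2 ≤ ∑ k ∈ Finset.range N, (V.filter (fun x => k + 1 ≤ (thr L x).card)).card * (2 * (k + 1)) := by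
    calc ∑ x ∈ V, (thr L x).card ^ 2
        ≤ ∑ x ∈ V, ∑ k ∈ Finset.range N, (if k + 1 ≤ (thr L x).card then 2 * (k + 1) else 0) :=
          Finset.sum_le_sum (fun x _ => sq_le_sum _ _ (thr_le s P x))
      _ = _ := by
          rw [Finset.sum_comm]
          refine Finset.sum_congr rfl (fun k _ => ?_)
          rw [← Finset.sum_filter, Finset.sum_const, smul_eq_mul]
  have hst : ∀ k, 2 ≤ k → k ≤ N → ∀ S : Finset Pt, (∀ x ∈ S, k ≤ (thr L x).card) → S.card * k ^ 2 ≤ 10 ^ 18 * N ^ 3 := by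
    intro k hk hkN S hS
    refine (star N (by omega) _ L rfl (LL_card_le s P) (QH_LL s P) k hk hkN S hS).trans ?_
    calc 10 ^ 18 * N * L.card ≤ 10 ^ 18 * N * N ^ 2 := Nat.mul_le_mul_left _ (LL_card_le s P)
      _ = _ := by ring
  have h3 : ∀ k ∈ Finset.range N, (((V.filter (fun x => k + 1 ≤ (thr L x).card)).card * (2 * (k + 1)) : ℕ) : ℝ)
      ≤ 2 * 10 ^ 18 * (N : ℝ) ^ 3 * ((k : ℝ) + 1)⁻¹ := by
    intro k hk
    have hk' := Finset.mem_range.1 hk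
    have key : (V.filter (fun x => k + 1 ≤ (thr L x).card)).card * (k + 1) ^ 2 ≤ 10 ^ 18 * N ^ 3 := by
      rcases Nat.eq_zero_or_pos k with rfl | hk0
      · have h5 := hst 2 le_rfl hP V hV2
        have h6 := Finset.card_filter_le V (fun x => 0 + 1 ≤ (thr L x).card)
        simp only [zero_add, one_pow, mul_one] at h6 ⊢
        omega
      · exact hst (k + 1) (by omega) (by omega) _ (fun x hx => (Finset.mem_filter.1 hx).2)
    have key' : ((V.filter (fun x => k + 1 ≤ (thr L x).card)).card : ℝ) * ((k : ℝ) + 1) ^ 2 ≤ 10 ^ 18 * (N : ℝ) ^ 3 := by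
      exact_mod_cast key
    have hpos : (0 : ℝ) < (k : ℝ) + 1 := by positivity
    rw [← div_eq_mul_inv, le_div_iff₀ hpos]
    push_cast
    nlinarith
  have h4 : ((mp L).card : ℝ) ≤ ∑ k ∈ Finset.range N, 2 * 10 ^ 18 * (N : ℝ) ^ 3 * ((k : ℝ) + 1)⁻¹ := by
    have : ((mp L).card : ℝ) ≤ ((∑ k ∈ Finset.range N, (V.filter (fun x => k + 1 ≤ (thr L x).card)).card * (2 * (k + 1)) : ℕ) : ℝ) := by
      exact_mod_cast h1.trans h2
    refine this.trans ?_
    rw [Nat.cast_sum]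
    exact Finset.sum_le_sum h3
  rw [← Finset.mul_sum] at h4
  refine h4.trans ?_
  have h5 := harmonic_le_one_add_log N
  have h6 : ((harmonic N : ℚ) : ℝ) = ∑ k ∈ Finset.range N, ((k : ℝ) + 1)⁻¹ := by
    simp [harmonic]
  rw [h6] at h5
  exact mul_le_mul_of_nonneg_left h5 (by positivity)

lemma energy (P : Finset ℍ) (hP : 2 ≤ P.card) :
    (((P.offDiag ×ˢ P.offDiag).filter (fun u => dist u.1.1 u.1.2 = dist u.2.1 u.2.2)).card : ℝ)
      ≤ 2 * 10 ^ 18 * (P.card : ℝ) ^ 3 * (1 + Real.log P.card) := by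
  classical
  obtain ⟨s, hs⟩ := exists_good P
  refine le_trans ?_ (mp_card s P hP)
  norm_cast
  refine Finset.card_le_card_of_injOn (fun u => (hln s u.1.1 u.2.1, hln s u.1.2 u.2.2)) ?_ ?_
  · intro u hu
    obtain ⟨hu, hd⟩ := Finset.mem_filter.1 (Finset.mem_coe.1 hu)
    obtain ⟨h1, h2⟩ := Finset.mem_product.1 hu
    obtain ⟨a1, a2, a3⟩ := Finset.mem_offDiag.1 h1
    obtain ⟨b1, b2, b3⟩ := Finset.mem_offDiag.1 h2
    exact Finset.mem_coe.2 (mem_mp.2 ⟨⟨mem_LL.2 ⟨_, a1, _, b1, rfl⟩, mem_LL.2 ⟨_, a2, _, b2, rfl⟩, fun h => a3 (hln_inj h).1⟩,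
      hln_meet hs a1 b1 a2 b2 a3 hd⟩)
  · rintro ⟨⟨p, p'⟩, q, q'⟩ - ⟨⟨r, r'⟩, t, t'⟩ - h
    simp only [Prod.mk.injEq] at h ⊢
    obtain ⟨h1, h2⟩ := h
    obtain ⟨rfl, rfl⟩ := hln_inj h1
    obtain ⟨rfl, rfl⟩ := hln_inj h2
    simp

lemma final (P : Finset ℍ) (hP : 2 ≤ P.card) :
    (1 / (24 * 10 ^ 18)) * (P.card : ℝ) / Real.log P.card ≤ ({t : ℝ | ∃ p ∈ P, ∃ q ∈ P, p ≠ q ∧ dist p q = t}.ncard : ℝ) := by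
  classical
  have hset : {t : ℝ | ∃ p ∈ P, ∃ q ∈ P, p ≠ q ∧ dist p q = t} = ((P.offDiag.image (fun u => dist u.1 u.2) : Finset ℝ) : Set ℝ) := by
    ext t
    simp only [Set.mem_ofPred_eq, Finset.coe_image, Set.mem_image, Finset.mem_coe, Finset.mem_offDiag, Prod.exists]
    constructor
    · rintro ⟨p, hp, q, hq, hne, h⟩
      exact ⟨p, q, ⟨hp, hq, hne⟩, h⟩
    · rintro ⟨p, q, ⟨hp, hq, hne⟩, h⟩
      exact ⟨p, hp, q, hq, hne, h⟩
  rw [hset, Set.ncard_coe_finset]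
  set D := P.offDiag.image (fun u => dist u.1 u.2) with hD
  have hE := energy P hP
  set W := P.offDiag with hW
  have h1 : W.card = ∑ t ∈ D, (W.filter (fun u => dist u.1 u.2 = t)).card :=
    Finset.card_eq_sum_card_fiberwise (fun u hu => Finset.mem_coe.2 (Finset.mem_image_of_mem _ hu))
  have h2 : ((W ×ˢ W).filter (fun u => dist u.1.1 u.1.2 = dist u.2.1 u.2.2)).card =
      ∑ t ∈ D, (W.filter (fun u => dist u.1 u.2 = t)).card ^ 2 := by
    rw [Finset.card_eq_sum_card_fiberwise (f := fun u => dist u.1.1 u.1.2) (t := D)]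
    · refine Finset.sum_congr rfl (fun t _ => ?_)
      rw [sq, ← Finset.card_product]
      congr 1
      ext u
      simp only [Finset.mem_filter, Finset.mem_product]
      constructor
      · rintro ⟨⟨⟨a, b⟩, c⟩, d⟩
        exact ⟨⟨a, d⟩, b, c ▸ d⟩
      · rintro ⟨⟨a, d⟩, b, e⟩
        exact ⟨⟨⟨a, b⟩, d.trans e.symm⟩, d⟩
    · intro u hu
      obtain ⟨hu, -⟩ := Finset.mem_filter.1 (Finset.mem_coe.1 hu)
      exact Finset.mem_coe.2 (Finset.mem_image_of_mem (fun u : ℍ × ℍ => dist u.1 u.2) (Finset.mem_product.1 hu).1)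
  have h3 : (W.card : ℝ) ^ 2 ≤ D.card * ∑ t ∈ D, ((W.filter (fun u => dist u.1 u.2 = t)).card : ℝ) ^ 2 := by
    have := sq_sum_le_card_mul_sum_sq (s := D) (f := fun t => ((W.filter (fun u => dist u.1 u.2 = t)).card : ℝ))
    rw [h1]; push_cast; exact this
  rw [h2] at hE
  push_cast at hE
  have hc : (W.card : ℝ) = (P.card : ℝ) * (P.card : ℝ) - P.card := by
    rw [hW, Finset.offDiag_card, Nat.cast_sub (Nat.le_mul_self _)]; push_cast; rfl
  have hN : (2 : ℝ) ≤ P.card := by exact_mod_cast hP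
  set N : ℝ := (P.card : ℝ) with hNd
  have hlog : 1 / 2 ≤ Real.log N := by
    have h5 := Real.log_two_gt_d9
    have h6 := Real.log_le_log (by norm_num) hN
    linarith
  have hD0 : (0 : ℝ) ≤ D.card := by positivity
  have h4 : (W.card : ℝ) ^ 2 ≤ D.card * (2 * 10 ^ 18 * N ^ 3 * (3 * Real.log N)) := by
    refine h3.trans (mul_le_mul_of_nonneg_left (hE.trans ?_) hD0)
    exact mul_le_mul_of_nonneg_left (by linarith) (by positivity)
  have h5 : (N ^ 2 / 2) ^ 2 ≤ (W.card : ℝ) ^ 2 := by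
    rw [hc]
    exact pow_le_pow_left₀ (by positivity) (by nlinarith) 2
  rw [div_le_iff₀ (by linarith)]
  have h6 : N ^ 3 * N ≤ N ^ 3 * (24 * 10 ^ 18 * (D.card * Real.log N)) := by nlinarith
  have h7 := le_of_mul_le_mul_left h6 (by positivity)
  linarith

end HD

/-- There is an absolute constant `c > 0` such that every finite set of `N ≥ 2` points
in the hyperbolic plane determines at least `c · N / log N` distinct distances. -/
theorem distinct_distances_hyperbolic_plane :
    ∃ c : ℝ, 0 < c ∧ ∀ P : Finset ℍ, 2 ≤ P.card →
      c * (P.card : ℝ) / Real.log P.card ≤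
        ({t : ℝ | ∃ p ∈ P, ∃ q ∈ P, p ≠ q ∧ dist p q = t}.ncard : ℝ) := by
  exact ⟨1 / (24 * 10 ^ 18), by positivity, HD.final⟩

end
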